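/- arXiv:math/0608422 — 6 statements merged into one kernel-verified Lean document; each statement's English description precedes it below -/
import Mathlib

section
/- For every n ≥ 1 and every permutation τ of {1,…,n}, there exists a family of integers (α_σ), indexed by the noncrossing permutations σ of {1,…,n}, such that for every permutation ρ of {1,…,n}: 2^{c(ρ⁻¹τ)} = Σ_σ α_σ · 2^{c(ρ⁻¹σ)}, the sum over all noncrossing σ. -/
/-!
To a perfect matching `M` of `{1,…,2n}`, attach the tensor `f ↦ ∏ eps (f a) (f b)`, the product
running over its chords `a < b`, where `f` labels the points by two values and `eps` is the
symplectic form on a two-dimensional space. The Plücker relation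
`eps a c * eps b d = eps a b * eps c d + eps a d * eps b c` resolves a crossing into its two
smoothings, so every tensor is an integral combination of tensors of planar matchings
(`tensor_mem_of_planar`); a strictly concave increasing weight on chord lengths decreases under
both smoothings, which gives termination. The intermediate matchings need not be odd-even, but a
planar matching always is, since the points under a chord are matched among themselves
(`IsMatching.exists_perm`).

For the odd-even matching of `σ`, evaluate the tensor at the labelling with values `z (ρ i)` at the
odd points and `!z j` at the even points: up to a sign depending only on `σ` and one depending only
on `z`, the result is the indicator of `z ∘ ρ = z ∘ σ` (`tensor_permMatching`). The number of `z`
satisfying this is `2 ^ c(ρ⁻¹σ)`, a `z` amounting to a free choice of a value on each cycle of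
`ρ⁻¹σ` (`sum_indicator`). Summing over all `z` turns the relation between tensors into the claim.
-/

/-- The partition of α into the orbits (cycles) of the permutation π. -/
def cycleSetoid {α : Type} (π : Equiv.Perm α) : Setoid α :=
  ⟨π.SameCycle,
   ⟨fun x => Equiv.Perm.SameCycle.refl π x, Equiv.Perm.SameCycle.symm,
    Equiv.Perm.SameCycle.trans⟩⟩

/-- c(π): the number of cycles of π, counting fixed points as cycles (the number of
orbits of π). -/
noncomputable def cycleCount {α : Type} (π : Equiv.Perm α) : ℕ :=
  Nat.card (Quotient (cycleSetoid π))

/-- Two disjoint pairs of natural numbers cross if, listing each pair in increasing order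
and taking the pair with the smaller minimum first, the four values interleave
(a < b < c < d with {a,c} one pair and {b,d} the other). -/
def CrossPairs (p q : ℕ × ℕ) : Prop :=
  (min p.1 p.2 < min q.1 q.2 ∧ min q.1 q.2 < max p.1 p.2 ∧ max p.1 p.2 < max q.1 q.2) ∨
  (min q.1 q.2 < min p.1 p.2 ∧ min p.1 p.2 < max q.1 q.2 ∧ max q.1 q.2 < max p.1 p.2)

/-- The k-th chord of the odd–even pairing of {1,…,2n} encoded by a permutation π of
Fin n: the chord {2k−1, 2π(k)} in 1-based labels (index i : Fin n has label i+1). -/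
def chord {n : ℕ} (π : Equiv.Perm (Fin n)) (k : Fin n) : ℕ × ℕ :=
  (2 * (k : ℕ) + 1, 2 * ((π k : Fin n) : ℕ) + 2)

/-- A permutation is noncrossing (planar) if no two of its chords cross. -/
def IsNoncrossingPerm {n : ℕ} (π : Equiv.Perm (Fin n)) : Prop :=
  ∀ i j : Fin n, i ≠ j → ¬ CrossPairs (chord π i) (chord π j)

/-! ### Antisymmetric contractions and uncrossing -/

/-- The standard symplectic form on a two-dimensional space, in coordinates: `eps false true = 1`,
`eps true false = -1`, and `0` on the diagonal. -/
def eps (x y : Bool) : ℤ :=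
  if x = y then 0 else if x then -1 else 1

lemma eps_swap (x y : Bool) : eps x y = -eps y x := by
  cases x <;> cases y <;> simp [eps]

/-- The Plücker relation, which resolves a crossing into its two planar smoothings. -/
lemma eps_plucker (a b c d : Bool) :
    eps a c * eps b d = eps a b * eps c d + eps a d * eps b c := by
  cases a <;> cases b <;> cases c <;> cases d <;> simp [eps]

/-- The tensor attached to a multiset of chords: the product of `eps` over the chords, as a
function of a two-valued labelling of the points. -/
def tensor (M : Multiset (ℕ × ℕ)) (f : ℕ → Bool) : ℤ :=
  (M.map fun p => eps (f p.1) (f p.2)).prod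

/-- `M` is a perfect matching of `{1,…,2n}` (not necessarily odd-even), every chord being listed
with its smaller endpoint first. -/
structure IsMatching (n : ℕ) (M : Multiset (ℕ × ℕ)) : Prop where
  lt : ∀ p ∈ M, p.1 < p.2
  ends : M.map Prod.fst + M.map Prod.snd = (Finset.Icc 1 (2 * n)).val

/-- The termination measure for uncrossing: a chord of length `l` has weight `l * (4n - l)`,
which is increasing and strictly concave in `l` for `l < 2n`. -/
def weight (n : ℕ) (p : ℕ × ℕ) : ℕ :=
  (p.2 - p.1) * (4 * n - (p.2 - p.1))

/-- No two chords of `M` cross. -/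
def Planar (M : Multiset (ℕ × ℕ)) : Prop :=
  ∀ p ∈ M, ∀ q ∈ M, ¬ (p.1 < q.1 ∧ q.1 < p.2 ∧ p.2 < q.2)

lemma IsMatching.mem_Icc {n : ℕ} {M : Multiset (ℕ × ℕ)} (h : IsMatching n M) {p : ℕ × ℕ}
    (hp : p ∈ M) : 1 ≤ p.1 ∧ p.2 ≤ 2 * n := by
  have h1 : p.1 ∈ (Finset.Icc 1 (2 * n)).val := by
    rw [← h.ends]; exact Multiset.mem_add.2 (Or.inl (Multiset.mem_map_of_mem _ hp))
  have h2 : p.2 ∈ (Finset.Icc 1 (2 * n)).val := by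
    rw [← h.ends]; exact Multiset.mem_add.2 (Or.inr (Multiset.mem_map_of_mem _ hp))
  simp only [Finset.mem_val, Finset.mem_Icc] at h1 h2
  exact ⟨h1.1, h2.2⟩

lemma IsMatching.nodup_ends {n : ℕ} {M : Multiset (ℕ × ℕ)} (h : IsMatching n M) :
    (M.map Prod.fst + M.map Prod.snd).Nodup := by
  rw [h.ends]; exact Finset.nodup _

lemma IsMatching.nodup {n : ℕ} {M : Multiset (ℕ × ℕ)} (h : IsMatching n M) : M.Nodup :=
  Multiset.Nodup.of_map _ (Multiset.nodup_add.1 h.nodup_ends).1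

/-- Two chords of a matching which share an endpoint are equal. -/
lemma IsMatching.eq_of_share {n : ℕ} {M : Multiset (ℕ × ℕ)} (h : IsMatching n M) {p q : ℕ × ℕ}
    (hp : p ∈ M) (hq : q ∈ M)
    (hs : p.1 = q.1 ∨ p.2 = q.2 ∨ p.1 = q.2 ∨ p.2 = q.1) : p = q := by
  obtain ⟨h1, h2, h3⟩ := Multiset.nodup_add.1 h.nodup_ends
  rw [Multiset.disjoint_left] at h3
  rcases hs with hs | hs | hs | hs
  · exact Multiset.inj_on_of_nodup_map h1 p hp q hq hs
  · exact Multiset.inj_on_of_nodup_map h2 p hp q hq hs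
  · exact (h3 (Multiset.mem_map_of_mem _ hp) (hs ▸ Multiset.mem_map_of_mem _ hq)).elim
  · exact (h3 (Multiset.mem_map_of_mem _ hq) (hs ▸ Multiset.mem_map_of_mem _ hp)).elim

lemma IsMatching.card {n : ℕ} {M : Multiset (ℕ × ℕ)} (h : IsMatching n M) :
    Multiset.card M = n := by
  have := congrArg Multiset.card h.ends
  simp at this
  omega

/-- Uncrossing: if every planar matching has its tensor in the subgroup `S`, then so does every
matching. -/
lemma tensor_mem_of_planar {n : ℕ} (S : Submodule ℤ ((ℕ → Bool) → ℤ))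
    (hS : ∀ M, IsMatching n M → Planar M → tensor M ∈ S) :
    ∀ (w : ℕ) (M : Multiset (ℕ × ℕ)), IsMatching n M → (M.map (weight n)).sum = w →
      tensor M ∈ S := by
  intro w
  induction w using Nat.strong_induction_on with
  | _ w ih =>
    intro M hM hw
    by_cases hP : Planar M
    · exact hS M hM hP
    simp only [Planar, not_forall, not_not] at hP
    obtain ⟨⟨a, c⟩, hp, ⟨b, d⟩, hq, hab, hbc, hcd⟩ := hP
    simp only at hab hbc hcd
    obtain ⟨M₁, rfl⟩ := Multiset.exists_cons_of_mem hp
    have hq' : (b, d) ∈ M₁ := by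
      rcases Multiset.mem_cons.1 hq with h | h
      · simp only [Prod.mk.injEq] at h; omega
      · exact h
    obtain ⟨M₂, rfl⟩ := Multiset.exists_cons_of_mem hq'
    have ha := (hM.mem_Icc hp).1
    have hd := (hM.mem_Icc hq).2
    simp only at ha hd
    have hE := hM.ends
    have hlt := hM.lt
    simp only [Multiset.map_cons, Multiset.sum_cons] at hw hE
    -- Write the four points through their gaps `x + 1`, `y + 1`, `z + 1`; for the nested
    -- smoothing, strict concavity makes the weight drop by `2 * (x + 1) * (z + 1)`.
    obtain ⟨x, rfl⟩ := Nat.exists_eq_add_of_lt hab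
    obtain ⟨y, rfl⟩ := Nat.exists_eq_add_of_lt hbc
    obtain ⟨z, rfl⟩ := Nat.exists_eq_add_of_lt hcd
    obtain ⟨t, ht⟩ : ∃ t, 4 * n = (x + 1) + (y + 1) + (z + 1) + (x + y + z + t) :=
      ⟨4 * n - (x + 1) - (y + 1) - (z + 1) - (x + y + z), by omega⟩
    have e1 : weight n (a, a + x + 1 + y + 1) =
        (x + y + 2) * (x + y + 2 * z + t + 1) := by
      unfold weight; congr 1 <;> simp only <;> omega
    have e2 : weight n (a + x + 1, a + x + 1 + y + 1 + z + 1) =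
        (y + z + 2) * (2 * x + y + z + t + 1) := by
      unfold weight; congr 1 <;> simp only <;> omega
    have e3 : weight n (a, a + x + 1) = (x + 1) * (x + 2 * y + 2 * z + t + 2) := by
      unfold weight; congr 1 <;> simp only <;> omega
    have e4 : weight n (a + x + 1 + y + 1, a + x + 1 + y + 1 + z + 1) =
        (z + 1) * (2 * x + 2 * y + z + t + 2) := by
      unfold weight; congr 1 <;> simp only <;> omega
    have e5 : weight n (a, a + x + 1 + y + 1 + z + 1) =
        (x + y + z + 3) * (x + y + z + t) := by
      unfold weight; congr 1 <;> simp only <;> omega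
    have e6 : weight n (a + x + 1, a + x + 1 + y + 1) =
        (y + 1) * (2 * x + y + 2 * z + t + 2) := by
      unfold weight; congr 1 <;> simp only <;> omega
    set b := a + x + 1
    set c := b + y + 1
    set d := c + z + 1
    have m1 : IsMatching n ((a, b) ::ₘ (c, d) ::ₘ M₂) := by
      refine ⟨?_, ?_⟩
      · intro p hp
        simp only [Multiset.mem_cons] at hp hlt
        rcases hp with rfl | rfl | hp
        · exact hab
        · exact hcd
        · exact hlt p (Or.inr (Or.inr hp))
      · rw [← hE]
        simp only [Multiset.map_cons]
        simp only [← Multiset.singleton_add]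
        abel
    have m2 : IsMatching n ((a, d) ::ₘ (b, c) ::ₘ M₂) := by
      refine ⟨?_, ?_⟩
      · intro p hp
        simp only [Multiset.mem_cons] at hp hlt
        rcases hp with rfl | rfl | hp
        · simp only; omega
        · exact hbc
        · exact hlt p (Or.inr (Or.inr hp))
      · rw [← hE]
        simp only [Multiset.map_cons]
        simp only [← Multiset.singleton_add]
        abel
    have i1 := ih _ (by
      rw [← hw, Multiset.map_cons, Multiset.map_cons, Multiset.sum_cons, Multiset.sum_cons,
        e1, e2, e3, e4]
      nlinarith) _ m1 rfl
    have i2 := ih _ (by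
      rw [← hw, Multiset.map_cons, Multiset.map_cons, Multiset.sum_cons, Multiset.sum_cons,
        e1, e2, e5, e6]
      nlinarith) _ m2 rfl
    convert S.add_mem i1 i2 using 1
    funext f
    simp only [tensor, Multiset.map_cons, Multiset.prod_cons, Pi.add_apply]
    linear_combination
      (M₂.map fun p => eps (f p.1) (f p.2)).prod * eps_plucker (f a) (f b) (f c) (f d)

/-! ### Planar matchings are odd-even -/

/-- The points strictly below a chord of a planar matching are matched among themselves, so there
is an even number of them. -/
lemma IsMatching.odd_length {n : ℕ} {M : Multiset (ℕ × ℕ)} (h : IsMatching n M) (hP : Planar M)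
    {p : ℕ × ℕ} (hp : p ∈ M) : (p.2 - p.1) % 2 = 1 := by
  have hlt := h.lt p hp
  have hI := h.mem_Icc hp
  have key := congrArg (fun s => Multiset.card (s.filter fun x => p.1 < x ∧ x < p.2)) h.ends
  simp only [Multiset.filter_add, Multiset.filter_map, Multiset.card_add, Multiset.card_map,
    Function.comp_def] at key
  have same : M.filter (fun q => p.1 < q.1 ∧ q.1 < p.2) =
      M.filter (fun q => p.1 < q.2 ∧ q.2 < p.2) := by
    refine Multiset.filter_congr fun q hq => ?_
    have hq1 := h.lt q hq
    have c1 := hP p hp q hq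
    have c2 := hP q hq p hp
    have s := h.eq_of_share hp hq
    by_cases e : p = q
    · subst e; omega
    · have : ¬ (p.1 = q.1 ∨ p.2 = q.2 ∨ p.1 = q.2 ∨ p.2 = q.1) := fun hs => e (s hs)
      omega
  have cnt : Multiset.card ((Finset.Icc 1 (2 * n)).val.filter fun x => p.1 < x ∧ x < p.2) =
      p.2 - p.1 - 1 := by
    rw [← Nat.card_Ioo, ← Finset.filter_val]
    change Finset.card _ = _
    congr 1
    ext x
    simp only [Finset.mem_filter, Finset.mem_Icc, Finset.mem_Ioo]
    omega
  rw [cnt, same] at key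
  omega

/-- The chord of `i` in the odd-even matching of `σ`, smaller endpoint first. -/
def sortedChord {n : ℕ} (σ : Equiv.Perm (Fin n)) (i : Fin n) : ℕ × ℕ :=
  (min (chord σ i).1 (chord σ i).2, max (chord σ i).1 (chord σ i).2)

/-- The odd-even matching of `{1,…,2n}` encoded by `σ`. -/
def permMatching {n : ℕ} (σ : Equiv.Perm (Fin n)) : Multiset (ℕ × ℕ) :=
  (Finset.univ : Finset (Fin n)).val.map (sortedChord σ)

lemma sortedChord_injective {n : ℕ} (σ : Equiv.Perm (Fin n)) :
    Function.Injective (sortedChord σ) := by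
  intro i j h
  simp only [sortedChord, chord, Prod.mk.injEq] at h
  ext
  omega

lemma isMatching_permMatching {n : ℕ} (σ : Equiv.Perm (Fin n)) :
    IsMatching n (permMatching σ) := by
  refine ⟨?_, ?_⟩
  · intro p hp
    obtain ⟨i, -, rfl⟩ := Multiset.mem_map.1 hp
    simp only [sortedChord, chord]
    omega
  · have nd : ∀ g : Fin n → ℕ, ∀ x, Multiset.count x
        ((Finset.univ : Finset (Fin n)).val.map g) = ∑ i, if x = g i then 1 else 0 := by
      intro g x
      rw [Multiset.count_map, ← Finset.filter_val]
      change Finset.card _ = _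
      rw [Finset.card_filter]
    have swap : (permMatching σ).map Prod.fst + (permMatching σ).map Prod.snd =
        (Finset.univ : Finset (Fin n)).val.map (fun i : Fin n => 2 * (i : ℕ) + 1) +
          (Finset.univ : Finset (Fin n)).val.map (fun i : Fin n => 2 * (i : ℕ) + 2) := by
      ext x
      simp only [permMatching, Multiset.map_map, Multiset.count_add, nd]
      rw [← Equiv.sum_comp σ (fun i => if x = 2 * (i : ℕ) + 2 then 1 else 0),
        ← Finset.sum_add_distrib, ← Finset.sum_add_distrib]
      refine Finset.sum_congr rfl fun i _ => ?_
      change ((if x = min (2 * (i : ℕ) + 1) (2 * (σ i : ℕ) + 2) then 1 else 0) +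
        if x = max (2 * (i : ℕ) + 1) (2 * (σ i : ℕ) + 2) then 1 else 0) = _
      rcases le_total (2 * (i : ℕ) + 1) (2 * (σ i : ℕ) + 2) with h | h
      · rw [min_eq_left h, max_eq_right h]
      · rw [min_eq_right h, max_eq_left h, add_comm]
    rw [swap]
    refine (Multiset.Nodup.ext ?_ (Finset.nodup _)).2 ?_
    · refine Multiset.nodup_add.2 ⟨Multiset.Nodup.map ?_ (Finset.nodup _),
        Multiset.Nodup.map ?_ (Finset.nodup _), ?_⟩
      · intro i j h; ext; simp only at h; omega
      · intro i j h; ext; simp only at h; omega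
      · rw [Multiset.disjoint_left]
        intro x hx hy
        obtain ⟨i, -, rfl⟩ := Multiset.mem_map.1 hx
        obtain ⟨j, -, hj⟩ := Multiset.mem_map.1 hy
        omega
    · intro x
      simp only [Multiset.mem_add, Multiset.mem_map, Finset.mem_val, Finset.mem_univ, true_and,
        Finset.mem_Icc]
      constructor
      · rintro (⟨i, rfl⟩ | ⟨i, rfl⟩) <;> have := i.2 <;> omega
      · rintro ⟨h1, h2⟩
        rcases Nat.even_or_odd' x with ⟨k, rfl | rfl⟩
        · exact Or.inr ⟨⟨k - 1, by omega⟩, by simp only; omega⟩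
        · exact Or.inl ⟨⟨k, by omega⟩, rfl⟩

/-- Every planar matching is the odd-even matching of a noncrossing permutation. -/
lemma IsMatching.exists_perm {n : ℕ} {M : Multiset (ℕ × ℕ)} (h : IsMatching n M)
    (hP : Planar M) : ∃ σ : Equiv.Perm (Fin n), IsNoncrossingPerm σ ∧ permMatching σ = M := by
  have hex : ∀ i : Fin n, ∃ j : Fin n,
      (min (2 * (i : ℕ) + 1) (2 * (j : ℕ) + 2), max (2 * (i : ℕ) + 1) (2 * (j : ℕ) + 2)) ∈ M := by
    intro i
    have hi : 2 * (i : ℕ) + 1 ∈ M.map Prod.fst + M.map Prod.snd := by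
      rw [h.ends]
      simp only [Finset.mem_val, Finset.mem_Icc]
      have := i.2
      omega
    rcases Multiset.mem_add.1 hi with hi | hi <;> obtain ⟨⟨a, b⟩, hp, e⟩ := Multiset.mem_map.1 hi
    · have o := h.odd_length hP hp
      have l := h.lt _ hp
      have r := h.mem_Icc hp
      simp only at e o l r
      refine ⟨⟨b / 2 - 1, by omega⟩, ?_⟩
      convert hp using 2 <;> simp only <;> omega
    · have o := h.odd_length hP hp
      have l := h.lt _ hp
      have r := h.mem_Icc hp
      simp only at e o l r
      refine ⟨⟨a / 2 - 1, by omega⟩, ?_⟩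
      convert hp using 2 <;> simp only <;> omega
  choose g hg using hex
  have ginj : Function.Injective g := by
    intro i j hij
    have e := h.eq_of_share (hg i) (hg j) (by simp only [hij]; omega)
    rw [hij, Prod.mk.injEq] at e
    ext
    omega
  let σ : Equiv.Perm (Fin n) := Equiv.ofBijective g (Finite.injective_iff_bijective.1 ginj)
  have hmem : ∀ i, sortedChord σ i ∈ M := hg
  refine ⟨σ, ?_, ?_⟩
  · rintro i j - (hc | hc)
    · exact hP _ (hmem i) _ (hmem j) hc
    · exact hP _ (hmem j) _ (hmem i) hc
  · refine Multiset.eq_of_le_of_card_le ((Multiset.le_iff_subset ?_).2 ?_) ?_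
    · exact (Finset.nodup _).map (sortedChord_injective σ)
    · intro p hp
      obtain ⟨i, -, rfl⟩ := Multiset.mem_map.1 hp
      exact hmem i
    · rw [h.card, (isMatching_permMatching σ).card]

/-! ### From tensors to cycle counts -/

/-- The sign relating the sorted chords of `σ` to the chords oriented from odd to even: one factor
`-1` for each chord whose even endpoint is the smaller one. -/
def orientSign {n : ℕ} (σ : Equiv.Perm (Fin n)) : ℤ :=
  ∏ i : Fin n, if 2 * (i : ℕ) + 1 ≤ 2 * (σ i : ℕ) + 2 then 1 else -1

lemma orientSign_mul_self {n : ℕ} (σ : Equiv.Perm (Fin n)) :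
    orientSign σ * orientSign σ = 1 := by
  rw [orientSign, ← Finset.prod_mul_distrib]
  exact Finset.prod_eq_one fun i _ => by split_ifs <;> rfl

/-- The value `±1` of `eps x (!x)`. -/
def boolSign (x : Bool) : ℤ := if x then -1 else 1

/-- The labelling giving the odd point `2i+1` the value `z (ρ i)` and the even point `2j+2` the
value `!z j` (indices zero-based); values at other points are irrelevant. -/
def labelling {n : ℕ} (ρ : Equiv.Perm (Fin n)) (z : Fin n → Bool) (x : ℕ) : Bool :=
  if h : (x - 1) / 2 < n then
    if x % 2 = 1 then z (ρ ⟨(x - 1) / 2, h⟩) else !z ⟨(x - 1) / 2, h⟩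
  else false

lemma labelling_odd {n : ℕ} (ρ : Equiv.Perm (Fin n)) (z : Fin n → Bool) (i : Fin n) :
    labelling ρ z (2 * (i : ℕ) + 1) = z (ρ i) := by
  have h : (2 * (i : ℕ) + 1 - 1) / 2 = i := by omega
  simp [labelling, Nat.add_mod]

lemma labelling_even {n : ℕ} (ρ : Equiv.Perm (Fin n)) (z : Fin n → Bool) (i : Fin n) :
    labelling ρ z (2 * (i : ℕ) + 2) = !z i := by
  have h : (2 * (i : ℕ) + 2 - 1) / 2 = i := by omega
  simp only [labelling, h]
  simp

/-- On a labelling, the tensor of `σ` is, up to sign, the indicator of `z ∘ ρ = z ∘ σ`. -/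
lemma tensor_permMatching {n : ℕ} (σ ρ : Equiv.Perm (Fin n)) (z : Fin n → Bool) :
    tensor (permMatching σ) (labelling ρ z) =
      orientSign σ * (∏ i, boolSign (z i)) * if ∀ i, z (ρ i) = z (σ i) then 1 else 0 := by
  have h1 : tensor (permMatching σ) (labelling ρ z) =
      ∏ i, eps (labelling ρ z (sortedChord σ i).1) (labelling ρ z (sortedChord σ i).2) := by
    simp only [tensor, permMatching, Multiset.map_map]
    rfl
  have h2 : ∀ i, eps (labelling ρ z (sortedChord σ i).1) (labelling ρ z (sortedChord σ i).2) =
      (if 2 * (i : ℕ) + 1 ≤ 2 * (σ i : ℕ) + 2 then 1 else -1) *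
        (boolSign (z (ρ i)) * if z (ρ i) = z (σ i) then 1 else 0) := by
    intro i
    have e : eps (z (ρ i)) (!z (σ i)) =
        boolSign (z (ρ i)) * if z (ρ i) = z (σ i) then 1 else 0 := by
      cases z (ρ i) <;> cases z (σ i) <;> simp [eps, boolSign]
    rw [← e]
    simp only [sortedChord, chord]
    by_cases h : 2 * (i : ℕ) + 1 ≤ 2 * (σ i : ℕ) + 2
    · rw [if_pos h, min_eq_left h, max_eq_right h, labelling_odd, labelling_even, one_mul]
    · rw [if_neg h, min_eq_right (le_of_not_ge h), max_eq_left (le_of_not_ge h), labelling_odd,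
        labelling_even, eps_swap, neg_one_mul]
  rw [h1, Finset.prod_congr rfl fun i _ => h2 i, Finset.prod_mul_distrib,
    Finset.prod_mul_distrib, Equiv.prod_comp ρ (fun i => boolSign (z i)), Fintype.prod_ite_zero]
  simp [orientSign]

/-- The two-valued functions invariant under `π` are the functions on the set of its cycles. -/
lemma card_invariant {n : ℕ} (π : Equiv.Perm (Fin n)) :
    Fintype.card {w : Fin n → Bool // ∀ i, w (π i) = w i} = 2 ^ cycleCount π := by
  classical
  let e : {w : Fin n → Bool // ∀ i, w (π i) = w i} ≃ (Quotient (cycleSetoid π) → Bool) :=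
    { toFun := fun w => Quotient.lift w.1 (by
        rintro a b ⟨k, rfl⟩
        have : ∀ i, w.1 (π⁻¹ i) = w.1 i := fun i => by
          rw [← w.2 (π⁻¹ i)]; exact congrArg w.1 (π.apply_symm_apply i)
        induction k using Int.induction_on with
        | zero => rfl
        | succ k ih => rw [ih, add_comm, zpow_add, zpow_one, Equiv.Perm.mul_apply, w.2]
        | pred k ih =>
          rw [ih, sub_eq_add_neg, add_comm, zpow_add, zpow_neg_one, Equiv.Perm.mul_apply, this])
      invFun := fun u => ⟨fun i => u (Quotient.mk _ i), fun i => by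
        refine congrArg u ?_
        exact Quotient.sound (s := cycleSetoid π)
          (Equiv.Perm.sameCycle_apply_left.2 (Equiv.Perm.SameCycle.refl π i))⟩
      left_inv := fun w => rfl
      right_inv := fun u => by
        funext q
        induction q using Quotient.inductionOn with
        | _ a => rfl }
  rw [← Nat.card_eq_fintype_card, Nat.card_congr e, Nat.card_fun, cycleCount]
  simp

lemma sum_indicator {n : ℕ} (σ ρ : Equiv.Perm (Fin n)) :
    (∑ z : Fin n → Bool, if ∀ i, z (ρ i) = z (σ i) then (1 : ℤ) else 0) =
      2 ^ cycleCount (ρ⁻¹ * σ) := by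
  have h := card_invariant (ρ⁻¹ * σ)
  rw [Fintype.card_subtype] at h
  -- Substituting `z = w ∘ ρ⁻¹` turns `z ∘ ρ = z ∘ σ` into invariance of `w` under `ρ⁻¹ * σ`.
  rw [← Equiv.sum_comp (Equiv.arrowCongr ρ (Equiv.refl Bool)), Finset.sum_boole]
  rw [show (2 : ℤ) ^ cycleCount (ρ⁻¹ * σ) = ((2 ^ cycleCount (ρ⁻¹ * σ) : ℕ) : ℤ) by push_cast; rfl,
    ← h]
  congr 3
  ext w
  simp [Equiv.arrowCongr, eq_comm, Equiv.Perm.inv_def]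

open Classical in
theorem pairing_projection_exists (n : ℕ) (hn : 1 ≤ n) (τ : Equiv.Perm (Fin n)) :
    ∃ α : Equiv.Perm (Fin n) → ℤ,
      ∀ ρ : Equiv.Perm (Fin n),
        (2 : ℤ) ^ cycleCount (ρ⁻¹ * τ) =
          ∑ σ ∈ Finset.univ.filter (fun σ : Equiv.Perm (Fin n) => IsNoncrossingPerm σ),
            α σ * 2 ^ cycleCount (ρ⁻¹ * σ) := by
  let N := Finset.univ.filter (fun σ : Equiv.Perm (Fin n) => IsNoncrossingPerm σ)
  have hmem := tensor_mem_of_planar (n := n)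
    (Submodule.span ℤ ((fun σ => tensor (permMatching σ)) '' (N : Set (Equiv.Perm (Fin n)))))
    (fun M hM hP => by
      obtain ⟨σ, hσ, rfl⟩ := hM.exists_perm hP
      exact Submodule.subset_span ⟨σ, by simpa [N] using hσ, rfl⟩)
    _ _ (isMatching_permMatching τ) rfl
  obtain ⟨c, hc⟩ := (Submodule.mem_span_image_finset_iff_exists_fun' ℤ).1 hmem
  refine ⟨fun σ => orientSign τ * c σ * orientSign σ, fun ρ => ?_⟩
  have key : ∀ z : Fin n → Bool, (if ∀ i, z (ρ i) = z (τ i) then (1 : ℤ) else 0) =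
      ∑ σ ∈ N, orientSign τ * c σ * orientSign σ *
        if ∀ i, z (ρ i) = z (σ i) then (1 : ℤ) else 0 := by
    intro z
    have hz := congrFun hc (labelling ρ z)
    simp only [Finset.sum_apply, Pi.smul_apply, tensor_permMatching, smul_eq_mul] at hz
    have hs : (∏ i, boolSign (z i)) * (∏ i, boolSign (z i)) = 1 := by
      rw [← Finset.prod_mul_distrib]
      exact Finset.prod_eq_one fun i _ => by cases z i <;> rfl
    have ht := orientSign_mul_self τ
    set P := ∏ i, boolSign (z i)
    calc _ = orientSign τ * P * (orientSign τ * P *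
          if ∀ i, z (ρ i) = z (τ i) then (1 : ℤ) else 0) := by
            linear_combination (-(if ∀ i, z (ρ i) = z (τ i) then (1 : ℤ) else 0)) *
              (orientSign τ * orientSign τ * hs + ht)
      _ = _ := by
        rw [← hz, Finset.mul_sum]
        refine Finset.sum_congr rfl fun σ _ => ?_
        linear_combination (orientSign τ * c σ * orientSign σ *
          if ∀ i, z (ρ i) = z (σ i) then (1 : ℤ) else 0) * hs
  rw [← sum_indicator, Finset.sum_congr rfl fun z _ => key z, Finset.sum_comm]
  refine Finset.sum_congr rfl fun σ _ => ?_
  rw [← sum_indicator, Finset.mul_sum]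
end

section
/- Let V be a finite set of even cardinality and let π and σ be perfect matchings of V, i.e., fixed-point-free involutions of V. Then the number of subsets S ⊆ V with π(S) = S and σ(S) = S equals 2^{c(π∘σ)/2}, where c(π∘σ) is the number of cycles (orbits, counting fixed points) of the composed permutation π∘σ. (Equivalently, the number of such S is 2 raised to the number of loops of the meander formed by gluing the chord diagrams of π and σ, and this verifies that the Gram matrix of the partition-of-subsets form equals the meander matrix at q = 2.) -/
section Meander

variable {V : Type} {π σ : Equiv.Perm V}

/-- `π` conjugates `(π * σ) ^ n` to its inverse. -/
lemma apply_zpow_mul (hπ : ∀ v, π (π v) = v) (hσ : ∀ v, σ (σ v) = v) (n : ℤ) (v : V) :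
    π (((π * σ) ^ n) v) = ((π * σ) ^ (-n)) (π v) := by
  have hp : π⁻¹ = π := by
    rw [inv_eq_iff_mul_eq_one]; ext v; simp [hπ]
  have hs : σ⁻¹ = σ := by
    rw [inv_eq_iff_mul_eq_one]; ext v; simp [hσ]
  have h : SemiconjBy π (π * σ) (π * σ)⁻¹ := by
    rw [SemiconjBy, mul_inv_rev, hp, hs, ← mul_assoc]
    ext v; simp [hπ]
  have h2 := (h.zpow_right n).eq
  rw [inv_zpow, ← zpow_neg] at h2
  exact congrArg (fun f : Equiv.Perm V => f v) h2

lemma sameCycle_apply_apply (hπ : ∀ v, π (π v) = v) (hσ : ∀ v, σ (σ v) = v) {v w : V}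
    (h : (π * σ).SameCycle v w) : (π * σ).SameCycle (π v) (π w) := by
  obtain ⟨n, rfl⟩ := h
  exact ⟨-n, (apply_zpow_mul hπ hσ n v).symm⟩

/-- `π` moves every point to a different cycle of `π * σ`. -/
lemma not_sameCycle_apply (hπ : ∀ v, π (π v) = v) (hπf : ∀ v, π v ≠ v)
    (hσ : ∀ v, σ (σ v) = v) (hσf : ∀ v, σ v ≠ v) (v : V) :
    ¬ (π * σ).SameCycle v (π v) := by
  rintro ⟨n, hn⟩
  obtain ⟨k, rfl | rfl⟩ := Int.even_or_odd' n
  · apply hπf (((π * σ) ^ k) v)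
    rw [apply_zpow_mul hπ hσ, ← hn, ← Equiv.Perm.mul_apply, ← zpow_add]
    congr 2; ring
  · apply hσf (((π * σ) ^ k) v)
    apply π.injective
    rw [apply_zpow_mul hπ hσ, ← hn, ← Equiv.Perm.mul_apply, ← Equiv.Perm.mul_apply,
      ← Equiv.Perm.mul_apply, ← zpow_add, ← zpow_one_add]
    congr 2; ring

/-- The partition of `V` into the loops of the meander of `π` and `σ`, i.e. the orbits of the
group generated by `π` and `σ`: the loop of `v` consists of the cycles of `v` and of `π v`
under `π * σ`. -/
def loopSetoid (π σ : Equiv.Perm V) (hπ : ∀ v, π (π v) = v) (hσ : ∀ v, σ (σ v) = v) :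
    Setoid V where
  r v w := (π * σ).SameCycle v w ∨ (π * σ).SameCycle (π v) w
  iseqv :=
    { refl := fun v => Or.inl (Equiv.Perm.SameCycle.refl _ v)
      symm := by
        rintro v w (h | h)
        · exact Or.inl h.symm
        · have h2 := sameCycle_apply_apply hπ hσ h
          rw [hπ] at h2
          exact Or.inr h2.symm
      trans := by
        rintro u v w (h | h) (g | g)
        · exact Or.inl (h.trans g)
        · exact Or.inr ((sameCycle_apply_apply hπ hσ h).trans g)
        · exact Or.inr (h.trans g)
        · have h2 := sameCycle_apply_apply hπ hσ h
          rw [hπ] at h2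
          exact Or.inl (h2.trans g) }

/-- Every loop consists of exactly two cycles of `π * σ`. -/
lemma cycleCount_eq_two_mul [Finite V] (hπ : ∀ v, π (π v) = v) (hπf : ∀ v, π v ≠ v)
    (hσ : ∀ v, σ (σ v) = v) (hσf : ∀ v, σ v ≠ v) :
    cycleCount (π * σ) = 2 * Nat.card (Quotient (loopSetoid π σ hπ hσ)) := by
  classical
  have := Fintype.ofFinite (Quotient (cycleSetoid (π * σ)))
  have := Fintype.ofFinite (Quotient (loopSetoid π σ hπ hσ))
  let f : Quotient (cycleSetoid (π * σ)) → Quotient (loopSetoid π σ hπ hσ) :=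
    Quotient.map' id (fun _ _ h => Or.inl h)
  rw [cycleCount, Nat.card_eq_fintype_card, Nat.card_eq_fintype_card, ← Finset.card_univ,
    Finset.card_eq_sum_card_fiberwise (f := f) (t := Finset.univ) (by simp),
    Finset.sum_const_nat (m := 2), Finset.card_univ, mul_comm]
  intro q _
  induction q using Quotient.inductionOn with
  | h v =>
    have hfib : Finset.univ.filter (fun c => f c = Quotient.mk _ v) =
        {Quotient.mk (cycleSetoid (π * σ)) v, Quotient.mk (cycleSetoid (π * σ)) (π v)} := by
      ext c
      induction c using Quotient.inductionOn with
      | h w =>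
        simp only [Finset.mem_filter, Finset.mem_univ, true_and, Finset.mem_insert,
          Finset.mem_singleton]
        rw [eq_comm, @eq_comm _ _ (Quotient.mk _ v), @eq_comm _ _ (Quotient.mk _ (π v))]
        rw [Quotient.eq (r := cycleSetoid (π * σ)), Quotient.eq (r := cycleSetoid (π * σ))]
        exact Quotient.eq (r := loopSetoid π σ hπ hσ)
    rw [hfib, Finset.card_pair]
    intro h
    exact not_sameCycle_apply hπ hπf hσ hσf v (Quotient.exact h)

lemma image_eq_iff_of_involutive [DecidableEq V] {f : Equiv.Perm V} (hf : ∀ v, f (f v) = v)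
    (S : Finset V) : S.image f = S ↔ ∀ v, f v ∈ S ↔ v ∈ S := by
  constructor
  · intro h v
    conv_lhs => rw [← h]
    simp
  · intro h
    ext v
    rw [Finset.mem_image, ← h v]
    constructor
    · rintro ⟨w, hw, rfl⟩
      rwa [hf]
    · exact fun hv => ⟨f v, hv, hf v⟩

lemma zpow_apply_mem_iff {f : Equiv.Perm V} {S : Finset V} (h : ∀ v, f v ∈ S ↔ v ∈ S)
    (n : ℤ) (v : V) : (f ^ n) v ∈ S ↔ v ∈ S := by
  induction n with
  | zero => simp
  | succ i ih => rw [add_comm, zpow_one_add, Equiv.Perm.mul_apply, h, ih]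
  | pred i ih =>
    rw [← h, ← Equiv.Perm.mul_apply, ← zpow_one_add, add_sub_cancel, ih]

/-- The common invariant sets of `π` and `σ` are the unions of loops. -/
lemma card_invariant_eq [Fintype V] [DecidableEq V] (hπ : ∀ v, π (π v) = v)
    (hσ : ∀ v, σ (σ v) = v) :
    (Finset.univ.filter
        (fun S : Finset V => S.image π = S ∧ S.image σ = S)).card =
      2 ^ Nat.card (Quotient (loopSetoid π σ hπ hσ)) := by
  classical
  have := Fintype.ofFinite (Quotient (loopSetoid π σ hπ hσ))
  rw [Nat.card_eq_fintype_card, ← Fintype.card_finset, ← Finset.card_univ]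
  symm
  refine Finset.card_bij
    (fun T _ => Finset.univ.filter (fun v => Quotient.mk (loopSetoid π σ hπ hσ) v ∈ T))
    ?_ ?_ ?_
  · intro T _
    simp only [Finset.mem_filter, Finset.mem_univ, true_and]
    rw [image_eq_iff_of_involutive hπ, image_eq_iff_of_involutive hσ]
    refine ⟨fun v => ?_, fun v => ?_⟩
    · have : Quotient.mk (loopSetoid π σ hπ hσ) v = Quotient.mk _ (π v) :=
        Quotient.sound (Or.inr (Equiv.Perm.SameCycle.refl _ _))
      simp [this]
    · have : Quotient.mk (loopSetoid π σ hπ hσ) v = Quotient.mk _ (σ v) :=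
        -- `π * σ` sends `σ v` to `π v`
        Quotient.sound (Or.inr (Equiv.Perm.SameCycle.symm ⟨1, by simp [hσ]⟩))
      simp [this]
  · intro T _ T' _ h
    ext q
    induction q using Quotient.inductionOn with
    | h v => simpa using Finset.ext_iff.mp h v
  · intro S hS
    simp only [Finset.mem_filter, Finset.mem_univ, true_and] at hS
    rw [image_eq_iff_of_involutive hπ, image_eq_iff_of_involutive hσ] at hS
    obtain ⟨h1, h2⟩ := hS
    have h3 : ∀ v, (π * σ) v ∈ S ↔ v ∈ S := fun v => by
      rw [Equiv.Perm.mul_apply, h1, h2]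
    refine ⟨S.image (Quotient.mk _), Finset.mem_univ _, ?_⟩
    ext w
    simp only [Finset.mem_filter, Finset.mem_univ, true_and, Finset.mem_image]
    constructor
    · rintro ⟨v, hv, hvw⟩
      rcases Quotient.exact hvw with ⟨n, rfl⟩ | ⟨n, rfl⟩
      · rwa [zpow_apply_mem_iff h3]
      · rwa [zpow_apply_mem_iff h3, h1]
    · exact fun hw => ⟨w, hw, rfl⟩

end Meander

/-
STATEMENT 14: Let V be a finite set of even cardinality and π, σ perfect matchings of V
(fixed-point-free involutions).  Then the number of subsets S ⊆ V with π(S) = S and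
σ(S) = S equals 2^{c(π∘σ)/2}, where c(π∘σ) is the number of cycles (orbits, counting
fixed points) of π∘σ.
-/
theorem matching_invariant_subsets_card
    {V : Type} [Fintype V] [DecidableEq V] (hV : Even (Fintype.card V))
    (π σ : Equiv.Perm V)
    (hπinv : ∀ v, π (π v) = v) (hπfree : ∀ v, π v ≠ v)
    (hσinv : ∀ v, σ (σ v) = v) (hσfree : ∀ v, σ v ≠ v) :
    (Finset.univ.filter
        (fun S : Finset V => S.image π = S ∧ S.image σ = S)).card =
      2 ^ (cycleCount (π * σ) / 2) := by
  rw [card_invariant_eq hπinv hσinv, cycleCount_eq_two_mul hπinv hπfree hσinv hσfree,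
    Nat.mul_div_cancel_left _ two_pos]
end

section
/- Let n ≥ 1 and let π be a permutation of {1,…,n}. Consider the n chords {2k−1, 2π(k)} ⊆ {1,…,2n} for k = 1,…,n. Then sign(π) · Π_{k=1}^{n} (−1)^{(|2π(k)−(2k−1)|−1)/2} = (−1)^{N}, where N is the number of pairs 1 ≤ i < j ≤ n such that the chords {2i−1, 2π(i)} and {2j−1, 2π(j)} cross. -/
/-- The odd endpoint `2j+1` of the chord of `j` lies strictly between the endpoints `2k+1` and
`2π(k)+2` of the chord of `k` (0-based indices). -/
def OddInside {n : ℕ} (π : Equiv.Perm (Fin n)) (k j : Fin n) : Prop :=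
  (k < j ∧ j ≤ π k) ∨ (π k < j ∧ j < k)

open Classical in
lemma quarter_turn_eq_prod {n : ℕ} (π : Equiv.Perm (Fin n)) (k : Fin n) :
    (-1 : ℤ) ^ (((2 * ((π k : Fin n) : ℤ) + 2 - (2 * ((k : Fin n) : ℤ) + 1)).natAbs - 1) / 2) =
      ∏ j ∈ ({k} : Finset (Fin n))ᶜ, if OddInside π k j then (-1 : ℤ) else 1 := by
  rw [← Finset.prod_filter, Finset.prod_const]
  congr 1
  rcases le_or_gt k (π k) with h | h
  · have hset : (({k} : Finset (Fin n))ᶜ).filter (fun j => OddInside π k j)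
        = Finset.Ioc k (π k) := by
      ext j
      rw [Finset.mem_filter, Finset.mem_compl, Finset.mem_singleton, Finset.mem_Ioc, OddInside]
      omega
    rw [hset, Fin.card_Ioc]
    omega
  · have hset : (({k} : Finset (Fin n))ᶜ).filter (fun j => OddInside π k j)
        = Finset.Ioo (π k) k := by
      ext j
      rw [Finset.mem_filter, Finset.mem_compl, Finset.mem_singleton, Finset.mem_Ioo, OddInside]
      omega
    rw [hset, Fin.card_Ioo]
    omega

open Classical in
/-- The contribution of a single pair `i < j`: modulo 2, inversion plus the two containments of
odd endpoints equals crossing. -/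
lemma local_crossing {n : ℕ} (π : Equiv.Perm (Fin n)) {i j : Fin n} (hij : i < j) :
    (if π i < π j then (1 : ℤ) else -1) *
        ((if OddInside π i j then (-1 : ℤ) else 1) * (if OddInside π j i then (-1 : ℤ) else 1)) =
      if CrossPairs (chord π i) (chord π j) then -1 else 1 := by
  have hne : π i ≠ π j := fun h => hij.ne (π.injective h)
  split_ifs <;> first | rfl | (exfalso; simp only [OddInside, CrossPairs, chord] at *; omega)

open Classical in
theorem sign_times_quarter_turns_eq_crossings (n : ℕ) (hn : 1 ≤ n)
    (π : Equiv.Perm (Fin n)) :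
    (Equiv.Perm.sign π : ℤ) *
        ∏ k : Fin n,
          (-1 : ℤ) ^ (((2 * ((π k : Fin n) : ℤ) + 2 - (2 * ((k : Fin n) : ℤ) + 1)).natAbs - 1) / 2) =
      (-1 : ℤ) ^ (Finset.univ.filter (fun p : Fin n × Fin n =>
          p.1 < p.2 ∧ CrossPairs (chord π p.1) (chord π p.2))).card := by
  have hsign : (Equiv.Perm.sign π : ℤ) =
      ∏ i, ∏ j ∈ Finset.Ioi i, (if π i < π j then (1 : ℤ) else -1) := by
    rw [π.sign_eq_prod_prod_Ioi]
    simp only [Units.coe_prod, apply_ite, Units.val_one, Units.val_neg]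
  have hcross : (-1 : ℤ) ^ (Finset.univ.filter (fun p : Fin n × Fin n =>
        p.1 < p.2 ∧ CrossPairs (chord π p.1) (chord π p.2))).card =
      ∏ i, ∏ j ∈ Finset.Ioi i, if CrossPairs (chord π i) (chord π j) then (-1 : ℤ) else 1 := by
    rw [← Finset.prod_const, Finset.prod_filter, Fintype.prod_prod_type]
    refine Finset.prod_congr rfl fun i _ => ?_
    rw [← Finset.prod_filter, ← Finset.prod_filter]
    refine Finset.prod_congr ?_ fun _ _ => rfl
    ext j
    simp
  rw [hsign, hcross, Finset.prod_congr rfl fun k _ => quarter_turn_eq_prod π k,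
    ← Finset.prod_prod_Ioi_mul_eq_prod_prod_off_diag
      (fun j k => if OddInside π k j then (-1 : ℤ) else 1),
    ← Finset.prod_mul_distrib]
  refine Finset.prod_congr rfl fun i _ => ?_
  rw [← Finset.prod_mul_distrib]
  exact Finset.prod_congr rfl fun j hj => local_crossing π (Finset.mem_Ioi.mp hj)
end

section
/- Let n ≥ 1 and let τ be a permutation of {1,…,n}, encoding the odd-even pairing of {1,…,2n} with chords {2i−1, 2τ(i)}; let P(τ) denote the partition of {1,…,2n} whose parts are these n chords. Suppose (a_σ) are integers indexed by the noncrossing partitions σ of {1,…,2n} such that for every partition ρ of {1,…,2n}: ⟨ρ, P(τ)⟩ₜ = Σ_σ a_σ · ⟨ρ,σ⟩ₜ; and suppose (b_s) are integers indexed by the noncrossing permutations s of {1,…,n} such that for every permutation ρ of {1,…,n}: 2^{c(ρ⁻¹τ)} = Σ_s b_s · 2^{c(ρ⁻¹s)}. Then for every noncrossing permutation s of {1,…,n}: b_s = sign(s⁻¹∘τ) · a_{P(s)}. -/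
/-!
The sign twist between the two expansions comes from a linear functional that turns the forest
form `⟨·,·⟩ₜ` into a power of `-2`.

For a permutation `ρ`, a cut pattern `c` decides for each chord of `ρ` whether it stays whole or
which of its two ends is detached; all detached ends form one extra class.  `testSum ρ σ` is the sum
over nontrivial cut patterns of `(-1) ^ (number of cuts)` times the pairing of `σ` with the
resulting partition.  It has three properties.
* It vanishes unless `σ` has exactly `n` parts (`testSum_of_card_ne`).
* It vanishes if `σ` has a singleton part `{v}` (`testSum_of_singleton`), since toggling the cut
  at `v` is a sign-reversing involution.
* On `P(τ)` it equals `(-2) ^ c(ρ⁻¹τ)` (`testSum_chordPartition`): the join is total exactly when on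
  every cycle of `ρ⁻¹τ` there is at least one cut and all cuts are on the same side, and the signed
  count of such patterns on a single cycle is `-2`.

A noncrossing partition with `n` parts and no singleton is a noncrossing pairing, and by parity it is
`P(s)` for a noncrossing permutation `s` (`exists_perm_of_noncrossing`).  Applying `testSum ρ`
to the hypothesis on `a` thus gives
`(-2) ^ c(ρ⁻¹τ) = ∑ a (P(s)) * (-2) ^ c(ρ⁻¹s)` over noncrossing `s` (`expansion_of_testSum`).
Since `sign π = (-1) ^ (n - c(π))`, the numbers `sign(s⁻¹τ) * a (P(s))` solve the system that
defines `b`.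

That system has only one solution (`noncrossing_independent`): `2 ^ c(ρ⁻¹s)` counts the two-colourings
compatible with both `ρ` and `s`, so a relation among its columns forces a relation among the
indicator functions of compatibility with each `s`.  The latter are triangular with respect to the sum
of the left ends of the chords, because a noncrossing pairing is determined by its left ends.
-/

instance setoidFinite {m : ℕ} : Finite (Setoid (Fin m)) :=
  Finite.of_injective (fun s : Setoid (Fin m) => s.r)
    (fun s t h => by cases s; cases t; simp only at h; subst h; rfl)

noncomputable instance {m : ℕ} : Fintype (Setoid (Fin m)) := Fintype.ofFinite _

-- The bilinear form ⟨ρ,π⟩ₜ on partitions of {1,…,m}: 1 if (#parts ρ) + (#parts π) = m + 1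
-- and the join ρ ∨ π is the one-part partition, 0 otherwise.
open Classical in
noncomputable def bform {m : ℕ} (ρ π : Setoid (Fin m)) : ℤ :=
  if Nat.card (Quotient ρ) + Nat.card (Quotient π) = m + 1 ∧ ρ ⊔ π = ⊤ then 1 else 0

/-- A partition σ of {1,…,m} is noncrossing (planar) if there are no a < b < c < d with
a,c in one part of σ and b,d in another part. -/
def IsNoncrossing {m : ℕ} (σ : Setoid (Fin m)) : Prop :=
  ¬ ∃ a b c d : Fin m, a < b ∧ b < c ∧ c < d ∧ σ a c ∧ σ b d ∧ ¬ σ a b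

/-- P(τ): the partition of {1,…,2n} whose parts are the n chords {2i−1, 2τ(i)} of the
odd–even pairing encoded by τ.  (In 0-based indices, the chord of i : Fin n consists of
the indices 2i and 2τ(i)+1; the map below sends each index to its chord.) -/
def chordPartition {n : ℕ} (τ : Equiv.Perm (Fin n)) : Setoid (Fin (2 * n)) :=
  Setoid.ker (fun a : Fin (2 * n) =>
    if (a : ℕ) % 2 = 0 then (⟨(a : ℕ) / 2, by have := a.isLt; omega⟩ : Fin n)
    else τ⁻¹ ⟨(a : ℕ) / 2, by have := a.isLt; omega⟩)


/-! ### Cycle counts -/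

section CycleCounts

open Equiv.Perm

lemma cycleCount_eq_card_add_card {n : ℕ} (π : Equiv.Perm (Fin n)) :
    cycleCount π = (Finset.univ.filter fun x => π x = x).card + π.cycleFactorsFinset.card := by
  classical
  let f : Fin n → Fin n ⊕ Equiv.Perm (Fin n) :=
    fun x => if π x = x then Sum.inl x else Sum.inr (π.cycleOf x)
  have hker : cycleSetoid π = Setoid.ker f := by
    ext x y
    rw [Setoid.ker_def]
    change π.SameCycle x y ↔ _
    by_cases hx : π x = x <;> by_cases hy : π y = y
    · simp only [f, hx, hy, if_true, Sum.inl.injEq]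
      exact ⟨fun h => (sameCycle_comm.1 h).eq_of_right hx |>.symm, fun h => h ▸ SameCycle.refl _ _⟩
    · simp only [f, hx, hy, if_true, if_false, reduceCtorEq, iff_false]
      exact fun h => hy (h.apply_eq_self_iff.1 hx)
    · simp only [f, hx, hy, if_true, if_false, reduceCtorEq, iff_false]
      exact fun h => hx (h.apply_eq_self_iff.2 hy)
    · simp only [f, hx, hy, if_false, Sum.inr.injEq]
      refine ⟨fun h => h.cycleOf_eq, fun h => ?_⟩
      have h1 : y ∈ (π.cycleOf y).support := by
        rw [mem_support_cycleOf_iff]; exact ⟨SameCycle.refl _ _, mem_support.2 hy⟩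
      rw [← h, mem_support_cycleOf_iff] at h1
      exact h1.1
  have hrange : Set.range f =
      ((Finset.univ.filter fun x => π x = x).disjSum π.cycleFactorsFinset : Finset _) := by
    ext z
    simp only [Set.mem_range, Finset.mem_coe, Finset.mem_disjSum, Finset.mem_filter,
      Finset.mem_univ, true_and]
    constructor
    · rintro ⟨x, rfl⟩
      by_cases hx : π x = x
      · left; exact ⟨x, hx, by simp [f, hx]⟩
      · right; exact ⟨π.cycleOf x, cycleOf_mem_cycleFactorsFinset_iff.2 (mem_support.2 hx),
          by simp [f, hx]⟩
    · rintro (⟨x, hx, rfl⟩ | ⟨g, hg, rfl⟩)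
      · exact ⟨x, by simp [f, hx]⟩
      · obtain ⟨x, hx⟩ := (mem_cycleFactorsFinset_iff.1 hg).1.nonempty_support
        have h2 := cycle_is_cycleOf hx hg
        have h3 : π x ≠ x := mem_support.1 (mem_cycleFactorsFinset_support_le hg hx)
        exact ⟨x, by simp [f, h3, h2]⟩
  rw [cycleCount, hker, Nat.card_congr (Setoid.quotientKerEquivRange f), hrange,
    ← Finset.card_disjSum]
  simp

/-- The signature is `(-1)` to the number of points minus the number of cycles; the exponent
is written as a sum, which has the same parity. -/
lemma sign_eq_neg_one_pow {n : ℕ} (π : Equiv.Perm (Fin n)) :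
    (Equiv.Perm.sign π : ℤ) = (-1) ^ (n + cycleCount π) := by
  have h1 : π.support.card + (Finset.univ.filter fun x => π x = x).card = n := by
    have h := Finset.card_filter_add_card_filter_not (s := (Finset.univ : Finset (Fin n)))
      (fun x => π x = x)
    have h2 : π.support = Finset.univ.filter fun x => ¬ π x = x := by
      ext x; simp
    rw [h2, add_comm, h]; simp
  rw [sign_of_cycleType, sum_cycleType, cycleCount_eq_card_add_card, cycleType_def]
  simp only [Multiset.card_map, Finset.card_val]
  push_cast
  have h3 : (-1 : ℤ) ^ n = (-1) ^ (π.support.card + (Finset.univ.filter fun x => π x = x).card) :=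
    congrArg _ h1.symm
  rw [pow_add _ n, h3]
  simp only [pow_add]
  generalize (Finset.univ.filter fun x => π x = x).card = m
  have : ((-1 : ℤ) ^ m) * (-1) ^ m = 1 := by rw [← mul_pow]; simp
  linear_combination (-(-1 : ℤ) ^ π.support.card * (-1) ^ π.cycleFactorsFinset.card) * this

/-- `2 ^ c(ρ⁻¹ s)` counts the pairs of two-colourings compatible with both `s` and `ρ`. -/
lemma two_pow_cycleCount {n : ℕ} (ρ s : Equiv.Perm (Fin n)) :
    (2 : ℤ) ^ cycleCount (ρ⁻¹ * s) =
      ∑ p : (Fin n → Bool) × (Fin n → Bool),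
        (if p.1 = p.2 ∘ s then 1 else 0) * (if p.1 = p.2 ∘ ρ then 1 else 0) := by
  classical
  have h1 : (Finset.univ.filter fun p : (Fin n → Bool) × (Fin n → Bool) =>
      p.1 = p.2 ∘ s ∧ p.1 = p.2 ∘ ρ).card = 2 ^ cycleCount (ρ⁻¹ * s) := by
    have e : (Quotient (cycleSetoid (ρ⁻¹ * s)) → Bool) ≃
        {p : (Fin n → Bool) × (Fin n → Bool) // p.1 = p.2 ∘ s ∧ p.1 = p.2 ∘ ρ} :=
      { toFun := fun F => ⟨(fun x => F (Quotient.mk _ x), fun x => F (Quotient.mk _ (ρ⁻¹ x))), by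
          constructor
          · funext x
            refine congrArg F (Quotient.sound ?_)
            exact (sameCycle_apply_right (f := ρ⁻¹ * s)).2 (SameCycle.refl _ _)
          · funext x; simp⟩
        invFun := fun p => Quotient.lift p.1.1 (by
          intro x y hxy
          obtain ⟨i, -, rfl⟩ := SameCycle.exists_pow_eq' (f := ρ⁻¹ * s) hxy
          clear hxy
          induction i with
          | zero => simp
          | succ i ih =>
            rw [ih, pow_succ', Equiv.Perm.mul_apply]
            generalize ((ρ⁻¹ * s) ^ i) x = z
            have h2 := congrFun p.2.2 ((ρ⁻¹ * s) z)
            have h3 := congrFun p.2.1 z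
            simp only [Function.comp, Equiv.Perm.mul_apply] at h2 h3 ⊢
            rw [h2, h3]; simp)
        left_inv := by
          intro F; funext q
          induction q using Quotient.inductionOn with
          | h x => rfl
        right_inv := by
          rintro ⟨⟨f, g⟩, hs, hρ⟩
          apply Subtype.ext
          refine Prod.ext rfl ?_
          funext x
          have := congrFun hρ (ρ⁻¹ x)
          simpa using this }
    rw [← Fintype.card_subtype, ← Nat.card_eq_fintype_card, ← Nat.card_congr e, Nat.card_fun,
      cycleCount]
    simp
  have h2 : ((2 ^ cycleCount (ρ⁻¹ * s) : ℕ) : ℤ) = (2 : ℤ) ^ cycleCount (ρ⁻¹ * s) := by push_cast; rfl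
  rw [← h2, ← h1, Finset.card_filter]
  push_cast
  refine Finset.sum_congr rfl fun p _ => ?_
  by_cases h : p.1 = p.2 ∘ s <;> simp [h]

end CycleCounts

/-! ### Cut patterns on cycles -/

section CutPatterns

/-- Weight of the cut at one chord: `none` keeps both ends of the chord, `some b` detaches its
end number `b`. -/
def cutWeight : Option Bool → ℤ
  | none => 1
  | some _ => -1

/-- All points that are cut are cut on the same side, and there is at least one cut. -/
def OneSided {γ : Type} (c : γ → Option Bool) : Prop :=
  ∃ b, (∃ y, c y = some b) ∧ ∀ y, c y ≠ some (!b)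

open Classical in
/-- For a single cycle, each of the two sides contributes `∑_{∅ ≠ S} (-1)^|S| = -1`. -/
lemma sum_oneSided {γ : Type} [Fintype γ] [Nonempty γ] :
    ∑ c : γ → Option Bool, (if OneSided c then ∏ y, cutWeight (c y) else 0) = -2 := by
  -- inclusion-exclusion over the events: no cut on side `true`, no cut on side `false`, no cut
  have key : ∀ c : γ → Option Bool, (if OneSided c then ∏ y, cutWeight (c y) else 0) =
      (∏ y, if c y = some true then 0 else cutWeight (c y)) +
      (∏ y, if c y = some false then 0 else cutWeight (c y)) -
      2 * ∏ y, if c y = none then (1 : ℤ) else 0 := by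
    intro c
    have p0 : ∀ b, (∏ y, if c y = some b then 0 else cutWeight (c y)) =
        if ∃ y, c y = some b then 0 else ∏ y, cutWeight (c y) := by
      intro b
      split_ifs with h
      · obtain ⟨y, hy⟩ := h
        exact Finset.prod_eq_zero (Finset.mem_univ y) (by simp [hy])
      · push Not at h
        exact Finset.prod_congr rfl fun y _ => by simp [h y]
    have p1 : (∏ y, if c y = none then (1 : ℤ) else 0) =
        if (∃ y, c y = some true) ∨ (∃ y, c y = some false) then 0 else 1 := by
      split_ifs with h
      · obtain ⟨y, hy⟩ | ⟨y, hy⟩ := h <;>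
        exact Finset.prod_eq_zero (Finset.mem_univ y) (by simp [hy])
      · push Not at h
        refine Finset.prod_eq_one fun y _ => ?_
        rcases hc : c y with _ | _ | _
        · simp
        · exact absurd hc (h.2 y)
        · exact absurd hc (h.1 y)
    have p2 : (¬ (∃ y, c y = some true)) → (¬ (∃ y, c y = some false)) →
        ∏ y, cutWeight (c y) = 1 := by
      intro h1 h2
      push Not at h1 h2
      refine Finset.prod_eq_one fun y _ => ?_
      rcases hc : c y with _ | _ | _
      · rfl
      · exact absurd hc (h2 y)
      · exact absurd hc (h1 y)
    have p3 : OneSided c ↔ ((∃ y, c y = some true) ∧ ¬ ∃ y, c y = some false) ∨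
        ((∃ y, c y = some false) ∧ ¬ ∃ y, c y = some true) := by
      simp [OneSided, or_comm]
    rw [p0, p0, p1, if_congr p3 rfl rfl]
    by_cases ht : ∃ y, c y = some true <;> by_cases hf : ∃ y, c y = some false
    · simp only [ht, hf]; simp
    · simp only [ht, hf]; simp
    · simp only [ht, hf]; simp
    · rw [p2 ht hf]; simp only [ht, hf]; simp
  simp only [key, Finset.sum_sub_distrib, Finset.sum_add_distrib, ← Finset.mul_sum]
  rw [← Fintype.prod_sum fun (_ : γ) o => if o = some true then 0 else cutWeight o,
    ← Fintype.prod_sum fun (_ : γ) o => if o = some false then 0 else cutWeight o,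
    ← Fintype.prod_sum fun (_ : γ) o => if o = none then (1 : ℤ) else 0]
  simp [Fintype.sum_option, cutWeight]

open Classical in
/-- The signed count of cut patterns that are one-sided on every cycle factors over the cycles. -/
lemma sum_oneSided_cycles {n : ℕ} (π : Equiv.Perm (Fin n)) :
    ∑ c : Fin n → Option Bool,
      (if ∀ x, ∃ b, (∃ y, π.SameCycle x y ∧ c y = some b) ∧
          ∀ y, π.SameCycle x y → c y ≠ some (!b)
        then ∏ k, cutWeight (c k) else 0) = (-2) ^ cycleCount π := by
  let Q := Quotient (cycleSetoid π)
  let f : Fin n → Q := Quotient.mk _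
  have hf : ∀ x y, f y = f x ↔ π.SameCycle x y := fun x y =>
    (eq_comm.trans Quotient.eq : f y = f x ↔ _)
  let e : (Fin n → Option Bool) ≃ (∀ q : Q, {x // f x = q} → Option Bool) :=
    ((Equiv.sigmaFiberEquiv f).arrowCongr (Equiv.refl _)).symm.trans
      (Equiv.piCurry fun (q : Q) (_ : {x // f x = q}) => Option Bool)
  have he : ∀ c q x, e c q x = c x.1 := fun _ _ _ => rfl
  have hne : ∀ q : Q, Nonempty {x // f x = q} := fun q => by
    obtain ⟨x, hx⟩ := Quotient.exists_rep q
    exact ⟨⟨x, hx⟩⟩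
  calc _ = ∑ c : Fin n → Option Bool, ∏ q : Q,
        (if OneSided (e c q) then ∏ y, cutWeight (e c q y) else 0) := by
        refine Finset.sum_congr rfl fun c _ => ?_
        have h1 : ∏ k, cutWeight (c k) = ∏ q : Q, ∏ y : {x // f x = q}, cutWeight (e c q y) := by
          rw [← Equiv.prod_comp (Equiv.sigmaFiberEquiv f), Fintype.prod_sigma]
          rfl
        have h2 : (∀ x, ∃ b, (∃ y, π.SameCycle x y ∧ c y = some b) ∧
          ∀ y, π.SameCycle x y → c y ≠ some (!b)) ↔ ∀ q, OneSided (e c q) := by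
          have h3 : ∀ x, (∃ b, (∃ y, π.SameCycle x y ∧ c y = some b) ∧
            ∀ y, π.SameCycle x y → c y ≠ some (!b)) ↔ OneSided (e c (f x)) := by
            intro x
            simp only [OneSided, he, Subtype.exists, Subtype.forall, hf, exists_prop]
          simp only [h3]
          exact ⟨fun h q => by
            obtain ⟨x, rfl⟩ := Quotient.exists_rep q
            exact h x, fun h x => h _⟩
        rw [if_congr h2 rfl rfl]
        split_ifs with h
        · rw [h1]
          exact Finset.prod_congr rfl fun q _ => by rw [if_pos (h q)]
        · push Not at h
          obtain ⟨q, hq⟩ := h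
          exact (Finset.prod_eq_zero (Finset.mem_univ q) (by rw [if_neg hq])).symm
    _ = ∏ q : Q, ∑ c : {x // f x = q} → Option Bool,
        (if OneSided c then ∏ y, cutWeight (c y) else 0) := by
        rw [Fintype.prod_sum]
        exact Equiv.sum_comp e (fun d => ∏ q : Q,
          (if OneSided (d q) then ∏ y, cutWeight (d q y) else 0))
    _ = _ := by
        rw [Finset.prod_congr rfl (g := fun _ => (-2 : ℤ)) fun q _ => by
            convert! sum_oneSided
            exact hne q,
          Finset.prod_const, Finset.card_univ,
          ← Nat.card_eq_fintype_card]
        rfl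

end CutPatterns

/-! ### Independence of the noncrossing pairings -/

section Independence

/-- A noncrossing pairing is determined by which points are the left ends of chords: a shortest
chord `{i < j}` of `s` missing from `t` encloses only common chords, so in `t` the point `i` is
joined to some `j' > j` and `j` to some `i' < i`, and these two chords of `t` cross. -/
lemma noncrossing_ext {n : ℕ} {s t : Equiv.Perm (Fin n)} (hs : IsNoncrossingPerm s)
    (ht : IsNoncrossingPerm t) (h1 : ∀ k, k ≤ s k ↔ k ≤ t k)
    (h2 : ∀ j, s.symm j ≤ j ↔ t.symm j ≤ j) : s = t := by
  by_contra hne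
  have hex : ∃ k, s k ≠ t k := by
    by_contra h
    push Not at h
    exact hne (Equiv.ext h)
  obtain ⟨k, hk, hmin⟩ : ∃ k, s k ≠ t k ∧ ∀ m, s m ≠ t m →
      ((2 * (k : ℤ) + 1) - (2 * (s k : ℕ) + 2)).natAbs ≤
        ((2 * (m : ℤ) + 1) - (2 * (s m : ℕ) + 2)).natAbs := by
    classical
    obtain ⟨k, hk, hm⟩ := Finset.exists_min_image (Finset.univ.filter fun k => s k ≠ t k)
      (fun k => ((2 * (k : ℤ) + 1) - (2 * (s k : ℕ) + 2)).natAbs)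
      (by obtain ⟨k, hk⟩ := hex; exact ⟨k, by simpa using hk⟩)
    exact ⟨k, by simpa using hk, fun m hm' => hm m (by simpa using hm')⟩
  -- the `t`-preimage of `s k` and the `s`-preimage of `t k`
  obtain ⟨i', hi'⟩ := t.surjective (s k)
  obtain ⟨m, hm⟩ := s.surjective (t k)
  have hi'k : i' ≠ k := by rintro rfl; exact hk hi'.symm
  have hmk : m ≠ k := by rintro rfl; exact hk hm
  have hs1 := hs m k hmk
  have hs2 := hs i' k hi'k
  have ht1 := ht i' k hi'k
  have hm1 : s m ≠ t m := by
    rw [hm]; intro h; exact hmk (t.injective h).symm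
  have hi1 : s i' ≠ t i' := by
    rw [hi']; intro h; exact hi'k (s.injective h)
  have hmin1 := hmin m hm1
  have hmin2 := hmin i' hi1
  have hk1 := h1 k
  have hk2 := h2 (s k)
  have e1 : t.symm (s k) = i' := by rw [← hi']; simp
  rw [e1, Equiv.symm_apply_apply] at hk2
  have n1 : (t k : ℕ) ≠ s k := fun h => hk (Fin.ext h.symm)
  have n2 : (i' : ℕ) ≠ k := fun h => hi'k (Fin.ext h)
  have n3 : (m : ℕ) ≠ k := fun h => hmk (Fin.ext h)
  have n4 : (s i' : ℕ) ≠ s k := fun h => hi'k (s.injective (Fin.ext h))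
  simp only [CrossPairs, chord, hm, hi', Fin.le_def] at hs1 hs2 ht1 hmin1 hmin2 hk1 hk2
  clear hmin hex hs ht h1 h2 hm1 hi1 e1 hmk hi'k hk hm hi' hne
  generalize (k : ℕ) = K at *
  generalize (s k : ℕ) = J at *
  generalize (t k : ℕ) = J' at *
  generalize (i' : ℕ) = I at *
  generalize (m : ℕ) = M at *
  generalize (s i' : ℕ) = SI at *
  rcases le_or_gt K J with h | h
  · have a1 : J < J' := by
      clear hs2 ht1 hmin2 hk2
      omega
    have a2 : I < K := by
      clear hs1 ht1 hmin1 hk1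
      omega
    omega
  · have a1 : J' < J := by
      clear hs2 ht1 hmin2 hk2
      omega
    have a2 : K < I := by
      clear hs1 ht1 hmin1 hk1
      omega
    omega

open Classical in
/-- Colour the points `2k` by `f` and the points `2k + 1` by `g`; `f = g ∘ t` says that the two
ends of every chord of `t` have equal colours.  The colouring below marks left ends at even
points and right ends at odd points by `true`.  It is compatible with `s`, and any compatible `t`
has a sum of left ends that is at most the one for `s`, with equality only if `t` has the same
left ends. -/
lemma left_ends_of_compatible {n : ℕ} {s t : Equiv.Perm (Fin n)}
    (hcomp : (fun k => decide (k ≤ s k)) = (fun j => decide (s.symm j ≤ j)) ∘ t)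
    (hle : ∑ k : Fin n, min (2 * (k : ℕ)) (2 * (s k : ℕ) + 1) ≤
      ∑ k : Fin n, min (2 * (k : ℕ)) (2 * (t k : ℕ) + 1)) :
    (∀ k, k ≤ s k ↔ k ≤ t k) ∧ (∀ j, s.symm j ≤ j ↔ t.symm j ≤ j) := by
  have hc : ∀ k, k ≤ s k ↔ s.symm (t k) ≤ t k := fun k => by
    have := congrFun hcomp k
    simpa using this
  -- the left ends of `s`, summed over the chords of `t`
  let W : Fin n → ℕ := fun k => if k ≤ s k then 2 * (k : ℕ) else 2 * (t k : ℕ) + 1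
  have hW : ∑ k : Fin n, min (2 * (k : ℕ)) (2 * (s k : ℕ) + 1) = ∑ k, W k := by
    have e1 : ∀ k : Fin n, min (2 * (k : ℕ)) (2 * (s k : ℕ) + 1) =
        (if k ≤ s k then 2 * (k : ℕ) else 0) + (if s.symm (s k) ≤ s k then 0 else 2 * (s k : ℕ) + 1) := by
      intro k
      rw [Equiv.symm_apply_apply]
      split_ifs with h <;> rw [Fin.le_def] at h <;> omega
    have e2 : ∀ k, W k =
        (if k ≤ s k then 2 * (k : ℕ) else 0) + (if s.symm (t k) ≤ t k then 0 else 2 * (t k : ℕ) + 1) := by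
      intro k
      simp only [W, ← hc]
      split_ifs <;> omega
    rw [Finset.sum_congr rfl fun k _ => e1 k, Finset.sum_congr rfl fun k _ => e2 k,
      Finset.sum_add_distrib, Finset.sum_add_distrib]
    congr 1
    rw [Equiv.sum_comp s fun j => if s.symm j ≤ j then 0 else 2 * (j : ℕ) + 1,
      Equiv.sum_comp t fun j => if s.symm j ≤ j then 0 else 2 * (j : ℕ) + 1]
  have hle2 : ∀ k ∈ (Finset.univ : Finset (Fin n)), min (2 * (k : ℕ)) (2 * (t k : ℕ) + 1) ≤ W k := by
    intro k _
    simp only [W]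
    split_ifs <;> omega
  have heq := (Finset.sum_eq_sum_iff_of_le hle2).1
    (le_antisymm (Finset.sum_le_sum hle2) (hW ▸ hle))
  have hA : ∀ k, k ≤ s k ↔ k ≤ t k := by
    intro k
    have h := heq k (Finset.mem_univ k)
    simp only [W] at h
    rw [Fin.le_def, Fin.le_def] at *
    split_ifs at h with h' <;> omega
  refine ⟨hA, fun j => ?_⟩
  have h := hc (t.symm j)
  rw [Equiv.apply_symm_apply] at h
  rw [← h, hA, Equiv.apply_symm_apply]

open Classical in
/-- The Gram matrix `2 ^ c(ρ⁻¹ s)` of the noncrossing permutations is nonsingular: it is a sum of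
squares over two-colourings, and the evaluations at two-colourings are triangular. -/
lemma noncrossing_independent {n : ℕ} (d : Equiv.Perm (Fin n) → ℤ)
    (hd : ∀ ρ : Equiv.Perm (Fin n),
      ∑ s ∈ Finset.univ.filter (fun s : Equiv.Perm (Fin n) => IsNoncrossingPerm s),
          d s * 2 ^ cycleCount (ρ⁻¹ * s) = 0) :
    ∀ s, IsNoncrossingPerm s → d s = 0 := by
  set N := Finset.univ.filter (fun s : Equiv.Perm (Fin n) => IsNoncrossingPerm s) with hN
  have hsq : ∑ p : (Fin n → Bool) × (Fin n → Bool),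
      (∑ s ∈ N, d s * if p.1 = p.2 ∘ s then 1 else 0) ^ 2 = 0 := by
    calc _ = ∑ p : (Fin n → Bool) × (Fin n → Bool), ∑ ρ ∈ N, ∑ s ∈ N,
          d ρ * (d s * ((if p.1 = p.2 ∘ s then 1 else 0) * (if p.1 = p.2 ∘ ρ then 1 else 0))) := by
          refine Finset.sum_congr rfl fun p _ => ?_
          rw [sq, Finset.sum_mul_sum]
          refine Finset.sum_congr rfl fun ρ _ => Finset.sum_congr rfl fun s _ => ?_
          ring
      _ = ∑ ρ ∈ N, d ρ * ∑ s ∈ N, d s * 2 ^ cycleCount (ρ⁻¹ * s) := by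
          rw [Finset.sum_comm]
          refine Finset.sum_congr rfl fun ρ _ => ?_
          rw [Finset.sum_comm, Finset.mul_sum]
          refine Finset.sum_congr rfl fun s _ => ?_
          rw [two_pow_cycleCount, Finset.mul_sum, Finset.mul_sum]
      _ = 0 := Finset.sum_eq_zero fun ρ _ => by rw [hd, mul_zero]
  have hp : ∀ f g : Fin n → Bool, ∑ s ∈ N, d s * (if f = g ∘ s then 1 else 0) = 0 := by
    intro f g
    have h := (Finset.sum_eq_zero_iff_of_nonneg fun p _ => sq_nonneg _).1 hsq (f, g)
      (Finset.mem_univ _)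
    exact pow_eq_zero_iff (two_ne_zero) |>.1 h
  by_contra hcon
  push Not at hcon
  obtain ⟨s₀, hs₀, hds₀⟩ := hcon
  obtain ⟨s, hs, hmin⟩ := Finset.exists_min_image (N.filter fun s => d s ≠ 0)
    (fun s => ∑ k : Fin n, min (2 * (k : ℕ)) (2 * (s k : ℕ) + 1))
    ⟨s₀, by simp [hN, hs₀, hds₀]⟩
  rw [Finset.mem_filter] at hs
  have hsN := (Finset.mem_filter.1 hs.1).2
  have h := hp (fun k => decide (k ≤ s k)) (fun j => decide (s.symm j ≤ j))
  rw [Finset.sum_eq_single s] at h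
  · rw [if_pos, mul_one] at h
    · exact hs.2 h
    · funext k; simp
  · intro t ht hts
    by_contra hne
    have ht0 : d t ≠ 0 := fun h0 => hne (by rw [h0, zero_mul])
    have hcomp : (fun k => decide (k ≤ s k)) = (fun j => decide (s.symm j ≤ j)) ∘ t := by
      by_contra h0
      exact hne (by rw [if_neg h0, mul_zero])
    obtain ⟨hA, hB⟩ := left_ends_of_compatible hcomp
      (hmin t (Finset.mem_filter.2 ⟨ht, ht0⟩))
    exact hts (noncrossing_ext hsN (Finset.mem_filter.1 ht).2 hA hB).symm
  · intro h0
    exact absurd hs.1 h0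

end Independence

/-! ### Points and chords -/

section Chords

variable {n : ℕ}

/-- The point with 0-based index `2k`. -/
def evPt (k : Fin n) : Fin (2 * n) := ⟨2 * k, by omega⟩

/-- The point with 0-based index `2k + 1`. -/
def odPt (k : Fin n) : Fin (2 * n) := ⟨2 * k + 1, by omega⟩

/-- The chord of `ρ` on which a point lies, with the end it occupies: `false` for the end
`2k` and `true` for the end `2ρ(k) + 1`. -/
def coord (ρ : Equiv.Perm (Fin n)) (a : Fin (2 * n)) : Fin n × Bool :=
  if (a : ℕ) % 2 = 0 then (⟨(a : ℕ) / 2, by omega⟩, false)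
  else (ρ⁻¹ ⟨(a : ℕ) / 2, by omega⟩, true)

lemma evPt_or_odPt (a : Fin (2 * n)) : (∃ k, a = evPt k) ∨ ∃ k, a = odPt k := by
  rcases Nat.mod_two_eq_zero_or_one a with h | h
  · exact Or.inl ⟨⟨a / 2, by omega⟩, Fin.ext (by simp [evPt]; omega)⟩
  · exact Or.inr ⟨⟨a / 2, by omega⟩, Fin.ext (by simp [odPt]; omega)⟩

@[simp] lemma coord_evPt (ρ : Equiv.Perm (Fin n)) (k : Fin n) : coord ρ (evPt k) = (k, false) := by
  simp [coord, evPt]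

@[simp] lemma coord_odPt (ρ : Equiv.Perm (Fin n)) (k : Fin n) :
    coord ρ (odPt k) = (ρ⁻¹ k, true) := by
  have h : (2 * (k : ℕ) + 1) / 2 = k := by omega
  have h' : (2 * (k : ℕ) + 1) % 2 = 1 := by omega
  simp [coord, odPt, h, h']

lemma coord_injective (ρ : Equiv.Perm (Fin n)) : Function.Injective (coord ρ) := by
  intro a b h
  rcases evPt_or_odPt a with ⟨k, rfl⟩ | ⟨k, rfl⟩ <;>
    rcases evPt_or_odPt b with ⟨l, rfl⟩ | ⟨l, rfl⟩ <;> simp at h ⊢ <;> rw [h]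

lemma coord_surjective (ρ : Equiv.Perm (Fin n)) : Function.Surjective (coord ρ) := by
  rintro ⟨k, _ | _⟩
  · exact ⟨evPt k, by simp⟩
  · exact ⟨odPt (ρ k), by simp⟩

lemma chordPartition_rel (τ : Equiv.Perm (Fin n)) (a b : Fin (2 * n)) :
    chordPartition τ a b ↔ (coord τ a).1 = (coord τ b).1 := by
  rw [chordPartition, Setoid.ker_def]
  unfold coord
  split_ifs <;> rfl

lemma chordPartition_evPt_odPt (τ : Equiv.Perm (Fin n)) (k : Fin n) :
    chordPartition τ (evPt k) (odPt (τ k)) := by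
  rw [chordPartition_rel]; simp

lemma chordPartition_eq_ker (τ : Equiv.Perm (Fin n)) :
    chordPartition τ = Setoid.ker fun a => (coord τ a).1 := by
  ext a b
  rw [chordPartition_rel, Setoid.ker_def]

lemma card_chordPartition (τ : Equiv.Perm (Fin n)) :
    Nat.card (Quotient (chordPartition τ)) = n := by
  have h : Function.Surjective fun a => (coord τ a).1 := fun k => ⟨evPt k, by simp⟩
  rw [chordPartition_eq_ker, Nat.card_congr (Setoid.quotientKerEquivOfSurjective _ h)]
  simp

lemma chordPartition_injective :
    Function.Injective (chordPartition : Equiv.Perm (Fin n) → Setoid (Fin (2 * n))) := by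
  intro s t h
  ext k
  have h1 := chordPartition_evPt_odPt s k
  rw [h, chordPartition_rel] at h1
  simp only [coord_evPt, coord_odPt] at h1
  rw [← Equiv.Perm.eq_inv_iff_eq.1 h1]

lemma exists_chord_of_rel (s : Equiv.Perm (Fin n)) {a c : Fin (2 * n)} (hac : a < c)
    (h : chordPartition s a c) :
    min (chord s (coord s a).1).1 (chord s (coord s a).1).2 = a + 1 ∧
      max (chord s (coord s a).1).1 (chord s (coord s a).1).2 = c + 1 := by
  rw [chordPartition_rel] at h
  rcases evPt_or_odPt a with ⟨k, rfl⟩ | ⟨k, rfl⟩ <;>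
    rcases evPt_or_odPt c with ⟨l, rfl⟩ | ⟨l, rfl⟩ <;>
    simp only [coord_evPt, coord_odPt] at h ⊢
  · subst h; exact absurd hac (lt_irrefl _)
  · subst h
    simp only [evPt, odPt, Fin.lt_def, chord, Equiv.Perm.coe_inv, Equiv.apply_symm_apply] at *
    omega
  · subst h
    simp only [evPt, odPt, Fin.lt_def, chord, Equiv.Perm.coe_inv, Equiv.apply_symm_apply] at *
    omega
  · rw [(s⁻¹).injective h] at hac; exact absurd hac (lt_irrefl _)

lemma exists_ends (s : Equiv.Perm (Fin n)) (i : Fin n) :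
    ∃ a c : Fin (2 * n), min (chord s i).1 (chord s i).2 = a + 1 ∧
      max (chord s i).1 (chord s i).2 = c + 1 ∧ (coord s a).1 = i ∧ (coord s c).1 = i := by
  rcases le_or_gt i (s i) with h | h
  · refine ⟨evPt i, odPt (s i), ?_, ?_, by simp, by simp⟩ <;>
      simp only [evPt, odPt, chord, Fin.le_def] at * <;> omega
  · refine ⟨odPt (s i), evPt i, ?_, ?_, by simp, by simp⟩ <;>
      simp only [evPt, odPt, chord, Fin.lt_def] at * <;> omega

lemma isNoncrossing_chordPartition (s : Equiv.Perm (Fin n)) :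
    IsNoncrossing (chordPartition s) ↔ IsNoncrossingPerm s := by
  constructor
  · intro hnc i j hij hcross
    obtain ⟨a, c, h1, h2, h3, h4⟩ := exists_ends s i
    obtain ⟨b, d, k1, k2, k3, k4⟩ := exists_ends s j
    rw [CrossPairs, h1, h2, k1, k2] at hcross
    rcases hcross with h | h
    · refine hnc ⟨a, b, c, d, Fin.lt_def.2 (by omega), Fin.lt_def.2 (by omega),
        Fin.lt_def.2 (by omega), ?_, ?_, ?_⟩ <;> rw [chordPartition_rel]
      · rw [h3, h4]
      · rw [k3, k4]
      · rw [h3, k3]; exact hij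
    · refine hnc ⟨b, a, d, c, Fin.lt_def.2 (by omega), Fin.lt_def.2 (by omega),
        Fin.lt_def.2 (by omega), ?_, ?_, ?_⟩ <;> rw [chordPartition_rel]
      · rw [k3, k4]
      · rw [h3, h4]
      · rw [h3, k3]; exact hij.symm
  · rintro hs ⟨a, b, c, d, hab, hbc, hcd, hac, hbd, hn⟩
    obtain ⟨h1, h2⟩ := exists_chord_of_rel s (hab.trans hbc) hac
    obtain ⟨k1, k2⟩ := exists_chord_of_rel s (hbc.trans hcd) hbd
    rw [chordPartition_rel] at hn
    refine hs _ _ hn ?_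
    rw [CrossPairs, h1, h2, k1, k2]
    rw [Fin.lt_def] at *
    left; omega

/-- `n` classes on `2n` points without singletons are pairs. -/
lemma exists_partner (σ : Setoid (Fin (2 * n))) (hcard : Nat.card (Quotient σ) = n)
    (hsing : ∀ v, ∃ u, u ≠ v ∧ σ u v) :
    ∃ p : Fin (2 * n) → Fin (2 * n), ∀ a, p a ≠ a ∧ ∀ b, σ a b ↔ b = a ∨ b = p a := by
  classical
  let F : Quotient σ → Finset (Fin (2 * n)) :=
    fun q => Finset.univ.filter fun a => (Quotient.mk σ a) = q
  have hF : ∀ a b, b ∈ F (Quotient.mk σ a) ↔ σ a b := fun a b => by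
    simp only [F, Finset.mem_filter, Finset.mem_univ, true_and]
    exact Quotient.eq.trans ⟨σ.symm, σ.symm⟩
  have hsum : ∑ q : Quotient σ, (F q).card = ∑ q : Quotient σ, 2 := by
    have h := Finset.card_eq_sum_card_fiberwise (s := (Finset.univ : Finset (Fin (2 * n))))
      (t := (Finset.univ : Finset (Quotient σ))) (f := Quotient.mk σ) (fun _ _ => Finset.mem_coe.2 (Finset.mem_univ _))
    rw [Finset.card_univ, Fintype.card_fin] at h
    rw [Finset.sum_const, Finset.card_univ, ← Nat.card_eq_fintype_card, hcard, ← h]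
    simp [mul_comm]
  have hge : ∀ q ∈ (Finset.univ : Finset (Quotient σ)), 2 ≤ (F q).card := by
    intro q _
    obtain ⟨v, rfl⟩ := Quotient.exists_rep q
    obtain ⟨u, hu, huv⟩ := hsing v
    exact Finset.one_lt_card.2 ⟨u, (hF _ _).2 (σ.symm huv), v, (hF _ _).2 (σ.refl v), hu⟩
  have h2 := (Finset.sum_eq_sum_iff_of_le hge).1 hsum.symm
  choose u hu huv using hsing
  refine ⟨u, fun a => ⟨hu a, fun b => ?_⟩⟩
  have h3 : ({a, u a} : Finset _) = F (Quotient.mk σ a) := by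
    apply Finset.eq_of_subset_of_card_le
    · intro x hx
      rw [Finset.mem_insert, Finset.mem_singleton] at hx
      rcases hx with rfl | rfl
      · exact (hF _ _).2 (σ.refl _)
      · exact (hF _ _).2 (σ.symm (huv _))
    · rw [← h2 _ (Finset.mem_univ _), Finset.card_pair (hu a).symm]
  rw [← hF, ← h3]
  simp

/-- A noncrossing partition into pairs joins points of opposite parity, since the points under a
chord are paired among themselves; hence it is the partition of a noncrossing permutation. -/
lemma exists_perm_of_noncrossing (σ : Setoid (Fin (2 * n))) (hnc : IsNoncrossing σ)
    (hcard : Nat.card (Quotient σ) = n) (hsing : ∀ v, ∃ u, u ≠ v ∧ σ u v) :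
    ∃ s : Equiv.Perm (Fin n), IsNoncrossingPerm s ∧ chordPartition s = σ := by
  classical
  obtain ⟨p, hp⟩ := exists_partner σ hcard hsing
  have hrel : ∀ a, σ a (p a) := fun a => ((hp a).2 _).2 (Or.inr rfl)
  have hinv : ∀ a, p (p a) = a := fun a => by
    rcases ((hp (p a)).2 a).1 (σ.symm (hrel a)) with h | h
    · exact absurd h.symm (hp a).1
    · exact h.symm
  have hodd : ∀ a, a < p a → ((p a : ℕ) - a) % 2 = 1 := by
    intro a ha
    have hsum : ∑ x ∈ Finset.Ioo a (p a), (1 : ZMod 2) = 0 := by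
      refine Finset.sum_involution (fun x _ => p x) (fun _ _ => by decide)
        (fun x _ _ => (hp x).1) (fun x hx => ?_) (fun x _ => hinv x)
      rw [Finset.mem_Ioo] at hx ⊢
      have hax : ¬ σ a x := fun h => by
        rcases ((hp a).2 x).1 h with rfl | rfl
        · exact lt_irrefl _ hx.1
        · exact lt_irrefl _ hx.2
      have n1 : p x ≠ a := fun h => hax (h ▸ σ.symm (hrel x))
      have n2 : p x ≠ p a := fun h => hax (σ.trans (h ▸ hrel a) (σ.symm (hrel x)))
      constructor
      · by_contra hlt
        have hlt : p x < a := lt_of_le_of_ne (not_lt.1 hlt) n1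
        exact hnc ⟨p x, a, x, p a, hlt, hx.1, hx.2, σ.symm (hrel x), hrel a,
          fun h => hax (σ.trans (σ.symm h) (σ.symm (hrel x)))⟩
      · by_contra hlt
        have hlt : p a < p x := lt_of_le_of_ne (not_lt.1 hlt) n2.symm
        exact hnc ⟨a, x, p a, p x, hx.1, hx.2, hlt, hrel a, hrel x, hax⟩
    rw [Finset.sum_const, Fin.card_Ioo, nsmul_eq_mul, mul_one,
      ZMod.natCast_eq_zero_iff] at hsum
    rw [Fin.lt_def] at ha
    omega
  have hpar : ∀ k : Fin n, ∃ l, p (evPt k) = odPt l := by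
    intro k
    rcases evPt_or_odPt (p (evPt k)) with ⟨l, hl⟩ | h
    · exfalso
      rcases lt_trichotomy (evPt k) (p (evPt k)) with h | h | h
      · have := hodd _ h
        rw [hl] at this
        simp only [evPt] at this
        omega
      · exact (hp _).1 h.symm
      · have := hodd (p (evPt k)) (by rwa [hinv])
        rw [hinv, hl] at this
        simp only [evPt] at this
        omega
    · exact h
  choose s hs using hpar
  have hsinj : Function.Injective s := by
    intro k l h
    have h1 : evPt k = evPt l := by rw [← hinv (evPt k), hs, h, ← hs, hinv]
    simp only [evPt, Fin.mk.injEq] at h1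
    exact Fin.ext (by omega)
  let t : Equiv.Perm (Fin n) := Equiv.ofBijective s (Finite.injective_iff_bijective.1 hsinj)
  have ht : ∀ k, p (evPt k) = odPt (t k) := hs
  have hev : ∀ k l, σ (evPt k) (evPt l) ↔ k = l := by
    intro k l
    rw [(hp _).2, ht]
    simp only [evPt, odPt, Fin.mk.injEq]
    constructor
    · intro h; exact Fin.ext (by omega)
    · rintro rfl; left; rfl
  have hrep : ∀ a, σ a (evPt (coord t a).1) := by
    intro a
    rcases evPt_or_odPt a with ⟨k, rfl⟩ | ⟨k, rfl⟩
    · simp only [coord_evPt]; exact σ.refl _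
    · simp only [coord_odPt]
      have h1 := hrel (evPt (t⁻¹ k))
      rw [ht] at h1
      simp only [Equiv.Perm.coe_inv, Equiv.apply_symm_apply] at h1 ⊢
      exact σ.symm h1
  have heq : chordPartition t = σ := by
    ext a b
    rw [chordPartition_rel, ← hev]
    exact ⟨fun h => σ.trans (hrep a) (σ.trans h (σ.symm (hrep b))),
      fun h => σ.trans (σ.symm (hrep a)) (σ.trans h (hrep b))⟩
  exact ⟨t, (isNoncrossing_chordPartition t).1 (heq ▸ hnc), heq⟩

end Chords

/-! ### The test functional attached to a permutation -/

section TestFunctional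

variable {n : ℕ}

/-- The class of a point after cutting the chords of `ρ` according to `c`: the detached end of
each cut chord is moved to the extra class `none`. -/
def cutMap (ρ : Equiv.Perm (Fin n)) (c : Fin n → Option Bool) (a : Fin (2 * n)) :
    Option (Fin n) :=
  if c (coord ρ a).1 = some (coord ρ a).2 then none else some (coord ρ a).1

lemma cutMap_surjective (ρ : Equiv.Perm (Fin n)) {c : Fin n → Option Bool}
    (hc : c ≠ fun _ => none) : Function.Surjective (cutMap ρ c) := by
  rintro (_ | k)
  · obtain ⟨k, hk⟩ := Function.ne_iff.1 hc
    obtain ⟨b, hb⟩ := Option.ne_none_iff_exists'.1 hk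
    obtain ⟨a, ha⟩ := coord_surjective ρ (k, b)
    exact ⟨a, by simp [cutMap, ha, hb]⟩
  · obtain ⟨b, hb⟩ : ∃ b, c k ≠ some b := by
      rcases hck : c k with _ | b
      · exact ⟨true, by simp⟩
      · exact ⟨!b, by simp⟩
    obtain ⟨a, ha⟩ := coord_surjective ρ (k, b)
    exact ⟨a, by simp [cutMap, ha, hb]⟩

open Classical in
lemma bform_cut (ρ : Equiv.Perm (Fin n)) {c : Fin n → Option Bool}
    (hc : c ≠ fun _ => none) (σ : Setoid (Fin (2 * n))) :
    bform (Setoid.ker (cutMap ρ c)) σ =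
      if Nat.card (Quotient σ) = n ∧ Setoid.ker (cutMap ρ c) ⊔ σ = ⊤ then 1 else 0 := by
  rw [bform, Nat.card_congr (Setoid.quotientKerEquivOfSurjective _ (cutMap_surjective ρ hc))]
  refine if_congr (and_congr_left' ?_) rfl rfl
  rw [Nat.card_eq_fintype_card, Fintype.card_option, Fintype.card_fin]
  omega

open Classical in
/-- The signed combination over nontrivial cut patterns of the pairings of `σ` with the partition
obtained from `P(ρ)` by cutting.  In exterior-algebra terms it is the contraction of
the square of the forest form of `σ` with `∏ (Θ(e_i + e_j) - Θ(e_i) - Θ(e_j))` over the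
chords `{i, j}` of `ρ`, where `Θ(y) = y ⊗ y`. -/
noncomputable def testSum (ρ : Equiv.Perm (Fin n)) (σ : Setoid (Fin (2 * n))) : ℤ :=
  ∑ c ∈ Finset.univ.filter (fun c : Fin n → Option Bool => c ≠ fun _ => none),
    (∏ k, cutWeight (c k)) * bform (Setoid.ker (cutMap ρ c)) σ

lemma testSum_of_card_ne (ρ : Equiv.Perm (Fin n)) (σ : Setoid (Fin (2 * n)))
    (h : Nat.card (Quotient σ) ≠ n) : testSum ρ σ = 0 := by
  classical
  refine Finset.sum_eq_zero fun c hc => ?_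
  rw [bform_cut ρ (Finset.mem_filter.1 hc).2, if_neg (fun h' => h h'.1), mul_zero]

lemma not_sup_eq_top {α : Type} {r₁ r₂ : Setoid α} (χ : α → Prop) (h₁ : ∀ a b, r₁ a b → χ a → χ b)
    (h₂ : ∀ a b, r₂ a b → χ a → χ b) {x y : α} (hx : χ x) (hy : ¬ χ y) : r₁ ⊔ r₂ ≠ ⊤ := by
  intro h
  have h1 : r₁ ⊔ r₂ ≤ Setoid.ker χ := sup_le
    (fun a b hab => propext ⟨h₁ a b hab, h₁ b a (r₁.symm hab)⟩)
    (fun a b hab => propext ⟨h₂ a b hab, h₂ b a (r₂.symm hab)⟩)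
  rw [h] at h1
  have h2 : χ x = χ y := h1 (show (⊤ : Setoid α) x y from trivial)
  exact hy (h2 ▸ hx)

/-- Moving a point `v` that is a singleton of `σ` from one class to another keeps the join with
`σ` total, provided `v` is alone in neither class. -/
lemma sup_eq_top_of_move {α β : Type} {φ ψ : α → β} {σ : Setoid α} {v u u' : α}
    (hφψ : ∀ a, a ≠ v → φ a = ψ a) (hu : u ≠ v) (huv : φ u = φ v) (hu' : u' ≠ v)
    (huv' : ψ u' = ψ v) (hσ : ∀ w, σ w v → w = v) (h : Setoid.ker φ ⊔ σ = ⊤) :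
    Setoid.ker ψ ⊔ σ = ⊤ := by
  classical
  set r := Setoid.ker ψ ⊔ σ with hr
  have r1 : ∀ a b, ψ a = ψ b → r a b := fun a b hab =>
    (le_sup_left : Setoid.ker ψ ≤ r) (Setoid.ker_def.2 hab)
  have r2 : ∀ a b, σ a b → r a b := fun a b hab => (le_sup_right : σ ≤ r) hab
  let m : α → α := fun a => if a = v then u else a
  have hm : ∀ a, m a ≠ v := fun a => by
    simp only [m]; split_ifs with h
    · exact hu
    · exact h
  have hmφ : ∀ a, φ (m a) = φ a := fun a => by
    simp only [m]; split_ifs with h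
    · rw [h, huv]
    · rfl
  have hle : Setoid.ker φ ⊔ σ ≤ Setoid.comap m r := by
    refine sup_le (fun a b hab => ?_) (fun a b hab => ?_)
    · refine r1 _ _ ?_
      rw [← hφψ _ (hm a), ← hφψ _ (hm b), hmφ, hmφ]
      exact hab
    · change r (m a) (m b)
      by_cases hb : b = v
      · rw [hb] at hab ⊢; rw [hσ a hab]
      · by_cases ha : a = v
        · rw [ha] at hab; exact absurd (hσ b (σ.symm hab)) hb
        · simp only [m, ha, hb, if_false]; exact r2 _ _ hab
  rw [h] at hle
  have h1 : ∀ a, a ≠ v → r a u' := fun a ha => by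
    have : r (m a) (m u') := hle (show (⊤ : Setoid α) a u' from trivial)
    simpa only [m, ha, hu', if_false] using this
  have h2 : ∀ a, r a u' := fun a => by
    by_cases ha : a = v
    · rw [ha]; exact r1 _ _ huv'.symm
    · exact h1 a ha
  exact Setoid.ext fun a b => ⟨fun _ => trivial, fun _ => r.trans (h2 a) (r.symm (h2 b))⟩

/-- Partitions with a singleton `v` are annihilated: toggling the cut at `v` changes the sign,
and detaching the other end of the chord through `v` isolates `v`. -/
lemma testSum_of_singleton (ρ : Equiv.Perm (Fin n)) (σ : Setoid (Fin (2 * n)))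
    {v : Fin (2 * n)} (hv : ∀ u, σ u v → u = v) : testSum ρ σ = 0 := by
  classical
  by_cases hcard : Nat.card (Quotient σ) = n
  swap
  · exact testSum_of_card_ne ρ σ hcard
  obtain ⟨w, hw⟩ := coord_surjective ρ ((coord ρ v).1, !(coord ρ v).2)
  rcases hkb : coord ρ v with ⟨k, b⟩
  rw [hkb] at hw
  have hwv : w ≠ v := by
    rintro rfl; rw [hkb] at hw; simp at hw
  have hcoord : ∀ a, a ≠ v → coord ρ a ≠ (k, b) := fun a ha h =>
    ha (coord_injective ρ (h.trans hkb.symm))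
  let T : (Fin n → Option Bool) → Prop :=
    fun c => (c ≠ fun _ => none) ∧ Setoid.ker (cutMap ρ c) ⊔ σ = ⊤
  have hsum : testSum ρ σ =
      ∑ c : Fin n → Option Bool, (∏ k, cutWeight (c k)) * if T c then 1 else 0 := by
    rw [testSum, Finset.sum_filter]
    refine Finset.sum_congr rfl fun c _ => ?_
    by_cases hc : c = fun _ => none
    · rw [if_neg (not_not.2 hc), if_neg (fun h : T c => h.1 hc), mul_zero]
    · rw [if_pos hc, bform_cut ρ hc]
      simp only [hcard, T, hc, ne_eq, not_false_eq_true, true_and]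
  -- if `v` is alone in its class then the join is not total
  have hiso : ∀ c, (∀ a, a ≠ v → cutMap ρ c a ≠ cutMap ρ c v) → ¬ T c := by
    intro c h hT
    refine not_sup_eq_top (fun a => a = v) (fun x y hxy hx => ?_) (fun x y hxy hx => ?_) rfl hwv hT.2
    · subst hx
      by_contra hy
      exact h y hy (Setoid.ker_def.1 hxy).symm
    · subst hx
      exact hv y (σ.symm hxy)
  have h1 : ∀ c, c k = some (!b) → ¬ T c := by
    intro c hc
    refine hiso c fun a ha h => ?_
    have e2 : cutMap ρ c v = some k := by simp [cutMap, hkb, hc]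
    rw [e2, cutMap] at h
    split_ifs at h with h'
    have hk : (coord ρ a).1 = k := by simpa using h
    refine hcoord a ha (Prod.ext hk ?_)
    rw [hk, hc] at h'
    have hbool : ∀ x y : Bool, ¬ some (!y) = some x → x = y := by decide
    exact hbool _ _ h'
  have h2 : ∀ c, c k = none → (T c ↔ T (Function.update c k (some b))) := by
    intro c hc
    set c' := Function.update c k (some b) with hc'
    have hc'k : c' k = some b := by simp [hc']
    have hc'j : ∀ j, j ≠ k → c' j = c j := fun j hj => by simp [hc', hj]
    have hne : c' ≠ fun _ => none := fun h => by
      have := congrFun h k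
      rw [hc'k] at this
      cases this
    have hv1 : cutMap ρ c v = some k := by simp [cutMap, hkb, hc]
    have hv2 : cutMap ρ c' v = none := by simp [cutMap, hkb, hc'k]
    have hw1 : cutMap ρ c w = some k := by simp [cutMap, hw, hc]
    have hoff : ∀ a, a ≠ v → cutMap ρ c a = cutMap ρ c' a := by
      intro a ha
      have hca := hcoord a ha
      unfold cutMap
      by_cases hj : (coord ρ a).1 = k
      · have hb : b ≠ (coord ρ a).2 := fun h => hca (Prod.ext hj h.symm)
        rw [hj, hc, hc'k]
        simp [hb]
      · rw [hc'j _ hj]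
    by_cases hall : c = fun _ => none
    · refine iff_of_false (fun h => h.1 hall) (hiso c' fun a ha => ?_)
      rw [hv2, ← hoff a ha, hall]
      simp [cutMap]
    · obtain ⟨j, hj⟩ := Function.ne_iff.1 hall
      obtain ⟨b', hb'⟩ := Option.ne_none_iff_exists'.1 hj
      have hjk : j ≠ k := by rintro rfl; exact hj hc
      obtain ⟨u', hu'⟩ := coord_surjective ρ (j, b')
      have hu'v : u' ≠ v := by rintro rfl; rw [hkb] at hu'; exact hjk (congrArg Prod.fst hu').symm
      have hu'2 : cutMap ρ c' u' = cutMap ρ c' v := by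
        rw [hv2]; simp [cutMap, hu', hc'j j hjk, hb']
      refine and_congr (iff_of_true hall hne) ⟨fun h => ?_, fun h => ?_⟩
      · exact sup_eq_top_of_move hoff hwv (hw1.trans hv1.symm) hu'v hu'2 hv h
      · exact sup_eq_top_of_move (fun a ha => (hoff a ha).symm) hu'v hu'2 hwv
          (hw1.trans hv1.symm) hv h
  rw [hsum]
  let sw : Option Bool → Option Bool := fun o => if o = none then some b else if o = some b then
    none else o
  have hsw : ∀ o, sw (sw o) = o := by
    intro o
    rcases o with _ | o
    · simp [sw]
    · by_cases h : o = b <;> simp [sw, h]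
  have hprod : ∀ (c : Fin n → Option Bool) o, ∏ j, cutWeight (Function.update c k o j) =
      cutWeight o * ∏ j ∈ Finset.univ \ {k}, cutWeight (c j) := by
    intro c o
    rw [← Finset.prod_update_of_mem (Finset.mem_univ k) (fun j => cutWeight (c j)) (cutWeight o)]
    refine Finset.prod_congr rfl fun j _ => ?_
    by_cases hj : j = k
    · subst hj; simp
    · simp [hj]
  have hcancel : ∀ c, c k = none →
      (∏ j, cutWeight (c j)) * (if T c then (1 : ℤ) else 0) +
      (∏ j, cutWeight (Function.update c k (some b) j)) *
        (if T (Function.update c k (some b)) then 1 else 0) = 0 := by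
    intro c hc
    rw [← if_congr (h2 c hc) rfl rfl, hprod]
    have := hprod c (c k)
    rw [Function.update_eq_self, hc] at this
    rw [this]
    simp only [cutWeight]
    ring
  refine Finset.sum_ninvolution (fun c => Function.update c k (sw (c k))) (fun c => ?_)
    (fun c hc => ?_) (fun c => Finset.mem_univ _) (fun c => ?_)
  · by_cases hc : c k = none
    · have : sw (c k) = some b := by simp [sw, hc]
      rw [this]
      exact hcancel c hc
    · by_cases hc' : c k = some b
      · have e1 : sw (c k) = none := by simp [sw, hc']
        rw [e1]
        have h := hcancel (Function.update c k none) (by simp)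
        rw [Function.update_idem, ← hc', Function.update_eq_self] at h
        rw [add_comm]; exact h
      · have e1 : sw (c k) = c k := by simp [sw, hc, hc']
        have e2 : c k = some (!b) := by
          rcases hck : c k with _ | o
          · exact absurd hck hc
          · rw [hck] at hc'
            have hbool : ∀ x y : Bool, ¬ some x = some y → some x = some (!y) := by decide
            exact hbool _ _ hc'
        rw [e1, Function.update_eq_self, if_neg (h1 c e2)]
        simp
  · intro heq
    have h3 := congrFun heq k
    rw [Function.update_self] at h3
    have h4 : c k = some (!b) := by
      rcases hck : c k with _ | o
      · rw [hck] at h3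
        exact absurd h3 (by simp [sw])
      · rw [hck] at h3
        have hbool : ∀ x y : Bool, (if some x = none then some y else if some x = some y then none
            else some x) = some x → some x = some (!y) := by decide
        exact hbool _ _ h3
    exact hc (by rw [if_neg (h1 c h4), mul_zero])
  · funext j
    by_cases hj : j = k
    · subst hj; simp [hsw]
    · simp [hj]

end TestFunctional

/-! ### Evaluation of the test functional on pairings -/

section Evaluation

variable {n : ℕ}

lemma forall_sameCycle_of_step {π : Equiv.Perm (Fin n)} {Q : Fin n → Prop} {x y : Fin n}
    (hxy : π.SameCycle x y) (hbase : Q (π y)) (hstep : ∀ z, π.SameCycle x z → Q z → Q (π z)) :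
    Q x := by
  obtain ⟨i, hi, -, rfl⟩ := hxy.symm.exists_pow_eq''
  obtain ⟨i, rfl⟩ : ∃ j, i = j + 1 := ⟨i - 1, by omega⟩
  clear hi
  have hcyc : ∀ j : ℕ, π.SameCycle ((π ^ (i + 1)) y) ((π ^ j) y) := fun j => by
    have h1 : π.SameCycle y ((π ^ j) y) := ⟨j, by simp⟩
    exact hxy.trans h1
  have : ∀ j : ℕ, Q ((π ^ (j + 1)) y) := by
    intro j
    induction j with
    | zero => simpa using hbase
    | succ j ih =>
      have h := hstep _ (hcyc (j + 1)) ih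
      rwa [pow_succ' _ (j + 1)]
  exact this i

/-- Contracting the chords of `τ` after cutting `P(ρ)` gives, for each cycle of `ρ⁻¹τ`, a closed
walk through the chords of `ρ` on that cycle.  The cuts break it into paths, and all paths reach
the extra class exactly when there is a cut and all cuts are on the same side: two consecutive
cuts on facing sides enclose a path that avoids the extra class. -/
lemma cut_sup_chordPartition (hn : 1 ≤ n) (ρ τ : Equiv.Perm (Fin n)) (c : Fin n → Option Bool) :
    ((c ≠ fun _ => none) ∧ Setoid.ker (cutMap ρ c) ⊔ chordPartition τ = ⊤) ↔
      ∀ x, ∃ b, (∃ y, (ρ⁻¹ * τ).SameCycle x y ∧ c y = some b) ∧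
          ∀ y, (ρ⁻¹ * τ).SameCycle x y → c y ≠ some (!b) := by
  classical
  set π := ρ⁻¹ * τ with hπ
  have hev : ∀ i, cutMap ρ c (evPt i) = if c i = some false then none else some i := fun i => by
    simp [cutMap]
  have hod : ∀ i, cutMap ρ c (odPt (τ i)) =
      if c (π i) = some true then none else some (π i) := fun i => by
    simp [cutMap, hπ]
  constructor
  · rintro ⟨hne, htop⟩
    -- a predicate on classes compatible with the chords of `τ` is constant
    have hconst : ∀ χ : Option (Fin n) → Prop,
        (∀ i, χ (cutMap ρ c (evPt i)) ↔ χ (cutMap ρ c (odPt (τ i)))) →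
        ¬ χ none → ∀ x, ¬ χ (some x) := by
      intro χ hχ h0 x hx
      obtain ⟨a, ha⟩ := cutMap_surjective ρ hne (some x)
      obtain ⟨a0, ha0⟩ := cutMap_surjective ρ hne none
      have hrep : ∀ a, χ (cutMap ρ c a) ↔ χ (cutMap ρ c (evPt (coord τ a).1)) := by
        intro a
        rcases evPt_or_odPt a with ⟨k, rfl⟩ | ⟨k, rfl⟩
        · simp
        · rw [hχ]; simp
      refine not_sup_eq_top (fun a => χ (cutMap ρ c a)) (fun a b hab h => ?_)
        (fun a b hab h => ?_) (x := a) (y := a0) (by rwa [ha]) (by rwa [ha0]) htop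
      · rw [Setoid.ker_def] at hab
        rwa [← hab]
      · rw [chordPartition_rel] at hab
        rw [hrep] at h ⊢
        rwa [← hab]
    intro x
    -- every cycle is cut
    have hcut : ∃ y, π.SameCycle x y ∧ c y ≠ none := by
      by_contra hno
      push Not at hno
      refine hconst (fun o => ∃ y, o = some y ∧ π.SameCycle x y) (fun i => ?_) ?_ x
        ⟨x, rfl, Equiv.Perm.SameCycle.refl _ _⟩
      · by_cases hi : π.SameCycle x i
        · have hi' : π.SameCycle x (π i) := Equiv.Perm.sameCycle_apply_right.2 hi
          rw [hev, hod, hno i hi, hno _ hi']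
          simp [hi, hi']
        · have hi' : ¬ π.SameCycle x (π i) := fun h => hi (Equiv.Perm.sameCycle_apply_right.1 h)
          refine iff_of_false ?_ ?_
          · rintro ⟨y, hy, hxy⟩
            rw [hev] at hy
            split_ifs at hy
            exact hi (by rwa [Option.some.inj hy])
          · rintro ⟨y, hy, hxy⟩
            rw [hod] at hy
            split_ifs at hy
            exact hi' (by rwa [Option.some.inj hy])
      · rintro ⟨y, hy, -⟩
        cases hy
    -- no cycle is cut on both sides
    have hmono : ¬ ∃ m k, c k = some true ∧ c ((π ^ m) k) = some false := by
      intro hex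
      obtain ⟨k, hk, hm⟩ := Nat.find_spec hex
      set m := Nat.find hex with hmdef
      have hmin : ∀ m' < m, ∀ k', c k' = some true → c ((π ^ m') k') ≠ some false := by
        intro m' hm' k' h1 h2
        exact Nat.find_min hex hm' ⟨k', h1, h2⟩
      have hnf : ∀ j < m, c ((π ^ j) k) ≠ some false := fun j hj => hmin j hj k hk
      have hnt : ∀ j, 0 < j → j ≤ m → c ((π ^ j) k) ≠ some true := by
        intro j hj hjm h
        refine hmin (m - j) (by omega) _ h ?_
        rw [← Equiv.Perm.mul_apply, ← pow_add, Nat.sub_add_cancel hjm]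
        exact hm
      refine hconst (fun o => ∃ j ≤ m, o = some ((π ^ j) k)) (fun i => ?_) ?_ k ⟨0, by simp, by simp⟩
      · have hback : ∀ j ≤ m, c (π i) ≠ some true → π i = (π ^ j) k →
            ∃ j', j' < m ∧ i = (π ^ j') k := by
          intro j hj h1 h2
          rcases j with _ | j
          · rw [pow_zero, Equiv.Perm.one_apply] at h2
            exact absurd (h2 ▸ hk) h1
          · refine ⟨j, by omega, ?_⟩
            rw [pow_succ', Equiv.Perm.mul_apply] at h2
            exact π.injective h2
        rw [hev, hod]
        constructor
        · rintro ⟨j, hj, h⟩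
          split_ifs at h with hc
          have hi : i = (π ^ j) k := Option.some.inj h
          have hjm : j < m := lt_of_le_of_ne hj (by
            rintro rfl
            exact hc (hi ▸ hm))
          have e1 : π i = (π ^ (j + 1)) k := by rw [hi, pow_succ' π j]; rfl
          refine ⟨j + 1, hjm, ?_⟩
          rw [e1, if_neg (hnt _ (Nat.succ_pos j) hjm)]
        · rintro ⟨j, hj, h⟩
          split_ifs at h with hc
          obtain ⟨j', hj', hi⟩ := hback j hj hc (Option.some.inj h)
          refine ⟨j', hj'.le, ?_⟩
          rw [hi, if_neg (hnf _ hj')]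
      · rintro ⟨j, -, h⟩
        cases h
    have hmono' : ∀ y z, π.SameCycle y z → c y = some true → c z ≠ some false := by
      intro y z hyz hy hz
      obtain ⟨m, -, rfl⟩ := hyz.exists_pow_eq'
      exact hmono ⟨m, y, hy, hz⟩
    obtain ⟨y, hxy, hy⟩ := hcut
    obtain ⟨b, hb⟩ := Option.ne_none_iff_exists'.1 hy
    refine ⟨b, ⟨y, hxy, hb⟩, fun z hxz hz => ?_⟩
    cases b
    · exact hmono' z y (hxz.symm.trans hxy) hz hb
    · exact hmono' y z (hxy.symm.trans hxz) hb hz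
  · intro hM
    have hne : c ≠ fun _ => none := by
      intro h
      obtain ⟨b, ⟨y, -, hy⟩, -⟩ := hM ⟨0, hn⟩
      rw [h] at hy
      cases hy
    refine ⟨hne, ?_⟩
    set r := Setoid.ker (cutMap ρ c) ⊔ chordPartition τ with hr
    obtain ⟨a0, ha0⟩ := cutMap_surjective ρ hne none
    -- `Q o`: the class `o` is connected to the extra class
    let Q : Option (Fin n) → Prop := fun o => ∀ a, cutMap ρ c a = o → r a a0
    have hker : ∀ a b, cutMap ρ c a = cutMap ρ c b → r a b := fun a b h =>
      (le_sup_left : Setoid.ker (cutMap ρ c) ≤ r) (Setoid.ker_def.2 h)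
    have hQ0 : Q none := fun a ha => hker _ _ (ha.trans ha0.symm)
    have hQ : ∀ a, Q (cutMap ρ c a) ↔ r a a0 := fun a =>
      ⟨fun h => h a rfl, fun h b hb => r.trans (hker _ _ hb) h⟩
    have hedge : ∀ i, Q (cutMap ρ c (evPt i)) ↔ Q (cutMap ρ c (odPt (τ i))) := by
      intro i
      have h : r (evPt i) (odPt (τ i)) :=
        (le_sup_right : chordPartition τ ≤ r) (chordPartition_evPt_odPt τ i)
      rw [hQ, hQ]
      exact ⟨fun h' => r.trans (r.symm h) h', fun h' => r.trans h h'⟩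
    have hall : ∀ x, Q (some x) := by
      intro x
      obtain ⟨b, ⟨y, hxy, hy⟩, hb⟩ := hM x
      cases b
      · have hb' : ∀ z, π.SameCycle x z → c z ≠ some true := hb
        have hfw : ∀ z, π.SameCycle x z → (c z = some false ∨ Q (some z)) → Q (some (π z)) := by
          intro z hz hcz
          have h := hedge z
          rw [hev, hod, if_neg (hb' _ (Equiv.Perm.sameCycle_apply_right.2 hz))] at h
          refine h.1 ?_
          split_ifs with hcz'
          · exact hQ0
          · exact hcz.resolve_left hcz'
        exact forall_sameCycle_of_step (Q := fun x => Q (some x)) hxy (hfw y hxy (Or.inl hy))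
          fun z hz h => hfw z hz (Or.inr h)
      · have hb' : ∀ z, π.SameCycle x z → c z ≠ some false := hb
        have hbw : ∀ z, π.SameCycle x z → (c z = some true ∨ Q (some z)) →
            Q (some (π⁻¹ z)) := by
          intro z hz hcz
          have hpz : π (π⁻¹ z) = z := π.apply_symm_apply z
          have hz' : π.SameCycle x (π⁻¹ z) := Equiv.Perm.sameCycle_apply_right.1 (by rwa [hpz])
          have h := hedge (π⁻¹ z)
          rw [hev, hod, if_neg (hb' _ hz'), hpz] at h
          refine h.2 ?_
          split_ifs with hcz'
          · exact hQ0
          · exact hcz.resolve_left hcz'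
        exact forall_sameCycle_of_step (π := π⁻¹) (Q := fun x => Q (some x))
          (Equiv.Perm.sameCycle_inv.2 hxy) (hbw y hxy (Or.inl hy))
          fun z hz h => hbw z (Equiv.Perm.sameCycle_inv.1 hz) (Or.inr h)
    have hfin : ∀ a, r a a0 := fun a => by
      rw [← hQ]
      rcases cutMap ρ c a with _ | x
      · exact hQ0
      · exact hall x
    exact Setoid.ext fun a b => ⟨fun _ => trivial, fun _ => r.trans (hfin a) (r.symm (hfin b))⟩

lemma testSum_chordPartition (hn : 1 ≤ n) (ρ τ : Equiv.Perm (Fin n)) :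
    testSum ρ (chordPartition τ) = (-2) ^ cycleCount (ρ⁻¹ * τ) := by
  classical
  rw [← sum_oneSided_cycles, testSum, Finset.sum_filter]
  refine Finset.sum_congr rfl fun c _ => ?_
  rw [if_congr (cut_sup_chordPartition hn ρ τ c).symm rfl rfl]
  by_cases hc : c = fun _ => none
  · rw [if_neg (not_not.2 hc), if_neg (fun h => h.1 hc)]
  · rw [if_pos hc, bform_cut ρ hc]
    simp only [card_chordPartition, hc, ne_eq, not_false_eq_true, true_and, mul_ite, mul_one,
      mul_zero]

lemma neg_two_pow_cycleCount (π : Equiv.Perm (Fin n)) :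
    (-2 : ℤ) ^ cycleCount π = (-1) ^ n * ((Equiv.Perm.sign π : ℤ) * 2 ^ cycleCount π) := by
  rw [sign_eq_neg_one_pow, neg_pow, pow_add]
  have : ((-1 : ℤ) ^ n) * (-1) ^ n = 1 := by rw [← mul_pow]; simp
  linear_combination (-(-1 : ℤ) ^ cycleCount π * 2 ^ cycleCount π) * this

open Classical in
/-- Applying the test functional of `ρ` to an expansion of `P(τ)` in noncrossing partitions. -/
lemma expansion_of_testSum (hn : 1 ≤ n) (τ : Equiv.Perm (Fin n))
    (a : Setoid (Fin (2 * n)) → ℤ)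
    (ha : ∀ ρ : Setoid (Fin (2 * n)),
      bform ρ (chordPartition τ) =
        ∑ σ ∈ Finset.univ.filter (fun σ : Setoid (Fin (2 * n)) => IsNoncrossing σ),
          a σ * bform ρ σ) (ρ : Equiv.Perm (Fin n)) :
    (-2) ^ cycleCount (ρ⁻¹ * τ) =
      ∑ s ∈ Finset.univ.filter (fun s : Equiv.Perm (Fin n) => IsNoncrossingPerm s),
        a (chordPartition s) * (-2) ^ cycleCount (ρ⁻¹ * s) := by
  have h1 : testSum ρ (chordPartition τ) =
      ∑ σ ∈ Finset.univ.filter (fun σ : Setoid (Fin (2 * n)) => IsNoncrossing σ),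
        a σ * testSum ρ σ := by
    simp only [testSum, ha, Finset.mul_sum]
    rw [Finset.sum_comm]
    refine Finset.sum_congr rfl fun σ _ => Finset.sum_congr rfl fun c _ => ?_
    ring
  rw [← testSum_chordPartition hn, h1]
  simp only [← testSum_chordPartition hn]
  rw [← Finset.sum_image (f := fun σ => a σ * testSum ρ σ)
    (fun _ _ _ _ h => chordPartition_injective h)]
  symm
  refine Finset.sum_subset (fun σ hσ => ?_) (fun σ hσ hσ' => ?_)
  · obtain ⟨s, hs, rfl⟩ := Finset.mem_image.1 hσ
    exact Finset.mem_filter.2 ⟨Finset.mem_univ _,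
      (isNoncrossing_chordPartition s).2 (Finset.mem_filter.1 hs).2⟩
  · have hnc := (Finset.mem_filter.1 hσ).2
    by_cases hcard : Nat.card (Quotient σ) = n
    · by_cases hsing : ∀ v, ∃ u, u ≠ v ∧ σ u v
      · obtain ⟨s, hs, rfl⟩ := exists_perm_of_noncrossing σ hnc hcard hsing
        exact absurd (Finset.mem_image.2
          ⟨s, Finset.mem_filter.2 ⟨Finset.mem_univ _, hs⟩, rfl⟩) hσ'
      · push Not at hsing
        obtain ⟨v, hv⟩ := hsing
        rw [testSum_of_singleton ρ σ (v := v) fun u hu => by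
          by_contra h
          exact hv u h hu, mul_zero]
    · rw [testSum_of_card_ne ρ σ hcard, mul_zero]

end Evaluation

/-
STATEMENT 16: Let n ≥ 1 and τ a permutation of {1,…,n}.  Suppose (a_σ) are integers
indexed by the noncrossing partitions σ of {1,…,2n} with
⟨ρ,P(τ)⟩ₜ = Σ_σ a_σ·⟨ρ,σ⟩ₜ for every partition ρ of {1,…,2n}, and (b_s) are integers
indexed by the noncrossing permutations s of {1,…,n} with
2^{c(ρ⁻¹τ)} = Σ_s b_s·2^{c(ρ⁻¹s)} for every permutation ρ of {1,…,n}.  Then for every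
noncrossing permutation s: b_s = sign(s⁻¹∘τ) · a_{P(s)}.
-/
open Classical in
theorem pairing_coefficients_eq_signed_partition_coefficients
    (n : ℕ) (hn : 1 ≤ n) (τ : Equiv.Perm (Fin n))
    (a : Setoid (Fin (2 * n)) → ℤ)
    (ha : ∀ ρ : Setoid (Fin (2 * n)),
      bform ρ (chordPartition τ) =
        ∑ σ ∈ Finset.univ.filter (fun σ : Setoid (Fin (2 * n)) => IsNoncrossing σ),
          a σ * bform ρ σ)
    (b : Equiv.Perm (Fin n) → ℤ)
    (hb : ∀ ρ : Equiv.Perm (Fin n),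
      (2 : ℤ) ^ cycleCount (ρ⁻¹ * τ) =
        ∑ s ∈ Finset.univ.filter (fun s : Equiv.Perm (Fin n) => IsNoncrossingPerm s),
          b s * 2 ^ cycleCount (ρ⁻¹ * s)) :
    ∀ s : Equiv.Perm (Fin n), IsNoncrossingPerm s →
      b s = (Equiv.Perm.sign (s⁻¹ * τ) : ℤ) * a (chordPartition s) := by
  have key := expansion_of_testSum hn τ a ha
  have hzero := noncrossing_independent
    (fun s => b s - (Equiv.Perm.sign (s⁻¹ * τ) : ℤ) * a (chordPartition s)) (fun ρ => ?_)
  · intro s hs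
    exact sub_eq_zero.1 (hzero s hs)
  · have hsq : ((-1 : ℤ) ^ n) * (-1) ^ n = 1 := by rw [← mul_pow]; simp
    have hunit : ∀ u : ℤˣ, (u : ℤ) * u = 1 := fun u => by
      rw [← Units.val_mul, Int.units_mul_self]; rfl
    have h1 : (2 : ℤ) ^ cycleCount (ρ⁻¹ * τ) =
        (-1) ^ n * (Equiv.Perm.sign (ρ⁻¹ * τ) : ℤ) * (-2) ^ cycleCount (ρ⁻¹ * τ) := by
      rw [neg_two_pow_cycleCount]
      linear_combination (-2 ^ cycleCount (ρ⁻¹ * τ)) * hsq -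
        (2 ^ cycleCount (ρ⁻¹ * τ) * ((-1 : ℤ) ^ n * (-1) ^ n)) * hunit (Equiv.Perm.sign (ρ⁻¹ * τ))
    have h2 := hb ρ
    rw [h1, key ρ, Finset.mul_sum] at h2
    simp only [sub_mul, Finset.sum_sub_distrib]
    rw [← h2, sub_eq_zero]
    refine Finset.sum_congr rfl fun s _ => ?_
    have hsign : (Equiv.Perm.sign (s⁻¹ * τ) : ℤ) =
        (Equiv.Perm.sign (ρ⁻¹ * τ) : ℤ) * (Equiv.Perm.sign (ρ⁻¹ * s) : ℤ) := by
      rw [← Units.val_mul]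
      congr 1
      simp only [map_mul, Equiv.Perm.sign_inv]
      have := Int.units_mul_self (Equiv.Perm.sign ρ)
      calc _ = (Equiv.Perm.sign ρ * Equiv.Perm.sign ρ) *
            (Equiv.Perm.sign s * Equiv.Perm.sign τ) := by rw [this, one_mul]
        _ = _ := by ac_rfl
    rw [neg_two_pow_cycleCount, hsign]
    linear_combination ((Equiv.Perm.sign (ρ⁻¹ * τ) : ℤ) * a (chordPartition s) *
      (Equiv.Perm.sign (ρ⁻¹ * s) : ℤ) * 2 ^ cycleCount (ρ⁻¹ * s)) * hsq
end

section
/- Let n ≥ 1, let x_1 < x_2 < ⋯ < x_{2n} be real numbers, and let S ⊆ {1,…,2n} contain equally many odd and even elements. Define the n×n real matrix A, with rows indexed by the odd elements i ∈ {1,3,…,2n−1} and columns by the even elements j ∈ {2,4,…,2n}, by A_{i,j} = 0 if exactly one of i,j belongs to S, and A_{i,j} = (−1)^{(|i−j|−1)/2} / |x_j − x_i| otherwise. Then det A = (Π (x_j − x_i)) / (Π (x_j − x_i)), where the numerator product is over all pairs i < j in {1,…,2n} with i+j even such that i,j are both in S or both in the complement of S, and the denominator product is over all pairs i < j with i+j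 odd such that i,j are both in S or both in the complement of S. -/
/-!
Put `a i = x (2 * i)` and `b j = x (2 * j + 1)` (indices from `0`). Since `x` is increasing, the
nonzero entries of the matrix are `(-1) ^ (i + j) / (b j - a i)`, and conjugation by a diagonal sign
matrix removes the signs. What remains is the Cauchy matrix of `a`, `b` with the entries mixing `S`
and its complement replaced by `0`.

For the full Cauchy matrix the determinant is `∏ (x q - x p) ^ (±1)` over all `p < q`, with exponent
`+1` for `p`, `q` of equal parity and `-1` otherwise (`cauchy_det_nat`). Apply this to the nodes with
those in `S` translated by `T`, and let `T → ∞` (`block_cauchy_det`). The mixed entries tend to `0`,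
and pairs inside `S` or inside its complement are unaffected. A mixed pair contributes
`(T * (ε + o(1))) ^ (±1)`, where `ε = 1` if the larger index is in `S` and `ε = -1` otherwise.
Because `S` is balanced, the total exponent of `T` is `0` (`exponent_sum_eq_zero`) and the product
of the signs `ε` is `1` (`sign_prod_eq_one`). No permutation of rows and columns into blocks is
needed.
-/

/-- The contribution of a pair of indices `p < q` to the Cauchy product: the difference
`x q - x p` when `p` and `q` have the same parity, and its inverse otherwise. -/
noncomputable def pairFactor (x : ℕ → ℝ) (p q : ℕ) : ℝ :=
  if (p + q) % 2 = 0 then x q - x p else (x q - x p)⁻¹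

lemma prod_range_two_mul (g : ℕ → ℝ) (n : ℕ) :
    ∏ p ∈ Finset.range (2 * n), g p = ∏ i : Fin n, (g (2 * i) * g (2 * i + 1)) := by
  induction n with
  | zero => simp
  | succ n ih =>
    rw [show 2 * (n + 1) = 2 * n + 1 + 1 by ring, Finset.prod_range_succ, Finset.prod_range_succ, ih,
      Fin.prod_univ_castSucc]
    simp [mul_assoc]

/-- Cauchy's determinant, with the two families of nodes interleaved as the even-indexed and the
odd-indexed terms of a single sequence. This removes every sign from the formula. The induction
eliminates the last column: the Schur complement of the bottom right entry is again a Cauchy matrix,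
with rows and columns rescaled. -/
lemma cauchy_det_nat (x : ℕ → ℝ) (n : ℕ)
    (hx : ∀ i < n, ∀ j < n, x (2 * i) ≠ x (2 * j + 1)) :
    Matrix.det (Matrix.of fun i j : Fin n => (x (2 * j + 1) - x (2 * i))⁻¹) =
      ∏ q ∈ Finset.range (2 * n), ∏ p ∈ Finset.range q, pairFactor x p q := by
  induction n with
  | zero => simp
  | succ n ih =>
    set C : Matrix (Fin (n + 1)) (Fin (n + 1)) ℝ :=
      Matrix.of fun i j => (x (2 * j + 1) - x (2 * i))⁻¹ with hC
    have hne : ∀ i j : Fin (n + 1), x (2 * j + 1) - x (2 * i) ≠ 0 := fun i j =>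
      sub_ne_zero.2 (hx i i.2 j j.2).symm
    have hnn : x (2 * n + 1) - x (2 * n) ≠ 0 := by simpa using hne (Fin.last n) (Fin.last n)
    have hni : ∀ i : Fin n, x (2 * n + 1) - x (2 * i) ≠ 0 := fun i => by
      simpa using hne i.castSucc (Fin.last n)
    have hnj : ∀ i : Fin n, x (2 * i + 1) - x (2 * n) ≠ 0 := fun i => by
      simpa using hne (Fin.last n) i.castSucc
    have hij : ∀ i j : Fin n, x (2 * j + 1) - x (2 * i) ≠ 0 := fun i j => by
      simpa using hne i.castSucc j.castSucc
    -- Clear the last column with the pivot in the last row.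
    set c : Fin (n + 1) → ℝ := fun i =>
      if i = Fin.last n then 0 else C i (Fin.last n) / C (Fin.last n) (Fin.last n) with hc
    set B : Matrix (Fin (n + 1)) (Fin (n + 1)) ℝ :=
      Matrix.of fun i j => C i j - c i * C (Fin.last n) j with hB
    have hdet : C.det = B.det := by
      refine Matrix.det_eq_of_forall_row_eq_smul_add_const c (Fin.last n) (by simp [hc]) ?_
      intro i j
      simp [hB, hc]
    have hB0 : ∀ i : Fin n, B i.castSucc (Fin.last n) = 0 := by
      intro i
      simp only [hB, hc, hC, Matrix.of_apply, Fin.castSucc_ne_last, if_false, Fin.val_last]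
      field_simp
      simp
    have hBl : B (Fin.last n) (Fin.last n) = (x (2 * n + 1) - x (2 * n))⁻¹ := by
      simp [hB, hc, hC]
    have hBB : B.submatrix Fin.castSucc Fin.castSucc = Matrix.of fun i j : Fin n =>
        ((x (2 * n) - x (2 * i)) / (x (2 * n + 1) - x (2 * i))) *
        (Matrix.of fun i j : Fin n => ((x (2 * n + 1) - x (2 * j + 1)) / (x (2 * n) - x (2 * j + 1))) *
          (Matrix.of fun i j : Fin n => (x (2 * j + 1) - x (2 * i))⁻¹) i j) i j := by
      ext i j
      have h1 := hni i
      have h2 := hnj j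
      have h3 := hij i j
      have h4 : x (2 * n) - x (2 * j + 1) ≠ 0 := by rw [← neg_sub]; exact neg_ne_zero.2 h2
      simp only [hB, hc, hC, Matrix.of_apply, Matrix.submatrix_apply, Fin.castSucc_ne_last, if_false,
        Fin.val_last, Fin.val_castSucc]
      field_simp
      ring
    rw [hdet, Matrix.det_succ_column B (Fin.last n), Fin.sum_univ_castSucc]
    simp only [hB0, hBl, mul_zero, zero_mul, Finset.sum_const_zero, zero_add, Fin.succAbove_last]
    rw [hBB, Matrix.det_mul_column, Matrix.det_mul_row, ih fun i hi j hj =>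
      hx i (by omega) j (by omega)]
    rw [show 2 * (n + 1) = 2 * n + 1 + 1 by ring, Finset.prod_range_succ, Finset.prod_range_succ,
      Finset.prod_range_succ (fun p => pairFactor x p (2 * n + 1)), 
      prod_range_two_mul (fun p => pairFactor x p (2 * n)),
      prod_range_two_mul (fun p => pairFactor x p (2 * n + 1))]
    have e1 : ∀ i : Fin n, pairFactor x (2 * i) (2 * n) = x (2 * n) - x (2 * i) := fun i =>
      if_pos (by omega)
    have e2 : ∀ i : Fin n, pairFactor x (2 * i + 1) (2 * n) = (x (2 * n) - x (2 * i + 1))⁻¹ :=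
      fun i => if_neg (by omega)
    have e3 : ∀ i : Fin n, pairFactor x (2 * i) (2 * n + 1) = (x (2 * n + 1) - x (2 * i))⁻¹ :=
      fun i => if_neg (by omega)
    have e4 : ∀ i : Fin n, pairFactor x (2 * i + 1) (2 * n + 1) = x (2 * n + 1) - x (2 * i + 1) :=
      fun i => if_pos (by omega)
    have e5 : pairFactor x (2 * n) (2 * n + 1) = (x (2 * n + 1) - x (2 * n))⁻¹ :=
      if_neg (by omega)
    simp only [e1, e2, e3, e4, e5, Finset.prod_mul_distrib, Finset.prod_div_distrib,
      Finset.prod_inv_distrib, Fin.val_last, ← two_mul, pow_mul]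
    simp
    ring

lemma two_mul_sum_lt {m : ℕ} (h : Fin m → Fin m → ℤ) (hs : ∀ p q, h p q = h q p) :
    2 * ∑ p ∈ Finset.univ.filter (fun p : Fin m × Fin m => p.1 < p.2), h p.1 p.2 =
      ∑ p, ∑ q, h p q - ∑ p, h p p := by
  have e : ∑ p : Fin m, ∑ q : Fin m, (if p < q then h p q else 0) =
      ∑ p : Fin m, ∑ q : Fin m, (if q < p then h p q else 0) := by
    rw [Finset.sum_comm]
    exact Finset.sum_congr rfl fun p _ => Finset.sum_congr rfl fun q _ => by rw [hs]
  have d : ∑ p, h p p = ∑ p : Fin m, ∑ q : Fin m, (if p = q then h p q else 0) := by simp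
  rw [Finset.sum_filter, Fintype.sum_prod_type, two_mul, d]
  nth_rw 2 [e]
  rw [eq_sub_iff_add_eq, ← Finset.sum_add_distrib, ← Finset.sum_add_distrib]
  refine Finset.sum_congr rfl fun p _ => ?_
  rw [← Finset.sum_add_distrib, ← Finset.sum_add_distrib]
  refine Finset.sum_congr rfl fun q _ => ?_
  rcases lt_trichotomy p q with h | h | h
  · simp [h, h.not_gt, h.ne]
  · simp [h]
  · simp [h, h.not_gt, h.ne']

/-- `cauchy_det_nat` with the product indexed by the pairs `p < q` in `Fin (2 * n)`. -/
lemma cauchy_det_fin (n : ℕ) (y : ℕ → ℝ)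
    (hx : ∀ i < n, ∀ j < n, y (2 * i) ≠ y (2 * j + 1)) :
    Matrix.det (Matrix.of fun i j : Fin n => (y (2 * j + 1) - y (2 * i))⁻¹) =
      ∏ p ∈ Finset.univ.filter (fun p : Fin (2 * n) × Fin (2 * n) => p.1 < p.2),
        pairFactor y p.1 p.2 := by
  rw [cauchy_det_nat y n hx, Finset.prod_filter, Fintype.prod_prod_type_right, Finset.prod_range]
  refine Finset.prod_congr rfl fun q _ => ?_
  have := Fin.prod_univ_eq_prod_range (fun p => if p < (q : ℕ) then pairFactor y p q else 1) (2 * n)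
  simp only [Fin.lt_def]
  rw [this, ← Finset.prod_filter]
  refine Finset.prod_congr ?_ fun _ _ => rfl
  ext p
  have := q.2
  simp
  omega

/-- Twice the sum equals, up to a vanishing diagonal, the sum over all ordered pairs, which is a
multiple of the alternating sum `∑ a ∈ S, (-1) ^ a`; balance makes the latter zero. This is why the
powers of the translation parameter cancel in `block_cauchy_det`. -/
lemma exponent_sum_eq_zero (n : ℕ) (S : Finset (Fin (2 * n)))
    (hbal : (S.filter fun a : Fin (2 * n) => (a : ℕ) % 2 = 0).card
          = (S.filter fun a : Fin (2 * n) => (a : ℕ) % 2 = 1).card) :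
    ∑ p ∈ Finset.univ.filter (fun p : Fin (2 * n) × Fin (2 * n) => p.1 < p.2) with
      ¬ (p.1 ∈ S ↔ p.2 ∈ S), (if ((p.1 : ℕ) + p.2) % 2 = 0 then (1 : ℤ) else -1) = 0 := by
  set g : Fin (2 * n) → ℤ := fun a => if a ∈ S then 1 else 0 with hg
  set s : Fin (2 * n) → ℤ := fun a => if (a : ℕ) % 2 = 0 then 1 else -1 with hs
  have h0 : ∑ a, s a * g a = 0 := by
    have : ∀ a, s a * g a = (if a ∈ S then (if (a : ℕ) % 2 = 0 then 1 else 0) else 0) -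
        (if a ∈ S then (if (a : ℕ) % 2 = 1 then 1 else 0) else 0) := by
      intro a
      simp only [hs, hg]
      rcases Nat.mod_two_eq_zero_or_one a with h | h <;> by_cases h' : a ∈ S <;> simp [h, h']
    simp_rw [this]
    rw [Finset.sum_sub_distrib, Finset.sum_ite_mem, Finset.sum_ite_mem, Finset.univ_inter,
      ← Finset.sum_filter, ← Finset.sum_filter]
    simp [hbal]
  have key := two_mul_sum_lt (fun p q => s p * s q * (g p + g q - 2 * g p * g q))
    (fun p q => by ring)
  have e1 : ∑ p, ∑ q, s p * s q * (g p + g q - 2 * g p * g q) =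
      2 * (∑ a, s a * g a) * (∑ a, s a) - 2 * (∑ a, s a * g a) * (∑ a, s a * g a) := by
    have : ∀ p q, s p * s q * (g p + g q - 2 * g p * g q) =
      (s p * g p) * s q + s p * (s q * g q) - 2 * ((s p * g p) * (s q * g q)) := fun p q => by ring
    simp_rw [this, Finset.sum_sub_distrib, Finset.sum_add_distrib, ← Finset.mul_sum,
      ← Finset.sum_mul]
    ring
  have e2 : ∑ p, s p * s p * (g p + g p - 2 * g p * g p) = 0 := by
    refine Finset.sum_eq_zero fun p _ => ?_
    simp only [hg]
    split_ifs <;> simp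
  rw [e1, e2, h0] at key
  rw [Finset.sum_filter]
  have e3 : ∀ p : Fin (2 * n) × Fin (2 * n), (if ¬ (p.1 ∈ S ↔ p.2 ∈ S) then
      (if ((p.1 : ℕ) + p.2) % 2 = 0 then (1 : ℤ) else -1) else 0) =
      s p.1 * s p.2 * (g p.1 + g p.2 - 2 * g p.1 * g p.2) := by
    intro p
    rw [Nat.add_mod]
    simp only [hs, hg]
    rcases Nat.mod_two_eq_zero_or_one p.1 with h | h <;>
    rcases Nat.mod_two_eq_zero_or_one p.2 with h' | h' <;>
    by_cases h1 : p.1 ∈ S <;> by_cases h2 : p.2 ∈ S <;> simp [h, h', h1, h2]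
  simp_rw [e3]
  linarith

/-- The number of inversions `p < q` with `p ∈ S`, `q ∉ S` is even when `S` is balanced: with
`2 * k` elements in `S`, it is `∑ a ∈ S, (2 * n - 1 - a)` minus the `k * (2 * k - 1)` pairs
inside `S`. -/
lemma sign_prod_eq_one (n : ℕ) (S : Finset (Fin (2 * n)))
    (hbal : (S.filter fun a : Fin (2 * n) => (a : ℕ) % 2 = 0).card
          = (S.filter fun a : Fin (2 * n) => (a : ℕ) % 2 = 1).card) :
    ∏ p ∈ Finset.univ.filter (fun p : Fin (2 * n) × Fin (2 * n) => p.1 < p.2) with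
      ¬ (p.1 ∈ S ↔ p.2 ∈ S), (if p.2 ∈ S then (1 : ℝ) else -1) = 1 := by
  set g : Fin (2 * n) → ℤ := fun a => if a ∈ S then 1 else 0 with hg
  set k : ℤ := ((S.filter fun a : Fin (2 * n) => (a : ℕ) % 2 = 1).card : ℤ) with hk
  set L := Finset.univ.filter (fun p : Fin (2 * n) × Fin (2 * n) => p.1 < p.2) with hL
  have hodd : ∑ a : Fin (2 * n), g a * ((a : ℕ) % 2 : ℕ) = k := by
    have : ∀ a : Fin (2 * n), g a * ((a : ℕ) % 2 : ℕ) =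
        (if a ∈ S then (if (a : ℕ) % 2 = 1 then 1 else 0) else 0) := by
      intro a
      simp only [hg]
      rcases Nat.mod_two_eq_zero_or_one a with h | h <;> simp [h]
    simp_rw [this]
    rw [Finset.sum_ite_mem, Finset.univ_inter, ← Finset.sum_filter]
    simp [hk]
  have heven : ∑ a : Fin (2 * n), g a * (1 - ((a : ℕ) % 2 : ℕ)) = k := by
    have : ∀ a : Fin (2 * n), g a * (1 - ((a : ℕ) % 2 : ℕ)) =
        (if a ∈ S then (if (a : ℕ) % 2 = 0 then 1 else 0) else 0) := by
      intro a
      simp only [hg]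
      rcases Nat.mod_two_eq_zero_or_one a with h | h <;> simp [h]
    simp_rw [this]
    rw [Finset.sum_ite_mem, Finset.univ_inter, ← Finset.sum_filter]
    simp [hk, hbal]
  have hsum : ∑ a, g a = 2 * k := by
    have : ∑ a, g a = ∑ a : Fin (2 * n), g a * ((a : ℕ) % 2 : ℕ) +
        ∑ a : Fin (2 * n), g a * (1 - ((a : ℕ) % 2 : ℕ)) := by
      rw [← Finset.sum_add_distrib]
      exact Finset.sum_congr rfl fun a _ => by ring
    rw [this, hodd, heven]
    ring
  -- `key` counts the pairs with both entries in `S`.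
  have key := two_mul_sum_lt (fun p q => g p * g q) (fun p q => by ring)
  have hsq : ∑ p, g p * g p = 2 * k := by
    rw [← hsum]
    refine Finset.sum_congr rfl fun p _ => ?_
    simp only [hg]
    split_ifs <;> simp
  simp_rw [← Finset.mul_sum, ← Finset.sum_mul] at key
  rw [hsum, hsq] at key
  -- The pairs whose smaller entry lies in `S` are counted by that entry.
  have hfst : ∑ p ∈ L, g p.1 = ∑ a : Fin (2 * n), g a * (2 * n - 1 - (a : ℕ) : ℤ) := by
    rw [hL, Finset.sum_filter, Fintype.sum_prod_type]
    refine Finset.sum_congr rfl fun a _ => ?_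
    simp only
    rw [← Finset.sum_filter, Finset.filter_lt_eq_Ioi, Finset.sum_const, Fin.card_Ioi, nsmul_eq_mul,
      mul_comm]
    have := a.2
    congr 1
    omega
  have hfst' : ∑ p ∈ L, g p.1 =
      (2 * n - 1) * (2 * k) - 2 * ∑ a : Fin (2 * n), g a * ((a : ℕ) / 2 : ℕ) - k := by
    rw [hfst, ← hsum, ← hodd, Finset.mul_sum, Finset.mul_sum, ← Finset.sum_sub_distrib,
      ← Finset.sum_sub_distrib]
    refine Finset.sum_congr rfl fun a _ => ?_
    have : ((a : ℕ) : ℤ) = 2 * ((a : ℕ) / 2 : ℕ) + ((a : ℕ) % 2 : ℕ) := by omega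
    rw [this]
    ring
  set M : ℕ := (L.filter fun p => p.1 ∈ S ∧ p.2 ∉ S).card with hM
  have hMeq : (M : ℤ) = ∑ p ∈ L, g p.1 - ∑ p ∈ L, g p.1 * g p.2 := by
    rw [hM, Finset.card_filter, ← Finset.sum_sub_distrib]
    push_cast
    refine Finset.sum_congr rfl fun p _ => ?_
    simp only [hg]
    by_cases h1 : p.1 ∈ S <;> by_cases h2 : p.2 ∈ S <;> simp [h1, h2]
  have hMeven : Even M := by
    have : Even (M : ℤ) := by
      refine ⟨(2 * n - 1) * k - ∑ a : Fin (2 * n), g a * ((a : ℕ) / 2 : ℕ) - k * k, ?_⟩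
      rw [hMeq, hfst']
      linarith
    exact_mod_cast this
  have : ∏ p ∈ L with ¬ (p.1 ∈ S ↔ p.2 ∈ S), (if p.2 ∈ S then (1 : ℝ) else -1) =
      ∏ p ∈ L, (if p.1 ∈ S ∧ p.2 ∉ S then (-1 : ℝ) else 1) := by
    rw [Finset.prod_filter]
    refine Finset.prod_congr rfl fun p _ => ?_
    by_cases h1 : p.1 ∈ S <;> by_cases h2 : p.2 ∈ S <;> simp [h1, h2]
  rw [this, ← Finset.prod_filter, Finset.prod_const]
  exact hMeven.neg_one_pow

open Filter Topology in
/-- The block version of the Cauchy determinant. Translating the nodes in `S` by `T` and letting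
`T → ∞` kills the entries that mix `S` with its complement, while in the Cauchy product the factors
of the mixed pairs contribute `1` in the limit. The set `R` is `S` seen inside `ℕ`. -/
lemma block_cauchy_det (n : ℕ) (x : ℕ → ℝ) (S : Finset (Fin (2 * n)))
    (hx : ∀ i < n, ∀ j < n, x (2 * i) ≠ x (2 * j + 1))
    (hbal : (S.filter fun a : Fin (2 * n) => (a : ℕ) % 2 = 0).card
          = (S.filter fun a : Fin (2 * n) => (a : ℕ) % 2 = 1).card) (R : Finset ℕ)
    (hR : ∀ a : Fin (2 * n), a ∈ S ↔ (a : ℕ) ∈ R) :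
    Matrix.det (Matrix.of fun i j : Fin n =>
      if (2 * (i : ℕ) ∈ R ↔ 2 * (j : ℕ) + 1 ∈ R) then (x (2 * j + 1) - x (2 * i))⁻¹ else 0) =
      ∏ p ∈ Finset.univ.filter (fun p : Fin (2 * n) × Fin (2 * n) => p.1 < p.2) with
        (p.1 ∈ S ↔ p.2 ∈ S), pairFactor x p.1 p.2 := by
  set L := Finset.univ.filter (fun p : Fin (2 * n) × Fin (2 * n) => p.1 < p.2) with hL
  set y : ℝ → ℕ → ℝ := fun T k => x k + if k ∈ R then T else 0 with hy
  have hsame : ∀ T a b, (a ∈ R ↔ b ∈ R) → y T b - y T a = x b - x a := by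
    intro T a b h
    simp [hy, h]
  have hcross : ∀ T a b, ¬ (a ∈ R ↔ b ∈ R) →
      y T b - y T a = (x b - x a) + T * (if b ∈ R then 1 else -1) := by
    intro T a b h
    by_cases h1 : a ∈ R <;> by_cases h2 : b ∈ R <;> simp [hy, h1, h2] at h ⊢ <;> ring
  have hlim1 : Tendsto (fun T => Matrix.det (Matrix.of fun i j : Fin n =>
      (y T (2 * j + 1) - y T (2 * i))⁻¹)) atTop (𝓝 (Matrix.det (Matrix.of fun i j : Fin n =>
      if (2 * (i : ℕ) ∈ R ↔ 2 * (j : ℕ) + 1 ∈ R) then (x (2 * j + 1) - x (2 * i))⁻¹ else 0))) := by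
    refine (Continuous.matrix_det continuous_id).continuousAt.tendsto.comp ?_
    refine tendsto_pi_nhds.2 fun i => tendsto_pi_nhds.2 fun j => ?_
    simp only [Matrix.of_apply]
    split_ifs with h
    · simp only [hsame _ _ _ h]
      exact tendsto_const_nhds
    · simp only [hcross _ _ _ h]
      split_ifs
      · refine tendsto_inv_atTop_zero.comp (tendsto_atTop_add_const_left _ _ ?_)
        simp only [mul_one]
        exact tendsto_id
      · refine tendsto_inv_atBot_zero.comp (tendsto_atBot_add_const_left _ _ ?_)
        simpa using tendsto_neg_atTop_atBot
  -- `G p T` is the factor of a mixed pair `p` divided by `T ^ (±1)`.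
  set G : Fin (2 * n) × Fin (2 * n) → ℝ → ℝ := fun p T =>
    if ((p.1 : ℕ) + p.2) % 2 = 0 then (x p.2 - x p.1) / T + (if p.2 ∈ S then 1 else -1)
    else ((x p.2 - x p.1) / T + (if p.2 ∈ S then 1 else -1))⁻¹ with hG
  have hGlim : ∀ p, Tendsto (G p) atTop (𝓝 (if p.2 ∈ S then 1 else -1)) := by
    intro p
    have h0 : Tendsto (fun T : ℝ => (x p.2 - x p.1) / T + (if p.2 ∈ S then 1 else -1)) atTop
        (𝓝 (if p.2 ∈ S then 1 else -1)) := by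
      simpa using (tendsto_const_nhds.div_atTop tendsto_id).add_const
        (if p.2 ∈ S then (1 : ℝ) else -1)
    by_cases hp : ((p.1 : ℕ) + p.2) % 2 = 0
    · simpa only [hG, hp, if_true] using h0
    · simp only [hG, hp, if_false]
      have := h0.inv₀ (by split_ifs <;> norm_num)
      convert this using 2
      split_ifs <;> norm_num
  have hlim2 : Tendsto (fun T => (∏ p ∈ L with (p.1 ∈ S ↔ p.2 ∈ S), pairFactor x p.1 p.2) *
      ∏ p ∈ L with ¬ (p.1 ∈ S ↔ p.2 ∈ S), G p T) atTop
      (𝓝 (∏ p ∈ L with (p.1 ∈ S ↔ p.2 ∈ S), pairFactor x p.1 p.2)) := by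
    have := (tendsto_finsetProd (L.filter fun p => ¬ (p.1 ∈ S ↔ p.2 ∈ S))
      fun p _ => hGlim p).const_mul (∏ p ∈ L with (p.1 ∈ S ↔ p.2 ∈ S), pairFactor x p.1 p.2)
    rwa [sign_prod_eq_one n S hbal, mul_one] at this
  refine tendsto_nhds_unique hlim1 (hlim2.congr' ?_)
  have hev : ∀ᶠ T in atTop, ∀ i j : Fin n, y T (2 * i) ≠ y T (2 * j + 1) := by
    refine eventually_all.2 fun i => eventually_all.2 fun j => ?_
    by_cases h : (2 * (i : ℕ) ∈ R ↔ 2 * (j : ℕ) + 1 ∈ R)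
    · refine Eventually.of_forall fun T => ?_
      have := hsame T _ _ h
      rw [ne_comm, ← sub_ne_zero, this, sub_ne_zero]
      exact (hx i i.2 j j.2).symm
    · filter_upwards [eventually_gt_atTop |x (2 * j + 1) - x (2 * i)|] with T hT
      rw [ne_comm, ← sub_ne_zero, hcross T _ _ h]
      have := abs_lt.1 hT
      split_ifs
      · intro h; linarith
      · intro h; linarith
  filter_upwards [hev, eventually_gt_atTop 0] with T hT hT0
  rw [cauchy_det_fin n (y T) fun i hi j hj => hT ⟨i, hi⟩ ⟨j, hj⟩,
    ← Finset.prod_filter_mul_prod_filter_not L (fun p => (p.1 ∈ S ↔ p.2 ∈ S))]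
  congr 1
  · refine Finset.prod_congr rfl fun p hp => ?_
    have h := (Finset.mem_filter.1 hp).2
    rw [hR, hR] at h
    simp only [pairFactor, hsame T _ _ h]
  · have hz := exponent_sum_eq_zero n S hbal
    have hpow : ∏ p ∈ L with ¬ (p.1 ∈ S ↔ p.2 ∈ S),
        T ^ (if ((p.1 : ℕ) + p.2) % 2 = 0 then (1 : ℤ) else -1) = 1 := by
      have hsumpow : ∀ (A : Finset (Fin (2 * n) × Fin (2 * n))) (f : Fin (2 * n) × Fin (2 * n) → ℤ),
          ∏ p ∈ A, T ^ f p = T ^ ∑ p ∈ A, f p := by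
        intro A f
        induction A using Finset.cons_induction with
        | empty => simp
        | cons a A ha ih => rw [Finset.prod_cons, Finset.sum_cons, zpow_add₀ hT0.ne', ih]
      rw [hsumpow, hz, zpow_zero]
    rw [← one_mul (∏ p ∈ L with ¬ (p.1 ∈ S ↔ p.2 ∈ S), G p T), ← hpow,
      ← Finset.prod_mul_distrib]
    refine Finset.prod_congr rfl fun p hp => ?_
    have h := (Finset.mem_filter.1 hp).2
    rw [hR, hR] at h
    have hfac : y T p.2 - y T p.1 =
        T * ((x p.2 - x p.1) / T + (if p.2 ∈ S then 1 else -1)) := by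
      rw [hcross T _ _ h, mul_add, mul_div_cancel₀ _ hT0.ne']
      simp only [hR]
    simp only [hG, pairFactor, hfac]
    split_ifs <;> simp [mul_comm]

/-
STATEMENT 17: Let n ≥ 1, x_1 < ⋯ < x_{2n} real, and S ⊆ {1,…,2n} a balanced subset
(equally many odd and even elements).  Define the n×n matrix A, rows indexed by the odd
elements i and columns by the even elements j, with A_{i,j} = 0 if exactly one of i,j is
in S, and A_{i,j} = (−1)^{(|i−j|−1)/2} / |x_j − x_i| otherwise.  Then
  det A = (Π_{i<j, i+j even, i,j both in S or both not} (x_j − x_i))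
        / (Π_{i<j, i+j odd,  i,j both in S or both not} (x_j − x_i)).

We use 0-based indices a : Fin (2n) for the 1-based labels a+1; "odd elements" are the
indices with a % 2 = 0, "even elements" those with a % 2 = 1.  The i-th odd element is
index 2i (label 2i+1) and the j-th even element is index 2j+1 (label 2j+2); the parity
of a sum of two labels (a+1)+(b+1) equals the parity of a+b.
-/
open Classical in
theorem balanced_subset_determinant (n : ℕ) (hn : 1 ≤ n)
    (x : Fin (2 * n) → ℝ) (hx : StrictMono x)
    (S : Finset (Fin (2 * n)))
    (hbal : (S.filter fun a => (a : ℕ) % 2 = 0).card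
          = (S.filter fun a => (a : ℕ) % 2 = 1).card) :
    Matrix.det (Matrix.of fun i j : Fin n =>
      if ((⟨2 * (i : ℕ), by have := i.isLt; omega⟩ : Fin (2 * n)) ∈ S ↔
          (⟨2 * (j : ℕ) + 1, by have := j.isLt; omega⟩ : Fin (2 * n)) ∈ S) then
        (-1 : ℝ) ^ ((((2 * (i : ℕ) + 1 : ℤ) - (2 * (j : ℕ) + 2 : ℤ)).natAbs - 1) / 2) /
          |x ⟨2 * (j : ℕ) + 1, by have := j.isLt; omega⟩ -
            x ⟨2 * (i : ℕ), by have := i.isLt; omega⟩|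
      else 0) =
    (∏ p ∈ Finset.univ.filter (fun p : Fin (2 * n) × Fin (2 * n) =>
        p.1 < p.2 ∧ ((p.1 : ℕ) + (p.2 : ℕ)) % 2 = 0 ∧ (p.1 ∈ S ↔ p.2 ∈ S)),
        (x p.2 - x p.1)) /
    (∏ p ∈ Finset.univ.filter (fun p : Fin (2 * n) × Fin (2 * n) =>
        p.1 < p.2 ∧ ((p.1 : ℕ) + (p.2 : ℕ)) % 2 = 1 ∧ (p.1 ∈ S ↔ p.2 ∈ S)),
        (x p.2 - x p.1)) := by
  -- In `hbal` the set `S` is coerced to a `Finset ℕ` by a monadic bind, which is the image of `S`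
  -- under the injection `Fin (2 * n) → ℕ`; cardinalities are unaffected.
  have hcoe : (do let a ← S; pure (a : ℕ) : Finset ℕ) = S.map Fin.valEmbedding := by
    ext k
    simp [Finset.bind_def, eq_comm]
  have hbal' : (S.filter fun a : Fin (2 * n) => (a : ℕ) % 2 = 0).card
      = (S.filter fun a : Fin (2 * n) => (a : ℕ) % 2 = 1).card := by
    rw [hcoe, Finset.filter_map, Finset.filter_map, Finset.card_map, Finset.card_map] at hbal
    exact hbal
  set X : ℕ → ℝ := fun k => if h : k < 2 * n then x ⟨k, h⟩ else 0 with hX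
  have hXx : ∀ k (h : k < 2 * n), x ⟨k, h⟩ = X k := fun k h => by simp [hX, h]
  have hXv : ∀ a : Fin (2 * n), x a = X a := fun a => hXx a a.2
  set R : Finset ℕ := S.map Fin.valEmbedding with hRdef
  have hR : ∀ a : Fin (2 * n), a ∈ S ↔ (a : ℕ) ∈ R := fun a => by
    simp [hRdef, Fin.val_inj]
  have hXlt : ∀ a b, a < b → b < 2 * n → X a < X b := fun a b hab hb => by
    rw [← hXx a (hab.trans hb), ← hXx b hb]
    exact hx (by simpa using hab)
  have hblock := block_cauchy_det n X S (fun i hi j hj => by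
    rcases lt_or_gt_of_ne (show 2 * i ≠ 2 * j + 1 by omega) with h | h
    · exact (hXlt _ _ h (by omega)).ne
    · exact (hXlt _ _ h (by omega)).ne') hbal' R hR
  have hsplit : ∏ p ∈ Finset.univ.filter (fun p : Fin (2 * n) × Fin (2 * n) => p.1 < p.2) with
        (p.1 ∈ S ↔ p.2 ∈ S), pairFactor X p.1 p.2 =
    (∏ p ∈ Finset.univ.filter (fun p : Fin (2 * n) × Fin (2 * n) =>
        p.1 < p.2 ∧ ((p.1 : ℕ) + (p.2 : ℕ)) % 2 = 0 ∧ (p.1 ∈ S ↔ p.2 ∈ S)),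
        (x p.2 - x p.1)) /
    (∏ p ∈ Finset.univ.filter (fun p : Fin (2 * n) × Fin (2 * n) =>
        p.1 < p.2 ∧ ((p.1 : ℕ) + (p.2 : ℕ)) % 2 = 1 ∧ (p.1 ∈ S ↔ p.2 ∈ S)),
        (x p.2 - x p.1)) := by
    rw [Finset.filter_filter, Finset.prod_filter, Finset.prod_filter, Finset.prod_filter,
      ← Finset.prod_div_distrib]
    refine Finset.prod_congr rfl fun p _ => ?_
    rw [hXv, hXv]
    by_cases h1 : p.1 < p.2 <;> by_cases h2 : (p.1 ∈ S ↔ p.2 ∈ S) <;>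
      rcases Nat.mod_two_eq_zero_or_one ((p.1 : ℕ) + p.2) with h3 | h3 <;>
      simp [pairFactor, h1, h2, h3]
  rw [← hsplit, ← hblock]
  -- The entry signs are `(-1) ^ (i + j)`, once the sign of `x j - x i` is absorbed; conjugation by
  -- the diagonal matrix of the `(-1) ^ i` removes them.
  set D : Matrix (Fin n) (Fin n) ℝ := Matrix.of fun i j : Fin n =>
      if (2 * (i : ℕ) ∈ R ↔ 2 * (j : ℕ) + 1 ∈ R) then (X (2 * j + 1) - X (2 * i))⁻¹ else 0 with hD
  have hconj : D.det = (Matrix.of fun i j : Fin n => (-1 : ℝ) ^ (i : ℕ) *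
      (Matrix.of fun i j : Fin n => (-1 : ℝ) ^ (j : ℕ) * D i j) i j).det := by
    rw [Matrix.det_mul_column, Matrix.det_mul_row, ← mul_assoc, ← Finset.prod_mul_distrib]
    simp [← mul_pow]
  rw [hconj]
  congr 1
  ext i j
  have hi := i.2
  have hj := j.2
  simp only [Matrix.of_apply, hD, hR, hXx]
  split_ifs with h
  · rcases le_or_gt (i : ℕ) j with hij | hij
    · obtain ⟨d, hd⟩ := Nat.exists_eq_add_of_le hij
      have hpos := hXlt (2 * i) (2 * j + 1) (by omega) (by omega)
      rw [abs_of_pos (by linarith),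
        show (((2 * (i : ℕ) + 1 : ℤ) - (2 * (j : ℕ) + 2 : ℤ)).natAbs - 1) / 2 = d by omega,
        show (j : ℕ) = i + d from hd, pow_add, div_eq_mul_inv, ← mul_assoc, ← mul_assoc, ← mul_pow]
      simp
    · obtain ⟨d, hd⟩ := Nat.exists_eq_add_of_lt hij
      have hpos := hXlt (2 * j + 1) (2 * i) (by omega) (by omega)
      rw [abs_of_neg (by linarith),
        show (((2 * (i : ℕ) + 1 : ℤ) - (2 * (j : ℕ) + 2 : ℤ)).natAbs - 1) / 2 = d by omega,
        show (i : ℕ) = j + d + 1 from hd, pow_succ, pow_add, div_eq_mul_inv, inv_neg]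
      have h1 : ((-1 : ℝ) ^ (j : ℕ)) * (-1) ^ (j : ℕ) = 1 := by simp [← mul_pow]
      linear_combination (-1) ^ d * (X (2 * j + 1) - X (2 * (j + d + 1)))⁻¹ * h1
  · simp
end

section
/- Let G be a finite connected graph with positive real edge weights and n ≥ 1 distinct distinguished vertices (nodes) labeled 1,…,n, and let σ be a partition of {1,…,n} with parts enumerated as p_1,…,p_k. Let S be the k×n matrix with S_{a,i} = 1 if i ∈ p_a and S_{a,i} = 0 otherwise. Then Z_{G_σ}(tree) = Z(uncrossing) · det M̃, where M̃ is the (k−1)×(k−1) matrix obtained from S Λ Sᵀ by deleting the last row and last column (for k = 1 the empty determinant is 1). In particular, Z_{G_σ}(tree)/Z(uncrossing) is a polynomial with integer coefficients in the entries L_{i,j} = −Λ_{i,j}. -/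
/-!
Both sides are determinants of reduced Laplacians. Let `π : V → Option ι` be a surjection, viewed
as a projection of the vertices onto a quotient with root `none`, and let `P` be the 0-1 matrix of
its non-root fibres. The weighted matrix-tree theorem `matrix_tree` says that `det (P Δ Pᵀ)` is the
weighted sum of the edge sets with `|ι|` elements that connect the quotient, i.e. of its spanning
trees. It follows from the factorization `P Δ Pᵀ = N W Nᵀ`, with `N` the reduced incidence matrix,
and Cauchy–Binet (`det_mul_diagonal_mul_transpose`), once the maximal minors of `N` are known to be
`±1` on connecting edge sets and `0` on all others (`det_incMat_sq`): the columns of a connecting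
set span `ℤ^ι`, so its minor is a unit of `ℤ`; for any other set the indicator of the classes not
joined to the root is a left null vector.

Take `π` to be injective on the inner vertices and to glue the nodes along `σ`, the last part being
the root. Then `P Δ Pᵀ` has the block form `[[K, Bᵀ S'ᵀ], [S' B, S' A S'ᵀ]]`, where `S'` is `S`
without its last row, and the Schur complement formula (`det_schur`) gives
`det K * det (S' Λ S'ᵀ)`. Gluing all nodes to the root instead gives `det K`, and this is
`Z(uncrossing)` because uncrossing groves are the spanning trees of the graph with all nodes
identified (`uncrossing_iff`). Invertibility of `K` comes from the energy argument of
`det_reduced_ne_zero`, which uses that `G` is connected and has at least one node.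
-/

section Grove

variable {V : Type} [Fintype V] [DecidableEq V] {n : ℕ}

def groveGraph (F : Finset (Sym2 V)) : SimpleGraph V :=
  SimpleGraph.fromEdgeSet (F : Set (Sym2 V))

/-- A grove: an acyclic edge set F ⊆ E(G) such that every connected component of (V,F)
contains at least one node. -/
def IsGrove (G : SimpleGraph V) (node : Fin n → V) (F : Finset (Sym2 V)) : Prop :=
  (F : Set (Sym2 V)) ⊆ G.edgeSet ∧ (groveGraph F).IsAcyclic ∧
    ∀ v : V, ∃ i : Fin n, (groveGraph F).Reachable v (node i)

/-- The node partition induced by a grove: i ~ j iff node i, node j are in the same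
component. -/
def connSetoid (node : Fin n → V) (F : Finset (Sym2 V)) : Setoid (Fin n) :=
  ⟨fun i j => (groveGraph F).Reachable (node i) (node j),
   ⟨fun _ => SimpleGraph.Reachable.refl _, fun h => h.symm, fun h h' => h.trans h'⟩⟩

-- Z(τ): the weighted sum of groves of node-connection type τ.
-- Note: Z(tree) = Zgrove G w node ⊤ and Z(uncrossing) = Zgrove G w node ⊥.
open Classical in
noncomputable def Zgrove (G : SimpleGraph V) (w : Sym2 V → ℝ) (node : Fin n → V)
    (τ : Setoid (Fin n)) : ℝ :=
  ∑ F ∈ Finset.univ.filter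
      (fun F : Finset (Sym2 V) => IsGrove G node F ∧ connSetoid node F = τ),
    ∏ e ∈ F, w e

end Grove

section Response

variable {V : Type} [Fintype V] [DecidableEq V] {n : ℕ}

-- The weighted Laplacian of (G, w).
open Classical in
noncomputable def lapMatrix' (G : SimpleGraph V) (w : Sym2 V → ℝ) : Matrix V V ℝ :=
  fun u v =>
    if u = v then ∑ x : V, (if G.Adj u x then w s(u, x) else 0)
    else -(if G.Adj u v then w s(u, v) else 0)

/-- The inner (non-node) vertices. -/
def InnerVx (node : Fin n → V) : Type := {v : V // ∀ i : Fin n, node i ≠ v}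

noncomputable instance (node : Fin n → V) : Fintype (InnerVx node) :=
  Subtype.fintype _

instance (node : Fin n → V) : DecidableEq (InnerVx node) :=
  Subtype.instDecidableEq

/-- The response matrix Λ = A − B K⁻¹ Bᵀ of (G, nodes), where Δ = [[A,B],[Bᵀ,K]] is the
block decomposition of the weighted Laplacian with the nodes first. -/
noncomputable def responseMatrix (G : SimpleGraph V) (w : Sym2 V → ℝ)
    (node : Fin n → V) : Matrix (Fin n) (Fin n) ℝ :=
  let Δ := lapMatrix' G w
  let A : Matrix (Fin n) (Fin n) ℝ := Matrix.of fun i j => Δ (node i) (node j)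
  let B : Matrix (Fin n) (InnerVx node) ℝ := Matrix.of fun i u => Δ (node i) u.val
  let Bt : Matrix (InnerVx node) (Fin n) ℝ := Matrix.of fun u j => Δ u.val (node j)
  let K : Matrix (InnerVx node) (InnerVx node) ℝ := Matrix.of fun u v => Δ u.val v.val
  A - B * K⁻¹ * Bt

end Response

section Glue

variable {V : Type} [Fintype V] [DecidableEq V] {n : ℕ}

/-- The equivalence relation on V generated by the edges of F. -/
def edgeSetoid (F : Finset (Sym2 V)) : Setoid V :=
  Relation.EqvGen.setoid fun u v => s(u, v) ∈ F

/-- The equivalence relation on V generated by identifying node i with node j whenever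
σ relates i and j. -/
def glueSetoid (node : Fin n → V) (σ : Setoid (Fin n)) : Setoid V :=
  Relation.EqvGen.setoid fun u v => ∃ i j : Fin n, σ i j ∧ node i = u ∧ node j = v

/-- F ⊆ E(G) projects to a spanning tree of the glued graph G_σ: the projected graph is
connected and the number of edges is one less than the number of glued vertices. -/
def IsGluedSpanningTree (G : SimpleGraph V) (node : Fin n → V) (σ : Setoid (Fin n))
    (F : Finset (Sym2 V)) : Prop :=
  (F : Set (Sym2 V)) ⊆ G.edgeSet ∧
    F.card + 1 = Nat.card (Quotient (glueSetoid node σ)) ∧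
    glueSetoid node σ ⊔ edgeSetoid F = ⊤

-- Z_{G_σ}(tree): the weighted sum of spanning trees of G_σ.
open Classical in
noncomputable def ZgluedTree (G : SimpleGraph V) (w : Sym2 V → ℝ) (node : Fin n → V)
    (σ : Setoid (Fin n)) : ℝ :=
  ∑ F ∈ Finset.univ.filter (fun F : Finset (Sym2 V) => IsGluedSpanningTree G node σ F),
    ∏ e ∈ F, w e

-- The 0-1 matrix S of a partition σ whose parts are enumerated by e : Fin k ≃ Quotient σ:
-- S_{a,i} = 1 iff i lies in the part e a.
open Classical in
noncomputable def partsMatrix {k : ℕ} (σ : Setoid (Fin n)) (e : Fin k ≃ Quotient σ) :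
    Matrix (Fin k) (Fin n) ℝ :=
  Matrix.of fun a i => if Quotient.mk σ i = e a then 1 else 0

end Glue

section Helpers

set_option linter.unusedSectionVars false

open Matrix

/-! ### A Cauchy–Binet formula -/

/-- Cauchy–Binet for `A * diagonal w * Aᵀ`, in the form needed here: `c F` is the common value
of the squared maximal minor of `A` on the column set `F`, for any enumeration of `F`. -/
lemma det_mul_diagonal_mul_transpose {ι E : Type} [Fintype ι] [DecidableEq ι] [Fintype E]
    [DecidableEq E] (A : Matrix ι E ℝ) (w : E → ℝ) (c : Finset E → ℝ)
    (hc : ∀ g : ι → E, Function.Injective g →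
      (A.submatrix id g).det ^ 2 = c (Finset.univ.image g)) :
    (A * diagonal w * Aᵀ).det =
      ∑ F ∈ Finset.powersetCard (Fintype.card ι) Finset.univ, (∏ e ∈ F, w e) * c F := by
  classical
  set T : (ι → E) → ℝ := fun f =>
    (∏ i, A i (f i)) * (∏ i, w (f i)) * (A.submatrix id f).det with hT
  have h1 : (A * diagonal w * Aᵀ).det = ∑ f : ι → E, T f := by
    have hrow : (A * diagonal w * Aᵀ) = fun i => ∑ e : E, (A i e * w e) • (fun j => A j e) := by
      ext i j
      rw [Matrix.mul_apply]
      simp [Matrix.mul_diagonal, Finset.sum_apply]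
    rw [hrow]
    change Matrix.detRowAlternating.toMultilinearMap (fun i => _) = _
    rw [MultilinearMap.map_sum]
    refine Finset.sum_congr rfl fun f _ => ?_
    rw [MultilinearMap.map_smul_univ, hT]
    simp only [smul_eq_mul, Finset.prod_mul_distrib]
    congr 1
    rw [← Matrix.det_transpose]
    rfl
  have h2 : ∀ f : ι → E, ¬ Function.Injective f → T f = 0 := by
    intro f hf
    simp only [Function.Injective, not_forall] at hf
    obtain ⟨a, b, hab, hne⟩ := hf
    have : (A.submatrix id f).det = 0 :=
      Matrix.det_zero_of_column_eq hne (fun k => by simp [hab])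
    simp [hT, this]
  rw [h1]
  have h3 : ∑ f : ι → E, T f = ∑ f ∈ Finset.univ.filter
      (fun f : ι → E => Function.Injective f), T f := by
    symm
    apply Finset.sum_subset (Finset.filter_subset _ _)
    intro f _ hf
    exact h2 f (by simpa using hf)
  rw [h3, ← Finset.sum_fiberwise_of_maps_to
    (t := Finset.powersetCard (Fintype.card ι) (Finset.univ : Finset E))
    (g := fun f : ι → E => Finset.univ.image f)]
  · refine Finset.sum_congr rfl fun F hF => ?_
    rw [Finset.mem_powersetCard] at hF
    have hcard : Fintype.card ι = Fintype.card F := by simp [hF.2]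
    let g : ι ≃ F := Fintype.equivOfCardEq hcard
    have hginj : Function.Injective (fun i => (g i : E)) :=
      fun a b h => g.injective (Subtype.ext h)
    have hgim : Finset.univ.image (fun i => (g i : E)) = F := by
      ext x
      simp only [Finset.mem_image, Finset.mem_univ, true_and]
      exact ⟨fun ⟨i, hi⟩ => hi ▸ (g i).2, fun hx => ⟨g.symm ⟨x, hx⟩, by simp⟩⟩
    -- the injections with image `F` are exactly the `g ∘ τ`
    have hsum : ∑ f ∈ (Finset.univ.filter (fun f : ι → E => Function.Injective f)).filter
        (fun f => Finset.univ.image f = F), T f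
        = ∑ τ : Equiv.Perm ι, T (fun i => (g (τ i) : E)) := by
      symm
      refine Finset.sum_bij (fun τ _ => fun i => (g (τ i) : E)) ?_ ?_ ?_ ?_
      · intro τ _
        simp only [Finset.mem_filter, Finset.mem_univ, true_and]
        refine ⟨hginj.comp τ.injective, ?_⟩
        refine Eq.trans ?_ hgim
        ext x
        simp only [Finset.mem_image, Finset.mem_univ, true_and]
        exact ⟨fun ⟨i, hi⟩ => ⟨τ i, hi⟩, fun ⟨i, hi⟩ => ⟨τ.symm i, by simpa using hi⟩⟩
      · intro τ _ τ' _ h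
        ext i
        exact hginj (congrFun h i)
      · intro f hf
        simp only [Finset.mem_filter, Finset.mem_univ, true_and] at hf
        obtain ⟨hfi, hfF⟩ := hf
        have hmem : ∀ i, f i ∈ F := fun i => hfF ▸ Finset.mem_image_of_mem f (Finset.mem_univ i)
        have hinj : Function.Injective (fun i => g.symm ⟨f i, hmem i⟩) := by
          intro a b h
          exact hfi (congrArg Subtype.val (g.symm.injective h))
        refine ⟨Equiv.ofBijective _ (Finite.injective_iff_bijective.mp hinj),
          Finset.mem_univ _, ?_⟩
        funext i
        simp
      · intros; rfl
    rw [hsum]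
    have hw : ∏ i, w (g i) = ∏ e ∈ F, w e := by
      rw [← Finset.prod_image (s := Finset.univ) (g := fun i => (g i : E)) (f := w)
        (fun a _ b _ h => hginj h), hgim]
    have hterm : ∀ τ : Equiv.Perm ι, T (fun i => (g (τ i) : E)) =
        ((Equiv.Perm.sign τ : ℤ) : ℝ) * (∏ i, A i (g (τ i))) *
          ((∏ e ∈ F, w e) * (A.submatrix id (fun i => (g i : E))).det) := by
      intro τ
      have hd : (A.submatrix id (fun i => (g (τ i) : E))).det =
          ((Equiv.Perm.sign τ : ℤ) : ℝ) * (A.submatrix id (fun i => (g i : E))).det :=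
        Matrix.det_permute' τ (A.submatrix id (fun i => (g i : E)))
      have hw' : ∏ i, w (g (τ i)) = ∏ e ∈ F, w e := by
        rw [← hw]
        exact Equiv.prod_comp τ (fun i => w (g i))
      simp only [hT, hd, hw']
      ring
    rw [Finset.sum_congr rfl (fun τ _ => hterm τ), ← Finset.sum_mul]
    have hdet : ∑ τ : Equiv.Perm ι, ((Equiv.Perm.sign τ : ℤ) : ℝ) * (∏ i, A i (g (τ i))) =
        (A.submatrix id (fun i => (g i : E))).det := by
      rw [← Matrix.det_transpose, Matrix.det_apply']
      rfl
    have := hc _ hginj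
    rw [hgim] at this
    rw [hdet, ← this]
    ring
  · intro f hf
    simp only [Finset.mem_filter, Finset.mem_univ, true_and] at hf
    simp [Finset.mem_powersetCard, Finset.card_image_of_injective _ hf]

/-! ### Minors of the reduced incidence matrix -/

/-- Basis vector of `ℤ^ι` attached to a point of `Option ι`; the root `none` gives `0`. -/
def rootVec {ι : Type} [DecidableEq ι] (o : Option ι) : ι → ℤ :=
  fun a => if o = some a then 1 else 0

/-- Reduced incidence matrix of the complete graph on `V` after projecting the vertices along
`π : V → Option ι` and deleting the row of the root `none`. Each edge is oriented by the choice
`Quot.out` of an ordered representative. -/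
noncomputable def incMat {V ι : Type} [DecidableEq ι] (π : V → Option ι) :
    Matrix ι (Sym2 V) ℤ :=
  fun a e => rootVec (π (Quot.out e).1) a - rootVec (π (Quot.out e).2) a

lemma sym2_out {V : Type} (e : Sym2 V) : s((Quot.out e).1, (Quot.out e).2) = e :=
  Quot.out_eq e

/-- The edges of `F` connect the quotient of `V` by the fibres of `π`. -/
def IsConn {V ι : Type} (π : V → Option ι) (F : Finset (Sym2 V)) : Prop :=
  Setoid.ker π ⊔ edgeSetoid F = ⊤

lemma edgeSetoid_le {V : Type} (F : Finset (Sym2 V)) (s : Setoid V)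
    (h : ∀ u v, s(u, v) ∈ F → s u v) : edgeSetoid F ≤ s :=
  Setoid.eqvGen_le h

lemma edgeSetoid_of_mem {V : Type} {F : Finset (Sym2 V)} {u v : V} (h : s(u, v) ∈ F) :
    edgeSetoid F u v := Relation.EqvGen.rel _ _ h

/-- If the edges of `F` connect the quotient, their incidence columns span `ℤ^ι`. -/
lemma span_of_isConn {V ι : Type} [Fintype ι] [DecidableEq ι] (π : V → Option ι)
    (hπ : Function.Surjective π) (F : Finset (Sym2 V)) (h : IsConn π F)
    (M : Submodule ℤ (ι → ℤ)) (hM : ∀ e ∈ F, (fun a => incMat π a e) ∈ M) : M = ⊤ := by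
  let s : Setoid V :=
    ⟨fun u v => rootVec (π u) - rootVec (π v) ∈ M,
      ⟨fun u => by simp, fun {u v} h => by simpa using M.neg_mem h,
       fun {u v x} h h' => by simpa using M.add_mem h h'⟩⟩
  have hs : s = ⊤ := by
    rw [eq_top_iff, ← h]
    refine sup_le ?_ (edgeSetoid_le F s ?_)
    · intro u v huv
      have huv : π u = π v := huv
      change rootVec (π u) - rootVec (π v) ∈ M
      simp [huv]
    · intro u v huv
      have h1 := hM _ huv
      have h2 := sym2_out s(u, v)
      rw [Sym2.eq_iff] at h2
      have h3 : rootVec (π (Quot.out s(u, v)).1) - rootVec (π (Quot.out s(u, v)).2) ∈ M := h1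
      change rootVec (π u) - rootVec (π v) ∈ M
      rcases h2 with ⟨ha, hb⟩ | ⟨ha, hb⟩
      · rwa [ha, hb] at h3
      · rw [ha, hb] at h3
        simpa using M.neg_mem h3
  obtain ⟨r, hr⟩ := hπ none
  have hmem : ∀ a : ι, Pi.single a (1 : ℤ) ∈ M := by
    intro a
    obtain ⟨v, hv⟩ := hπ (some a)
    have h1 : s v r := by rw [hs]; trivial
    have h2 : rootVec (π v) - rootVec (π r) ∈ M := h1
    convert h2 using 1
    ext b
    simp [rootVec, hv, hr, Pi.single_apply, eq_comm]
  rw [eq_top_iff]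
  intro x _
  rw [pi_eq_sum_univ' x]
  refine M.sum_mem fun a _ => M.smul_mem _ ?_
  convert hmem a using 1

lemma card_le_of_isConn {V ι : Type} [Fintype ι] [DecidableEq ι] (π : V → Option ι)
    (hπ : Function.Surjective π) (F : Finset (Sym2 V)) (h : IsConn π F) :
    Fintype.card ι ≤ F.card := by
  let N : Matrix ι F ℤ := fun a e => incMat π a e.1
  have hr : LinearMap.range N.mulVecLin = ⊤ := by
    apply span_of_isConn π hπ F h
    intro e he
    rw [Matrix.range_mulVecLin]
    exact Submodule.subset_span ⟨⟨e, he⟩, rfl⟩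
  have := card_le_of_surjective ℤ N.mulVecLin (LinearMap.range_eq_top.mp hr)
  simpa using this

/-- Every maximal minor of the reduced incidence matrix is `±1` or `0`, according to whether its
columns connect the quotient. -/
lemma det_incMat_sq {V ι : Type} [DecidableEq V] [Fintype ι] [DecidableEq ι] (π : V → Option ι)
    (hπ : Function.Surjective π) (g : ι → Sym2 V) [Decidable (IsConn π (Finset.univ.image g))] :
    ((incMat π).submatrix id g).det ^ 2 = if IsConn π (Finset.univ.image g) then 1 else 0 := by
  split_ifs with h
  · have hr : LinearMap.range ((incMat π).submatrix id g).mulVecLin = ⊤ := by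
      apply span_of_isConn π hπ _ h
      intro e he
      obtain ⟨i, -, rfl⟩ := Finset.mem_image.mp he
      rw [Matrix.range_mulVecLin]
      exact Submodule.subset_span ⟨i, rfl⟩
    have hu : IsUnit ((incMat π).submatrix id g) := by
      rw [← Matrix.mulVec_surjective_iff_isUnit]
      exact LinearMap.range_eq_top.mp hr
    rw [Matrix.isUnit_iff_isUnit_det, Int.isUnit_iff] at hu
    rcases hu with h | h <;> simp [h]
  · rw [sq_eq_zero_iff, ← Matrix.exists_vecMul_eq_zero_iff]
    classical
    obtain ⟨r, hr⟩ := hπ none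
    set s := Setoid.ker π ⊔ edgeSetoid (Finset.univ.image g) with hs
    -- the indicator of the classes not joined to the root is a left null vector
    choose q hq using fun a : ι => hπ (some a)
    let x : ι → ℤ := fun a => if s (q a) r then 0 else 1
    have hker : ∀ u v, π u = π v → s u v := fun u v huv =>
      (le_sup_left : Setoid.ker π ≤ s) huv
    have hx : ∀ v, ∑ a, x a * rootVec (π v) a = if s v r then 0 else 1 := by
      intro v
      cases hv : π v with
      | none =>
        have : s v r := hker _ _ (hv.trans hr.symm)
        simp [rootVec, this]
      | some a =>
        have h1 : s (q a) v := hker _ _ ((hq a).trans hv.symm)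
        have h2 : s (q a) r ↔ s v r :=
          ⟨fun h => s.trans (s.symm h1) h, fun h => s.trans h1 h⟩
        simp [rootVec, x, h2]
    refine ⟨x, ?_, ?_⟩
    · intro hx0
      apply h
      change s = ⊤
      have hall : ∀ v, s v r := by
        intro v
        by_contra hv
        have := hx v
        simp [hx0, hv] at this
      rw [eq_top_iff]
      intro u v _
      exact s.trans (hall u) (s.symm (hall v))
    · ext i
      simp only [Matrix.vecMul, dotProduct, Matrix.submatrix_apply, id, incMat, mul_sub,
        Finset.sum_sub_distrib, hx, Pi.zero_apply]
      have he : s (Quot.out (g i)).1 (Quot.out (g i)).2 := by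
        apply (le_sup_right : edgeSetoid (Finset.univ.image g) ≤ s)
        apply edgeSetoid_of_mem
        rw [sym2_out]
        exact Finset.mem_image_of_mem g (Finset.mem_univ i)
      have h2 : s (Quot.out (g i)).1 r ↔ s (Quot.out (g i)).2 r :=
        ⟨fun h => s.trans (s.symm he) h, fun h => s.trans he h⟩
      simp [h2]

open Classical in
/-- Edge weights extended by zero to all unordered pairs. -/
noncomputable def extWeight {V : Type} (G : SimpleGraph V) (w : Sym2 V → ℝ) (e : Sym2 V) : ℝ :=
  if e ∈ G.edgeSet then w e else 0

/-- The 0-1 matrix collecting the vertices in each non-root fibre of `π`. -/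
def fibreMat {V ι : Type} [DecidableEq ι] (π : V → Option ι) : Matrix ι V ℝ :=
  fun a v => if π v = some a then 1 else 0

/-- The full oriented incidence matrix. -/
noncomputable def fullInc (V : Type) [DecidableEq V] : Matrix V (Sym2 V) ℝ :=
  fun v e => (if (Quot.out e).1 = v then 1 else 0) - (if (Quot.out e).2 = v then 1 else 0)

/-! ### The matrix-tree theorem for quotient graphs -/

variable {V : Type} [Fintype V] [DecidableEq V]

lemma lap_eq (G : SimpleGraph V) (w : Sym2 V → ℝ) :
    lapMatrix' G w = fullInc V * diagonal (extWeight G w) * (fullInc V)ᵀ := by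
  classical
  ext u v
  rw [Matrix.mul_apply]
  simp only [Matrix.mul_diagonal, Matrix.transpose_apply]
  unfold lapMatrix'
  have hdiag : ∀ x : V, extWeight G w s(x, x) = 0 := by intro x; simp [extWeight]
  split_ifs with huv hadj
  · subst huv
    have h1 : ∀ e : Sym2 V, fullInc V u e * extWeight G w e * fullInc V u e =
        if u ∈ e then extWeight G w e else 0 := by
      intro e
      have he := sym2_out e
      set a := (Quot.out e).1 with ha
      set b := (Quot.out e).2 with hb
      by_cases hab : a = b
      · rw [← he, hab, hdiag]; simp
      · have hmem : u ∈ e ↔ (a = u ∨ b = u) := by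
          rw [← he, Sym2.mem_iff]; simp [eq_comm]
        simp only [fullInc, ← ha, ← hb, hmem]
        by_cases h1 : a = u
        · have h2 : b ≠ u := fun h => hab (h1.trans h.symm)
          simp [h1, h2]
        · by_cases h2 : b = u <;> simp [h1, h2]
    rw [Finset.sum_congr rfl (fun e _ => h1 e), ← Finset.sum_filter (fun e : Sym2 V => u ∈ e)]
    have h2 : (Finset.univ.filter fun e : Sym2 V => u ∈ e) =
        Finset.univ.image (fun x => s(u, x)) := by
      ext e
      simp [Sym2.mem_iff_exists, eq_comm]
    rw [h2, Finset.sum_image]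
    · simp [extWeight]
    · intro x _ y _ h
      exact Sym2.congr_right.mp h
  · rw [Finset.sum_eq_single s(u, v)]
    · have he := sym2_out s(u, v)
      rw [Sym2.eq_iff] at he
      have hw : extWeight G w s(u, v) = w s(u, v) := by simp [extWeight, hadj]
      rw [hw]
      rcases he with ⟨h1, h2⟩ | ⟨h1, h2⟩ <;> simp [fullInc, h1, h2, huv, Ne.symm huv]
    · intro e _ hne
      have he := sym2_out e
      by_cases hab : (Quot.out e).1 = (Quot.out e).2
      · simp [fullInc, hab]
      · simp only [fullInc]
        by_contra hcon
        apply hne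
        rw [← he]
        grind [Sym2.eq_swap]
    · simp
  · symm
    rw [neg_zero]
    apply Finset.sum_eq_zero
    intro e _
    have he := sym2_out e
    by_contra hcon
    have hmem : e = s(u, v) := by
      rw [← he]
      simp only [fullInc] at hcon
      grind [Sym2.eq_swap]
    apply hcon
    simp [extWeight, hmem, hadj]

lemma fibreMat_mul_fullInc {ι : Type} [DecidableEq ι] (π : V → Option ι) :
    fibreMat π * fullInc V = (incMat π).map (Int.cast : ℤ → ℝ) := by
  ext a e
  simp [Matrix.mul_apply, fibreMat, fullInc, incMat, rootVec, mul_sub, Finset.sum_sub_distrib]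

lemma reduced_lap {ι : Type} [DecidableEq ι] (π : V → Option ι)
    (G : SimpleGraph V) (w : Sym2 V → ℝ) :
    fibreMat π * lapMatrix' G w * (fibreMat π)ᵀ =
      (incMat π).map (Int.cast : ℤ → ℝ) * diagonal (extWeight G w) *
        ((incMat π).map (Int.cast : ℤ → ℝ))ᵀ := by
  rw [lap_eq, ← fibreMat_mul_fullInc, Matrix.transpose_mul]
  simp only [Matrix.mul_assoc]

open Classical in
/-- The weighted matrix-tree theorem for the quotient of `G` by the fibres of `π`. -/
lemma matrix_tree {ι : Type} [Fintype ι] [DecidableEq ι] (π : V → Option ι)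
    (hπ : Function.Surjective π) (G : SimpleGraph V) (w : Sym2 V → ℝ) :
    (fibreMat π * lapMatrix' G w * (fibreMat π)ᵀ).det =
      ∑ F ∈ Finset.univ.filter (fun F : Finset (Sym2 V) => (F : Set (Sym2 V)) ⊆ G.edgeSet ∧
        F.card = Fintype.card ι ∧ IsConn π F), ∏ e ∈ F, w e := by
  rw [reduced_lap, det_mul_diagonal_mul_transpose _ _ (fun F => if IsConn π F then 1 else 0)]
  · have h : ∀ F : Finset (Sym2 V), ∏ e ∈ F, extWeight G w e =
        if (F : Set (Sym2 V)) ⊆ G.edgeSet then ∏ e ∈ F, w e else 0 := by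
      intro F
      split_ifs with hF
      · exact Finset.prod_congr rfl fun e he => if_pos (hF he)
      · obtain ⟨e, he, hne⟩ := Set.not_subset.mp hF
        exact Finset.prod_eq_zero he (if_neg hne)
    simp only [h, Finset.sum_filter, ← Finset.powerset_univ, Finset.powersetCard_eq_filter]
    refine Finset.sum_congr rfl fun F _ => ?_
    by_cases h1 : (F : Set (Sym2 V)) ⊆ G.edgeSet <;> by_cases h2 : F.card = Fintype.card ι <;>
      by_cases h3 : IsConn π F <;> simp [h1, h2, h3]
  · intro g _
    have h := det_incMat_sq π hπ g
    have h2 : (((incMat π).map (Int.cast : ℤ → ℝ)).submatrix id g).det =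
        (((incMat π).submatrix id g).det : ℤ) := by
      rw [← eq_intCast (Int.castRingHom ℝ), RingHom.map_det]
      rfl
    rw [h2, ← Int.cast_pow, h]
    split_ifs <;> simp

/-- Positive definiteness of the reduced Laplacian of a connected graph: the energy of a null
vector vanishes, so the vector is constant, and it is zero at the root. -/
lemma det_reduced_ne_zero {ι : Type} [Fintype ι] [DecidableEq ι] (π : V → Option ι)
    (hπ : Function.Surjective π) (G : SimpleGraph V) (hG : G.Connected) (w : Sym2 V → ℝ)
    (hw : ∀ e ∈ G.edgeSet, 0 < w e) :
    (fibreMat π * lapMatrix' G w * (fibreMat π)ᵀ).det ≠ 0 := by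
  intro h0
  rw [reduced_lap, ← Matrix.exists_mulVec_eq_zero_iff] at h0
  obtain ⟨x, hx, h0⟩ := h0
  set N := (incMat π).map (Int.cast : ℤ → ℝ) with hN
  have hen : ∑ e, extWeight G w e * (x ᵥ* N) e ^ 2 = 0 := by
    have h1 : x ⬝ᵥ ((N * diagonal (extWeight G w) * Nᵀ) *ᵥ x) = 0 := by rw [h0]; simp
    rw [← Matrix.mulVec_mulVec, ← Matrix.mulVec_mulVec, Matrix.dotProduct_mulVec,
      Matrix.mulVec_transpose] at h1
    rw [← h1]
    simp only [dotProduct, Matrix.mulVec_diagonal]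
    exact Finset.sum_congr rfl fun e _ => by ring
  have hnn : ∀ e, 0 ≤ extWeight G w e := by
    intro e
    unfold extWeight
    split_ifs with he
    · exact (hw e he).le
    · exact le_rfl
  have hz : ∀ e ∈ G.edgeSet, (x ᵥ* N) e = 0 := by
    intro e he
    have := (Finset.sum_eq_zero_iff_of_nonneg
      (fun e _ => mul_nonneg (hnn e) (sq_nonneg ((x ᵥ* N) e)))).mp hen e (Finset.mem_univ e)
    have hpos : extWeight G w e ≠ 0 := by
      rw [extWeight, if_pos he]; exact (hw e he).ne'
    simpa [hpos] using this
  let y : V → ℝ := fun v => (π v).elim 0 x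
  have hy : ∀ v, ∑ a, x a * (rootVec (π v) a : ℝ) = y v := by
    intro v
    cases hv : π v <;> simp [rootVec, y, hv]
  have hadj : ∀ u v, G.Adj u v → y u = y v := by
    intro u v huv
    have h1 := hz s(u, v) huv
    have h2 : (x ᵥ* N) s(u, v) = y (Quot.out s(u, v)).1 - y (Quot.out s(u, v)).2 := by
      simp [Matrix.vecMul, dotProduct, hN, incMat, mul_sub, Finset.sum_sub_distrib, hy]
    rw [h2] at h1
    have h3 := sym2_out s(u, v)
    rw [Sym2.eq_iff] at h3
    rcases h3 with ⟨ha, hb⟩ | ⟨ha, hb⟩ <;> rw [ha, hb] at h1 <;> linarith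
  have hreach : ∀ u v, y u = y v := by
    intro u v
    obtain ⟨p⟩ := hG.preconnected u v
    induction p with
    | nil => rfl
    | cons h _ ih => exact (hadj _ _ h).trans ih
  apply hx
  ext a
  obtain ⟨r, hr⟩ := hπ none
  obtain ⟨v, hv⟩ := hπ (some a)
  have := hreach v r
  simpa [y, hv, hr] using this

/-! ### Splitting off the nodes: the Schur complement -/

variable {n : ℕ}

open Classical in
/-- The vertices split into inner vertices and nodes. -/
noncomputable def vertexEquiv (node : Fin n → V) (hnode : Function.Injective node) :
    InnerVx node ⊕ Fin n ≃ V :=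
  Equiv.ofBijective (Sum.elim Subtype.val node) (by
    constructor
    · rintro (u | i) (v | j) h
      · exact congrArg Sum.inl (Subtype.ext h)
      · exact absurd h.symm (u.2 j)
      · exact absurd h (v.2 i)
      · exact congrArg Sum.inr (hnode h)
    · intro v
      by_cases h : ∃ i, node i = v
      · obtain ⟨i, hi⟩ := h
        exact ⟨Sum.inr i, hi⟩
      · push Not at h
        exact ⟨Sum.inl ⟨v, h⟩, rfl⟩)

/-- The projection of `V` that keeps the inner vertices distinct and maps the nodes to
`Option κ` by `ρ`. -/
noncomputable def proj {κ : Type} (node : Fin n → V) (hnode : Function.Injective node)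
    (ρ : Fin n → Option κ) (v : V) : Option (InnerVx node ⊕ κ) :=
  Sum.elim (fun u => some (Sum.inl u)) (fun i => (ρ i).map Sum.inr)
    ((vertexEquiv node hnode).symm v)

section Proj

variable {κ : Type} (node : Fin n → V) (hnode : Function.Injective node) (ρ : Fin n → Option κ)

lemma proj_inner (u : InnerVx node) : proj node hnode ρ u.1 = some (Sum.inl u) := by
  have : (vertexEquiv node hnode).symm u.1 = Sum.inl u := by
    rw [Equiv.symm_apply_eq]; rfl
  simp [proj, this]

lemma proj_node (i : Fin n) : proj node hnode ρ (node i) = (ρ i).map Sum.inr := by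
  have : (vertexEquiv node hnode).symm (node i) = Sum.inr i := by
    rw [Equiv.symm_apply_eq]; rfl
  simp [proj, this]

lemma inner_or_node (v : V) : (∃ u : InnerVx node, u.1 = v) ∨ ∃ i, node i = v := by
  by_cases h : ∃ i, node i = v
  · exact Or.inr h
  · push Not at h
    exact Or.inl ⟨⟨v, h⟩, rfl⟩

lemma proj_surjective (hρ : Function.Surjective ρ) : Function.Surjective (proj node hnode ρ) := by
  rintro (_ | u | a)
  · obtain ⟨i, hi⟩ := hρ none
    exact ⟨node i, by simp [proj_node, hi]⟩
  · exact ⟨u.1, proj_inner node hnode ρ u⟩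
  · obtain ⟨i, hi⟩ := hρ (some a)
    exact ⟨node i, by simp [proj_node, hi]⟩

/-- The fibres of `proj` are single inner vertices and the node classes of `ρ`. -/
lemma proj_eq_iff (u v : V) : proj node hnode ρ u = proj node hnode ρ v ↔
    u = v ∨ ∃ i j, ρ i = ρ j ∧ node i = u ∧ node j = v := by
  constructor
  · intro h
    rcases inner_or_node node u with ⟨u, rfl⟩ | ⟨i, rfl⟩ <;>
      rcases inner_or_node node v with ⟨v, rfl⟩ | ⟨j, rfl⟩
    · rw [proj_inner, proj_inner] at h
      left
      exact congrArg Subtype.val (Sum.inl_injective (Option.some_injective _ h))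
    · rw [proj_inner, proj_node] at h
      cases hj : ρ j <;> simp [hj] at h
    · rw [proj_inner, proj_node] at h
      cases hi : ρ i <;> simp [hi] at h
    · rw [proj_node, proj_node] at h
      exact Or.inr ⟨i, j, Option.map_injective Sum.inr_injective h, rfl, rfl⟩
  · rintro (rfl | ⟨i, j, h, rfl, rfl⟩)
    · rfl
    · rw [proj_node, proj_node, h]

end Proj

/-- The inner block `K` of the Laplacian. -/
noncomputable def innerLap (G : SimpleGraph V) (w : Sym2 V → ℝ) (node : Fin n → V) :
    Matrix (InnerVx node) (InnerVx node) ℝ :=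
  Matrix.of fun u v => lapMatrix' G w u.val v.val

/-- The reduced Laplacian of the projected graph in block form. -/
lemma reduced_blocks {κ : Type} [Fintype κ] [DecidableEq κ] (node : Fin n → V)
    (hnode : Function.Injective node) (ρ : Fin n → Option κ) (G : SimpleGraph V)
    (w : Sym2 V → ℝ) :
    fibreMat (proj node hnode ρ) * lapMatrix' G w * (fibreMat (proj node hnode ρ))ᵀ =
      fromBlocks (innerLap G w node)
        ((Matrix.of fun u j => lapMatrix' G w u.val (node j)) * (fibreMat ρ)ᵀ)
        (fibreMat ρ * Matrix.of fun i u => lapMatrix' G w (node i) u.val)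
        (fibreMat ρ * (Matrix.of fun i j => lapMatrix' G w (node i) (node j)) *
          (fibreMat ρ)ᵀ) := by
  set E := vertexEquiv node hnode with hE
  have h1 : (fibreMat (proj node hnode ρ)).submatrix id E = fromBlocks 1 0 0 (fibreMat ρ) := by
    have hl : ∀ u, E (Sum.inl u) = u.1 := fun _ => rfl
    have hr : ∀ i, E (Sum.inr i) = node i := fun _ => rfl
    ext (a | a) (u | i)
    · simp [fibreMat, hl, proj_inner, Matrix.one_apply, eq_comm]
    · simp [fibreMat, hr, proj_node]
    · simp [fibreMat, hl, proj_inner]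
    · simp [fibreMat, hr, proj_node]
  have h2 : (lapMatrix' G w).submatrix E E = fromBlocks (innerLap G w node)
      (Matrix.of fun u j => lapMatrix' G w u.val (node j))
      (Matrix.of fun i u => lapMatrix' G w (node i) u.val)
      (Matrix.of fun i j => lapMatrix' G w (node i) (node j)) := by
    ext (a | a) (b | b) <;> rfl
  have h3 : fibreMat (proj node hnode ρ) * lapMatrix' G w * (fibreMat (proj node hnode ρ))ᵀ =
      (fibreMat (proj node hnode ρ)).submatrix id E * (lapMatrix' G w).submatrix E E *
        ((fibreMat (proj node hnode ρ)).submatrix id E)ᵀ := by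
    rw [Matrix.transpose_submatrix, Matrix.submatrix_mul_equiv, Matrix.submatrix_mul_equiv]
    rfl
  rw [h3, h1, h2]
  simp [fromBlocks_transpose, fromBlocks_multiply, Matrix.mul_assoc]

lemma det_innerLap_ne_zero (G : SimpleGraph V) (hG : G.Connected) (w : Sym2 V → ℝ)
    (hw : ∀ e ∈ G.edgeSet, 0 < w e) (hn : 1 ≤ n) (node : Fin n → V)
    (hnode : Function.Injective node) : (innerLap G w node).det ≠ 0 := by
  let ρ : Fin n → Option (Fin 0) := fun _ => none
  have hρ : Function.Surjective ρ := fun o => ⟨⟨0, hn⟩, Subsingleton.elim _ _⟩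
  have h := det_reduced_ne_zero (proj node hnode ρ) (proj_surjective node hnode ρ hρ) G hG w hw
  rw [reduced_blocks, Subsingleton.elim (fibreMat ρ * Matrix.of fun i u => _) 0,
    Matrix.det_fromBlocks_zero₂₁, Matrix.det_isEmpty (n := Fin 0), mul_one] at h
  exact h

/-- The matrix-tree theorem combined with the Schur complement formula. -/
lemma det_schur {κ : Type} [Fintype κ] [DecidableEq κ] (G : SimpleGraph V) (hG : G.Connected)
    (w : Sym2 V → ℝ) (hw : ∀ e ∈ G.edgeSet, 0 < w e) (hn : 1 ≤ n) (node : Fin n → V)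
    (hnode : Function.Injective node) (ρ : Fin n → Option κ) :
    (fibreMat (proj node hnode ρ) * lapMatrix' G w * (fibreMat (proj node hnode ρ))ᵀ).det =
      (innerLap G w node).det * (fibreMat ρ * responseMatrix G w node * (fibreMat ρ)ᵀ).det := by
  have hK : IsUnit (innerLap G w node).det :=
    isUnit_iff_ne_zero.mpr (det_innerLap_ne_zero G hG w hw hn node hnode)
  have : Invertible (innerLap G w node) := Matrix.invertibleOfIsUnitDet _ hK
  rw [reduced_blocks, Matrix.det_fromBlocks₁₁]
  congr 2
  have hR : responseMatrix G w node =
      (Matrix.of fun i j => lapMatrix' G w (node i) (node j)) -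
      (Matrix.of fun i (u : InnerVx node) => lapMatrix' G w (node i) u.val) *
        (innerLap G w node)⁻¹ *
        (Matrix.of fun (u : InnerVx node) j => lapMatrix' G w u.val (node j)) := rfl
  rw [hR, Matrix.invOf_eq_nonsing_inv, Matrix.mul_sub, Matrix.sub_mul]
  simp only [Matrix.mul_assoc]

/-! ### Groves and counting -/

lemma edgeSetoid_iff (F : Finset (Sym2 V)) (u v : V) :
    edgeSetoid F u v ↔ (groveGraph F).Reachable u v := by
  constructor
  · intro h
    let s : Setoid V := ⟨(groveGraph F).Reachable, ⟨fun _ => .refl _, .symm, .trans⟩⟩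
    have hle : edgeSetoid F ≤ s := by
      apply edgeSetoid_le
      intro a b hab
      by_cases hne : a = b
      · exact hne ▸ SimpleGraph.Reachable.refl _
      · exact SimpleGraph.Adj.reachable (by simpa [groveGraph, hne] using hab)
    exact hle h
  · rintro ⟨p⟩
    induction p with
    | nil => exact (edgeSetoid F).refl _
    | cons h _ ih =>
      refine (edgeSetoid F).trans (edgeSetoid_of_mem ?_) ih
      simp only [groveGraph, SimpleGraph.fromEdgeSet_adj] at h
      exact h.1

lemma groveGraph_erase (F : Finset (Sym2 V)) (e : Sym2 V) :
    (groveGraph F).deleteEdges {e} = groveGraph (F.erase e) := by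
  ext u v
  simp only [groveGraph, SimpleGraph.deleteEdges_adj, SimpleGraph.fromEdgeSet_adj,
    Finset.mem_coe, Finset.mem_erase, Set.mem_singleton_iff]
  tauto

/-- A forest has at most `|V| - #components` edges: each edge is a bridge, so deleting it
strictly increases the number of components. -/
lemma acyclic_card_le (F : Finset (Sym2 V)) (hd : ∀ e ∈ F, ¬ e.IsDiag)
    (hF : (groveGraph F).IsAcyclic) :
    F.card + Nat.card (groveGraph F).ConnectedComponent ≤ Fintype.card V := by
  classical
  induction F using Finset.induction_on with
  | empty =>
    rw [← Nat.card_eq_fintype_card]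
    simpa using Nat.card_le_card_of_surjective
      (groveGraph (∅ : Finset (Sym2 V))).connectedComponentMk Quot.mk_surjective
  | insert e F he ih =>
    have hle : groveGraph F ≤ groveGraph (insert e F) :=
      SimpleGraph.fromEdgeSet_mono (by simp)
    have h1 := ih (fun x hx => hd x (Finset.mem_insert_of_mem hx)) (hF.anti hle)
    have h2 : Nat.card (groveGraph (insert e F)).ConnectedComponent <
        Nat.card (groveGraph F).ConnectedComponent := by
      rw [Nat.card_eq_fintype_card, Nat.card_eq_fintype_card]
      refine Fintype.card_lt_of_surjective_not_injective _
        (SimpleGraph.ConnectedComponent.surjective_map_ofLE hle) ?_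
      induction e using Sym2.ind with
      | _ u v =>
        have hadj : (groveGraph (insert s(u, v) F)).Adj u v := by
          have := hd s(u, v) (Finset.mem_insert_self _ _)
          simpa [groveGraph] using this
        have hb := SimpleGraph.isAcyclic_iff_forall_isBridge.mp hF (e := s(u, v)) hadj
        rw [SimpleGraph.isBridge_iff, groveGraph_erase, Finset.erase_insert he] at hb
        intro hinj
        apply hb
        apply SimpleGraph.ConnectedComponent.exact
        apply hinj
        exact SimpleGraph.ConnectedComponent.sound hadj.reachable
    rw [Finset.card_insert_of_notMem he]
    omega

/-- Uncrossing groves are exactly the spanning trees of the graph in which all nodes are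
identified. -/
lemma uncrossing_iff (G : SimpleGraph V) (hn : 1 ≤ n) (node : Fin n → V)
    (hnode : Function.Injective node) (F : Finset (Sym2 V)) :
    (IsGrove G node F ∧ connSetoid node F = ⊥) ↔
      ((F : Set (Sym2 V)) ⊆ G.edgeSet ∧ F.card = Fintype.card (InnerVx node ⊕ Fin 0) ∧
        IsConn (proj node hnode (fun _ => (none : Option (Fin 0)))) F) := by
  classical
  set ρ : Fin n → Option (Fin 0) := fun _ => none with hρdef
  have hρ : Function.Surjective ρ := fun o => ⟨⟨0, hn⟩, Subsingleton.elim _ _⟩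
  have hcardV : Fintype.card V = Fintype.card (InnerVx node) + n := by
    rw [← Fintype.card_congr (vertexEquiv node hnode)]; simp
  have hker : ∀ F, IsConn (proj node hnode ρ) F ↔
      ∀ s : Setoid V, edgeSetoid F ≤ s → (∀ i j, s (node i) (node j)) → s = ⊤ := by
    intro F
    constructor
    · intro h s hs1 hs2
      rw [eq_top_iff, ← h]
      refine sup_le ?_ hs1
      intro u v huv
      rcases (proj_eq_iff node hnode ρ u v).mp huv with rfl | ⟨i, j, -, rfl, rfl⟩
      · exact s.refl _
      · exact hs2 i j
    · intro h
      refine h _ le_sup_right fun i j => ?_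
      exact (le_sup_left : Setoid.ker _ ≤ Setoid.ker (proj node hnode ρ) ⊔ edgeSetoid F)
        ((proj_eq_iff node hnode ρ _ _).mpr (Or.inr ⟨i, j, rfl, rfl, rfl⟩))
  constructor
  · rintro ⟨⟨hFG, hac, hreach⟩, hbot⟩
    have hconn : IsConn (proj node hnode ρ) F := by
      rw [hker]
      intro s hs1 hs2
      rw [eq_top_iff]
      intro u v _
      obtain ⟨i, hi⟩ := hreach u
      obtain ⟨j, hj⟩ := hreach v
      exact s.trans (hs1 ((edgeSetoid_iff F _ _).mpr hi))
        (s.trans (hs2 i j) (s.symm (hs1 ((edgeSetoid_iff F _ _).mpr hj))))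
    refine ⟨hFG, le_antisymm ?_ (card_le_of_isConn _ (proj_surjective node hnode ρ hρ) F hconn),
      hconn⟩
    have h1 := acyclic_card_le F
      (fun e he => SimpleGraph.not_isDiag_of_mem_edgeSet _ (hFG he)) hac
    have h2 : n ≤ Nat.card (groveGraph F).ConnectedComponent := by
      have := Nat.card_le_card_of_injective
        (fun i => (groveGraph F).connectedComponentMk (node i)) (by
          intro i j hij
          have h : connSetoid node F i j := SimpleGraph.ConnectedComponent.exact hij
          rw [hbot] at h
          exact h)
      simpa using this
    simp
    omega
  · rintro ⟨hFG, hcard, hconn⟩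
    refine ⟨⟨hFG, ?_, ?_⟩, ?_⟩
    · -- deleting a non-bridge would leave a connected quotient with too few edges
      rw [SimpleGraph.isAcyclic_iff_forall_isBridge]
      intro e he
      induction e using Sym2.ind with
      | _ u v =>
        rw [SimpleGraph.isBridge_iff, groveGraph_erase]
        intro hr
        have heF : s(u, v) ∈ F := by
          have he' : (groveGraph F).Adj u v := he
          simp only [groveGraph, SimpleGraph.fromEdgeSet_adj] at he'
          exact he'.1
        have hle : edgeSetoid F ≤ edgeSetoid (F.erase s(u, v)) := by
          apply edgeSetoid_le
          intro a b hab
          by_cases h : s(a, b) = s(u, v)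
          · rw [edgeSetoid_iff]
            rw [Sym2.eq_iff] at h
            rcases h with ⟨rfl, rfl⟩ | ⟨rfl, rfl⟩
            · exact hr
            · exact hr.symm
          · exact edgeSetoid_of_mem (Finset.mem_erase.mpr ⟨h, hab⟩)
        have hc : IsConn (proj node hnode ρ) (F.erase s(u, v)) := by
          rw [hker] at hconn ⊢
          exact fun s hs => hconn s (hle.trans hs)
        have := card_le_of_isConn _ (proj_surjective node hnode ρ hρ) _ hc
        have hlt := Finset.card_erase_lt_of_mem heF
        omega
    · let s : Setoid V := Setoid.ker (fun v => ∃ i, (groveGraph F).Reachable v (node i))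
      have hs : s = ⊤ := by
        refine (hker F).mp hconn s ?_ ?_
        · intro u v huv
          have hr := (edgeSetoid_iff F u v).mp huv
          exact propext ⟨fun ⟨i, hi⟩ => ⟨i, hr.symm.trans hi⟩, fun ⟨i, hi⟩ => ⟨i, hr.trans hi⟩⟩
        · intro i j
          exact propext ⟨fun _ => ⟨j, .refl _⟩, fun _ => ⟨i, .refl _⟩⟩
      intro v
      have h : s v (node ⟨0, hn⟩) := by rw [hs]; trivial
      have h' : (∃ i, (groveGraph F).Reachable v (node i)) =
        (∃ i, (groveGraph F).Reachable (node ⟨0, hn⟩) (node i)) := h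
      rw [h']
      exact ⟨_, .refl _⟩
    · -- if nodes `i ≠ j` were joined, splitting `j` off the glued node would keep the quotient
      -- connected while adding a vertex
      rw [eq_bot_iff]
      intro i j hij
      have hij : (groveGraph F).Reachable (node i) (node j) := hij
      by_contra hne
      have hne : i ≠ j := hne
      let ρ' : Fin n → Option (Fin 1) := fun x => if x = j then some 0 else none
      have hρ' : Function.Surjective ρ' := by
        rintro (_ | a)
        · exact ⟨i, by simp [ρ', hne]⟩
        · exact ⟨j, by simp [ρ', Subsingleton.elim a 0]⟩
      have hc : IsConn (proj node hnode ρ') F := by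
        set s := Setoid.ker (proj node hnode ρ') ⊔ edgeSetoid F with hs
        refine (hker F).mp hconn s le_sup_right ?_
        have hall : ∀ x, s (node x) (node i) := by
          intro x
          by_cases hx : x = j
          · subst hx
            exact s.symm ((le_sup_right : edgeSetoid F ≤ s) ((edgeSetoid_iff F _ _).mpr hij))
          · exact (le_sup_left : Setoid.ker (proj node hnode ρ') ≤ s)
              ((proj_eq_iff node hnode ρ' _ _).mpr
                (Or.inr ⟨x, i, by simp [ρ', hx, hne], rfl, rfl⟩))
        exact fun x y => s.trans (hall x) (s.symm (hall y))
      have := card_le_of_isConn _ (proj_surjective node hnode ρ' hρ') F hc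
      simp at this hcard
      omega

lemma Zgrove_bot_eq (G : SimpleGraph V) (hG : G.Connected) (w : Sym2 V → ℝ)
    (hw : ∀ e ∈ G.edgeSet, 0 < w e) (hn : 1 ≤ n) (node : Fin n → V)
    (hnode : Function.Injective node) : Zgrove G w node ⊥ = (innerLap G w node).det := by
  classical
  have hρ : Function.Surjective (fun _ : Fin n => (none : Option (Fin 0))) :=
    fun o => ⟨⟨0, hn⟩, Subsingleton.elim _ _⟩
  have h := matrix_tree _ (proj_surjective node hnode _ hρ) G w
  rw [det_schur G hG w hw hn, Matrix.det_isEmpty (n := Fin 0), mul_one] at h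
  rw [h, Zgrove]
  refine Finset.sum_congr ?_ fun _ _ => rfl
  ext F
  simp only [Finset.mem_filter, Finset.mem_univ, true_and]
  exact uncrossing_iff G hn node hnode F

lemma glueSetoid_eq {κ : Type} (node : Fin n → V) (hnode : Function.Injective node)
    (σ : Setoid (Fin n)) (ρ : Fin n → Option κ) (hρ : ∀ i j, ρ i = ρ j ↔ σ i j) :
    glueSetoid node σ = Setoid.ker (proj node hnode ρ) := by
  apply le_antisymm
  · apply Setoid.eqvGen_le
    rintro u v ⟨i, j, hij, rfl, rfl⟩
    exact (proj_eq_iff node hnode ρ _ _).mpr (Or.inr ⟨i, j, (hρ i j).mpr hij, rfl, rfl⟩)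
  · intro u v huv
    rcases (proj_eq_iff node hnode ρ u v).mp huv with rfl | ⟨i, j, hij, hu, hv⟩
    · exact Setoid.refl' _ _
    · exact Relation.EqvGen.rel _ _ ⟨i, j, (hρ i j).mp hij, hu, hv⟩

end Helpers

/-
STATEMENT 19: Let G be a finite connected graph with positive edge weights and n ≥ 1
distinct nodes, and σ a partition of {1,…,n} with parts enumerated p_1,…,p_k (here: an
equivalence e : Fin (k+1) ≃ Quotient σ, so that there are k+1 parts; k+1 ≥ 1 always
holds).  Let S be the (k+1)×n matrix with S_{a,i} = 1 iff i ∈ p_a.  Then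
  Z_{G_σ}(tree) = Z(uncrossing) · det M̃,
where M̃ is S Λ Sᵀ with the last row and column deleted (for one part the empty
determinant is 1), and Λ is the response matrix.
-/
theorem glued_tree_eq_uncrossing_mul_det
    {V : Type} [Fintype V] [DecidableEq V] (G : SimpleGraph V) (hG : G.Connected)
    (w : Sym2 V → ℝ) (hw : ∀ e ∈ G.edgeSet, 0 < w e)
    (n : ℕ) (hn : 1 ≤ n) (node : Fin n → V) (hnode : Function.Injective node)
    (σ : Setoid (Fin n)) (k : ℕ) (e : Fin (k + 1) ≃ Quotient σ) :
    ZgluedTree G w node σ =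
      Zgrove G w node ⊥ *
        Matrix.det
          ((partsMatrix σ e * responseMatrix G w node * (partsMatrix σ e).transpose).submatrix
            Fin.castSucc Fin.castSucc) := by
  classical
  set ρ : Fin n → Option (Fin k) := fun i => finSuccEquivLast (e.symm (Quotient.mk σ i)) with hρd
  have hρ : ∀ i j, ρ i = ρ j ↔ σ i j := by
    intro i j
    simp only [hρd, EmbeddingLike.apply_eq_iff_eq]
    exact Quotient.eq
  have hρs : Function.Surjective ρ :=
    finSuccEquivLast.surjective.comp (e.symm.surjective.comp Quot.mk_surjective)
  have hS : (partsMatrix σ e).submatrix Fin.castSucc id = fibreMat ρ := by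
    ext a i
    have : ρ i = some a ↔ Quotient.mk σ i = e a.castSucc := by
      rw [← finSuccEquivLast_castSucc, hρd]
      simp only [EmbeddingLike.apply_eq_iff_eq]
      exact e.symm_apply_eq
    simp [partsMatrix, fibreMat, this]
  have hsub : (partsMatrix σ e * responseMatrix G w node *
      (partsMatrix σ e).transpose).submatrix Fin.castSucc Fin.castSucc =
      fibreMat ρ * responseMatrix G w node * (fibreMat ρ).transpose := by
    rw [← hS]
    rfl
  rw [hsub, Zgrove_bot_eq G hG w hw hn node hnode, ← det_schur G hG w hw hn node hnode ρ,
    matrix_tree _ (proj_surjective node hnode ρ hρs) G w, ZgluedTree]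
  refine Finset.sum_congr ?_ fun _ _ => rfl
  have hcard : Nat.card (Quotient (glueSetoid node σ)) =
      Fintype.card (InnerVx node ⊕ Fin k) + 1 := by
    rw [glueSetoid_eq node hnode σ ρ hρ, Nat.card_congr
      (Setoid.quotientKerEquivOfSurjective _ (proj_surjective node hnode ρ hρs)),
      Nat.card_eq_fintype_card, Fintype.card_option]
  ext F
  rw [Finset.mem_filter_univ, Finset.mem_filter_univ, IsGluedSpanningTree, hcard,
    Nat.add_right_cancel_iff, IsConn, glueSetoid_eq node hnode σ ρ hρ]
end
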